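/- arXiv:2004.05677 — 3 statements merged into one kernel-verified Lean document; each statement's English description precedes it below -/
import Mathlib

section
/- Let p be an odd prime, n ≥ 1, q = p^(2^n), and G = PGL₂(F_q). If x ∈ G is an involution not lying in the image of SL₂(F_q) in G, then every maximal subgroup of G containing x is isomorphic either to the dihedral group of order 2(q−1) or to the dihedral group of order 2(q+1). -/
open Matrix

/-- `PGL₂(F)`: the projective general linear group, i.e. the quotient of `GL₂(F)`
by its center. -/
abbrev ProjectiveGL2 (F : Type) [Field F] : Type :=
  Matrix.GeneralLinearGroup (Fin 2) F ⧸ Subgroup.center (Matrix.GeneralLinearGroup (Fin 2) F)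

/-- The image of the natural map `SL₂(F) → PGL₂(F)`: the socle of `PGL₂(F)`,
isomorphic to `PSL₂(F)`. -/
def socleSL2 (F : Type) [Field F] : Subgroup (ProjectiveGL2 F) :=
  ((QuotientGroup.mk' (Subgroup.center (Matrix.GeneralLinearGroup (Fin 2) F))).comp
    Matrix.SpecialLinearGroup.toGL).range


section Abstract
set_option linter.unusedSectionVars false
set_option linter.unusedSimpArgs false
open Finset
open scoped Classical

variable {K : Type} [Group K] [Fintype K]

noncomputable def cC (g : K) : ℕ := #{y : K | Commute g y}
noncomputable def nN (g : K) : Finset K := {h : K | Commute (h * g * h⁻¹) g}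
noncomputable def cls (Z : Subgroup K) (g : K) : Finset K :=
  {y : K | y ∉ Z ∧ ∃ h : K, Commute (h * g * h⁻¹) y}

lemma conj_notMem {Z : Subgroup K} (hZ : ∀ z ∈ Z, ∀ g, Commute z g) {g : K} (hg : g ∉ Z) (h : K) :
    h * g * h⁻¹ ∉ Z := by
  intro hc
  have := hZ _ hc h⁻¹
  have h2 : h * g * h⁻¹ = g := by
    have h3 := this.eq
    have : h⁻¹ * (h * g * h⁻¹) = g * h⁻¹ := by group
    rw [this] at h3
    exact mul_right_cancel h3
  exact hg (h2 ▸ hc)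

lemma commute_conj (h a b : K) : Commute (h * a * h⁻¹) b ↔ Commute a (h⁻¹ * b * h) := by
  constructor
  · intro H
    have := (Commute.conj_iff h⁻¹).2 H
    simpa [mul_assoc] using this
  · intro H
    have := (Commute.conj_iff h).2 H
    simpa [mul_assoc] using this

lemma class_count {Z : Subgroup K} (hZ : ∀ z ∈ Z, ∀ g, Commute z g)
    (hCT : ∀ a b c : K, b ∉ Z → Commute a b → Commute b c → Commute a c)
    (P : K → Prop) (hP : ∀ h y, P y → P (h * y * h⁻¹)) {g : K} (hg : g ∉ Z) :
    #{y ∈ cls Z g | P y} * #(nN g) =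
      Fintype.card K * #{y : K | y ∉ Z ∧ P y ∧ Commute g y} := by
  set T : Finset K := {y : K | y ∉ Z ∧ P y ∧ Commute g y} with hT
  have key := Finset.card_eq_sum_card_fiberwise (s := (univ : Finset K) ×ˢ T)
    (t := {y ∈ cls Z g | P y}) (f := fun a => a.1 * a.2 * a.1⁻¹) (by
      rintro ⟨h, y⟩ hy
      simp only [hT, coe_product, coe_univ, coe_filter, mem_univ, true_and, Set.mem_prod,
        Set.mem_univ, Set.mem_ofPred_eq, cls, mem_filter] at hy ⊢
      refine ⟨⟨conj_notMem hZ hy.1 h, h, ?_⟩, hP _ _ hy.2.1⟩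
      exact (Commute.conj_iff h).2 hy.2.2)
  rw [card_product, card_univ] at key
  rw [key, Finset.sum_const_nat (m := #(nN g))]
  intro w hw
  simp only [cls, mem_filter, mem_univ, true_and] at hw
  obtain ⟨⟨hwZ, h0, hh0⟩, hPw⟩ := hw
  refine Finset.card_bij' (fun a _ => h0⁻¹ * a.1) (fun h _ => (h0 * h, (h0 * h)⁻¹ * w * (h0 * h)))
    ?_ ?_ ?_ ?_
  · rintro ⟨h, y⟩ hy
    simp only [hT, mem_filter, mem_product, mem_univ, true_and, nN] at hy ⊢
    obtain ⟨⟨h1, h2, h3⟩, h4⟩ := hy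
    have h5 : Commute (h * g * h⁻¹) w := by rw [← h4]; exact (Commute.conj_iff h).2 h3
    have h6 := hCT _ _ _ hwZ h5 hh0.symm
    have := (Commute.conj_iff h0⁻¹).2 h6
    simpa [mul_assoc] using this
  · intro h hh
    simp only [hT, mem_filter, mem_product, mem_univ, true_and, nN] at hh ⊢
    have h1 : Commute ((h0 * h) * g * (h0 * h)⁻¹) (h0 * g * h0⁻¹) := by
      have := (Commute.conj_iff h0).2 hh
      simpa [mul_assoc] using this
    have h2 := hCT _ _ _ (conj_notMem hZ hg h0) h1 hh0
    refine ⟨⟨?_, ?_, ?_⟩, by group⟩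
    · have := conj_notMem hZ hwZ (h0 * h)⁻¹
      simpa using this
    · have := hP (h0 * h)⁻¹ _ hPw
      simpa using this
    · exact (commute_conj _ _ _).1 h2
  · rintro ⟨h, y⟩ hy
    simp only [hT, mem_filter, mem_product, mem_univ, true_and, nN] at hy ⊢
    obtain ⟨_, h4⟩ := hy
    rw [← h4]
    ext <;> simp [mul_assoc]
  · intro h hh
    simp

lemma cls_card {Z : Subgroup K} (hZ : ∀ z ∈ Z, ∀ g, Commute z g)
    (hCT : ∀ a b c : K, b ∉ Z → Commute a b → Commute b c → Commute a c) {g : K} (hg : g ∉ Z) :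
    #(cls Z g) * #(nN g) + Fintype.card K * #{y : K | y ∈ Z} = Fintype.card K * cC g := by
  have := class_count hZ hCT (fun _ => True) (by simp) hg
  simp only [filter_true, true_and] at this
  rw [this, ← mul_add]
  congr 1
  rw [cC, ← Finset.card_filter_add_card_filter_not (s := {y : K | Commute g y}) (fun y => y ∉ Z)]
  simp only [filter_filter, not_not]
  congr 2
  · ext; simp [and_comm]
  · ext y; simp; intro hy; exact (hZ y hy g).symm

lemma cls_outer {Z K0 : Subgroup K} (hZ : ∀ z ∈ Z, ∀ g, Commute z g) (hZ0 : Z ≤ K0) [K0.Normal]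
    (hCT : ∀ a b c : K, b ∉ Z → Commute a b → Commute b c → Commute a c) {g : K} (hg : g ∉ Z) :
    #{y ∈ cls Z g | y ∉ K0} * #(nN g) =
      Fintype.card K * #{y : K | Commute g y ∧ y ∉ K0} := by
  have := class_count hZ hCT (fun y => y ∉ K0) (by
    intro h y hy hc
    apply hy
    have := Subgroup.Normal.conj_mem (H := K0) inferInstance _ hc h⁻¹
    simpa [mul_assoc] using this) hg
  refine Eq.trans (by congr!) (this.trans ?_)
  congr 2
  ext y
  simp only [mem_filter, mem_univ, true_and]
  constructor
  · tauto
  · rintro ⟨h1, h2⟩; exact ⟨fun h => h2 (hZ0 h), h2, h1⟩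

lemma self_mem_cls {Z : Subgroup K} {g : K} (hg : g ∉ Z) : g ∈ cls Z g := by
  simp only [cls, mem_filter, mem_univ, true_and]
  exact ⟨hg, 1, by simp⟩

lemma cls_symm {Z : Subgroup K} {g y : K} (hg : g ∉ Z) (h : y ∈ cls Z g) : g ∈ cls Z y := by
  simp only [cls, mem_filter, mem_univ, true_and] at h ⊢
  obtain ⟨_, h, hh⟩ := h
  refine ⟨hg, h⁻¹, ?_⟩
  have := (commute_conj _ _ _).1 hh
  simpa using this.symm

lemma cls_trans {Z : Subgroup K} (hZ : ∀ z ∈ Z, ∀ g, Commute z g)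
    (hCT : ∀ a b c : K, b ∉ Z → Commute a b → Commute b c → Commute a c) {g y w : K}
    (h1 : y ∈ cls Z g) (h2 : w ∈ cls Z y) : w ∈ cls Z g := by
  simp only [cls, mem_filter, mem_univ, true_and] at h1 h2 ⊢
  obtain ⟨hy, h, hh⟩ := h1
  obtain ⟨hw, k, hk⟩ := h2
  refine ⟨hw, k * h, ?_⟩
  have h3 := (Commute.conj_iff k).2 hh
  have h4 := hCT _ _ _ (conj_notMem hZ hy k) h3 hk
  simpa [mul_assoc] using h4

lemma cls_disj {Z : Subgroup K} (hZ : ∀ z ∈ Z, ∀ g, Commute z g)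
    (hCT : ∀ a b c : K, b ∉ Z → Commute a b → Commute b c → Commute a c) {g y : K}
    (hy : y ∉ Z) (h : y ∉ cls Z g) : Disjoint (cls Z g) (cls Z y) := by
  rw [Finset.disjoint_left]
  intro w h1 h2
  exact h (cls_trans hZ hCT h1 (cls_symm hy h2))

lemma cC_cls {Z : Subgroup K} (hZ : ∀ z ∈ Z, ∀ g, Commute z g)
    (hCT : ∀ a b c : K, b ∉ Z → Commute a b → Commute b c → Commute a c) {g y : K}
    (hg : g ∉ Z) (h : y ∈ cls Z g) : cC y = cC g := by
  simp only [cls, mem_filter, mem_univ, true_and] at h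
  obtain ⟨hy, h, hh⟩ := h
  symm
  refine Finset.card_bij' (fun a _ => h * a * h⁻¹) (fun a _ => h⁻¹ * a * h) ?_ ?_ ?_ ?_
  · intro a ha
    simp only [mem_filter, mem_univ, true_and] at ha ⊢
    exact hCT _ _ _ (conj_notMem hZ hg h) hh.symm ((Commute.conj_iff h).2 ha)
  · intro a ha
    simp only [mem_filter, mem_univ, true_and] at ha ⊢
    exact (commute_conj _ _ _).1 (hCT _ _ _ hy hh ha)
  · intro a _; group
  · intro a _; group

lemma nN_cls {Z : Subgroup K} (hZ : ∀ z ∈ Z, ∀ g, Commute z g)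
    (hCT : ∀ a b c : K, b ∉ Z → Commute a b → Commute b c → Commute a c) {g y : K}
    (hg : g ∉ Z) (h : y ∈ cls Z g) : #(nN y) = #(nN g) := by
  have hy : y ∉ Z := by
    simp only [cls, mem_filter, mem_univ, true_and] at h; exact h.1
  have e : cls Z y = cls Z g := by
    ext w
    exact ⟨fun hw => cls_trans hZ hCT h hw, fun hw => cls_trans hZ hCT (cls_symm hg h) hw⟩
  have h1 := cls_card hZ hCT hg
  have h2 := cls_card hZ hCT hy
  rw [cC_cls hZ hCT hg h, ← h1, e] at h2
  have h3 : 0 < #(cls Z g) := Finset.card_pos.2 ⟨g, self_mem_cls hg⟩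
  exact Nat.eq_of_mul_eq_mul_left h3 (by omega)

lemma two_outer {K0 : Subgroup K} (h2 : K0.index = 2) (C : Subgroup K) (h : ∃ u ∈ C, u ∉ K0) :
    2 * #{y : K | y ∈ C ∧ y ∉ K0} = #{y : K | y ∈ C} := by
  obtain ⟨u, hu, hu0⟩ := h
  rw [← Finset.card_filter_add_card_filter_not (s := {y : K | y ∈ C}) (fun y => y ∉ K0)]
  simp only [filter_filter, not_not]
  rw [two_mul]
  congr 1
  refine Finset.card_bij' (fun a _ => u * a) (fun a _ => u⁻¹ * a) ?_ ?_ ?_ ?_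
  · intro a ha
    simp only [mem_filter, mem_univ, true_and] at ha ⊢
    exact ⟨C.mul_mem hu ha.1, by rw [Subgroup.mul_mem_iff_of_index_two h2]; tauto⟩
  · intro a ha
    simp only [mem_filter, mem_univ, true_and] at ha ⊢
    exact ⟨C.mul_mem (C.inv_mem hu) ha.1, by
      rw [Subgroup.mul_mem_iff_of_index_two h2, inv_mem_iff]; tauto⟩
  · intro a _; simp
  · intro a _; simp

lemma cC_dvd {Z : Subgroup K} (hZ : ∀ z ∈ Z, ∀ g, Commute z g) {g : K} (hg : g ∉ Z) :
    ∃ d : ℕ, cC g = d * #{y : K | y ∈ Z} ∧ 2 ≤ d := by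
  have h1 : Z < Subgroup.centralizer {g} := by
    refine lt_of_le_of_ne ?_ ?_
    · intro z hz
      rw [Subgroup.mem_centralizer_singleton_iff]
      exact (hZ z hz g).eq
    · intro h
      apply hg
      rw [h, Subgroup.mem_centralizer_singleton_iff]
  have e1 : cC g = Nat.card (Subgroup.centralizer {g}) := by
    rw [Nat.card_eq_fintype_card, Fintype.card_subtype, cC]
    congr 1; ext y; simp [Subgroup.mem_centralizer_singleton_iff, commute_iff_eq, eq_comm]
  have e2 : #{y : K | y ∈ Z} = Nat.card Z := by
    rw [Nat.card_eq_fintype_card, Fintype.card_subtype]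
  rw [e1, e2]
  obtain ⟨d, hd⟩ := Subgroup.card_dvd_of_le h1.le
  refine ⟨d, by rw [hd, mul_comm], ?_⟩
  have hpos : 0 < Nat.card (Subgroup.centralizer {g}) := Nat.card_pos
  by_contra hlt
  have : d = 0 ∨ d = 1 := by omega
  rcases this with rfl | rfl
  · omega
  · exact h1.ne (Subgroup.eq_of_le_of_card_ge h1.le (by omega))


lemma cls_ratio {Z : Subgroup K} (hZ : ∀ z ∈ Z, ∀ g, Commute z g)
    (hCT : ∀ a b c : K, b ∉ Z → Commute a b → Commute b c → Commute a c) {g : K} (hg : g ∉ Z)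
    (d e : ℚ) (he : 0 < e) (hd : 0 < d)
    (h1 : (cC g : ℚ) = d * (#{y : K | y ∈ Z} : ℕ)) (h2 : (#(nN g) : ℚ) = e * cC g) :
    (#(cls Z g) : ℚ) = (Fintype.card K : ℚ) * ((1 - 1 / d) / e) := by
  have h := cls_card hZ hCT hg
  have hz : (0 : ℚ) < (#{y : K | y ∈ Z} : ℕ) := by
    exact_mod_cast Finset.card_pos.2 ⟨1, by simp [Z.one_mem]⟩
  have h' : (#(cls Z g) : ℚ) * #(nN g) + Fintype.card K * (#{y : K | y ∈ Z} : ℕ)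
      = Fintype.card K * cC g := by exact_mod_cast h
  rw [h2, h1] at h'
  field_simp
  have : (#(cls Z g) : ℚ) * (e * d) * (#{y : K | y ∈ Z} : ℕ)
    = (Fintype.card K * (d - 1)) * (#{y : K | y ∈ Z} : ℕ) := by linarith
  have := mul_right_cancel₀ hz.ne' this
  linarith

lemma core {Z K0 : Subgroup K} (hZ : ∀ z ∈ Z, ∀ g, Commute z g)
    (hCT : ∀ a b c : K, b ∉ Z → Commute a b → Commute b c → Commute a c)
    (S : K → Prop) (hS : ∀ g ∉ Z, S g → #(nN g) = cC g ∨ #(nN g) = 2 * cC g)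
    (hU : ∀ g ∉ Z, ¬ S g → (∀ y, Commute g y → y ∈ K0) ∧ 3 * #{y : K | y ∈ Z} ≤ cC g ∧
      (#(nN g) = cC g ∨ ∃ g' ∉ Z, (∀ y, Commute g' y → y ∈ K0) ∧ S g' ∧
        #(nN g) * #{y : K | y ∈ Z} = cC g * cC g'))
    (R : Finset K) (hRZ : ∀ y ∈ R, y ∉ Z) (hR : ∀ y ∈ R, cls Z y ⊆ R)
    (hin : ∀ y ∉ Z, (∀ w, Commute y w → w ∈ K0) → y ∈ R)
    (c : ℚ) (hc : c ≤ 1 / 2)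
    (hcR : (#R : ℚ) + (#{y : K | y ∈ Z} : ℕ) = Fintype.card K * c) :
    R = ∅ ∨ ∃ g ∈ R, S g ∧ #(nN g) = 2 * cC g ∧ R = cls Z g := by
  have hz : (0 : ℚ) < (#{y : K | y ∈ Z} : ℕ) := by
    exact_mod_cast Finset.card_pos.2 ⟨1, by simp [Z.one_mem]⟩
  have hκ : (0 : ℚ) < Fintype.card K := by exact_mod_cast Fintype.card_pos
  have hlt : (#R : ℚ) < Fintype.card K * (1 / 2) := by nlinarith
  -- sub-class bounds
  have b1 : ∀ g ∈ R, (#(cls Z g) : ℚ) < Fintype.card K * (1 / 2) := by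
    intro g hg
    refine lt_of_le_of_lt ?_ hlt
    exact_mod_cast Finset.card_le_card (hR g hg)
  have b2 : ∀ g ∈ R, ∀ y ∈ R, y ∉ cls Z g →
      (#(cls Z g) : ℚ) + #(cls Z y) < Fintype.card K * (1 / 2) := by
    intro g hg y hy hyg
    refine lt_of_le_of_lt ?_ hlt
    rw [← Nat.cast_add, ← Finset.card_union_of_disjoint (cls_disj hZ hCT (hRZ y hy) hyg)]
    exact_mod_cast Finset.card_le_card (Finset.union_subset (hR g hg) (hR y hy))
  -- lower bounds for semisimple classes
  have s1 : ∀ g ∈ R, S g → #(nN g) = 2 * cC g ∧ ∀ d : ℚ, 0 < d →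
      (cC g : ℚ) = d * (#{y : K | y ∈ Z} : ℕ) →
      (#(cls Z g) : ℚ) = Fintype.card K * ((1 - 1 / d) / 2) := by
    intro g hg hs
    obtain ⟨d, hd, hd2⟩ := cC_dvd hZ (hRZ g hg)
    have hd2' : (2 : ℚ) ≤ d := by exact_mod_cast hd2
    rcases hS g (hRZ g hg) hs with h | h
    · exfalso
      have := cls_ratio hZ hCT (hRZ g hg) d 1 (by norm_num) (by linarith) (by exact_mod_cast hd)
        (by rw [h]; simp)
      have h2 := b1 g hg
      rw [this] at h2
      have h3 := lt_of_mul_lt_mul_left h2 hκ.le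
      have : 1 / (d : ℚ) ≤ 1 / 2 := one_div_le_one_div_of_le (by norm_num) hd2'
      rw [div_one] at h3
      linarith
    · refine ⟨h, fun d' hd' hd'' => ?_⟩
      exact cls_ratio hZ hCT (hRZ g hg) d' 2 (by norm_num) hd' hd'' (by rw [h]; simp)
  have s2 : ∀ g ∈ R, S g := by
    intro g hg
    by_contra hs
    obtain ⟨-, h3, h4⟩ := hU g (hRZ g hg) hs
    obtain ⟨d, hd, hd2⟩ := cC_dvd hZ (hRZ g hg)
    have hd3 : 3 ≤ d := by
      rw [hd] at h3
      exact Nat.le_of_mul_le_mul_right h3 (by exact_mod_cast hz)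
    have hd3' : (3 : ℚ) ≤ d := by exact_mod_cast hd3
    have hdd : 1 / (d : ℚ) ≤ 1 / 3 := one_div_le_one_div_of_le (by norm_num) hd3'
    rcases h4 with h | ⟨g', hg', hin', hs', heq⟩
    · have := cls_ratio hZ hCT (hRZ g hg) d 1 (by norm_num) (by linarith) (by exact_mod_cast hd)
        (by rw [h]; simp)
      have h2 := b1 g hg
      rw [this] at h2
      have h3 := lt_of_mul_lt_mul_left h2 hκ.le
      rw [div_one] at h3
      linarith
    · obtain ⟨k, hk, hk2⟩ := cC_dvd hZ hg'
      have hk2' : (2 : ℚ) ≤ k := by exact_mod_cast hk2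
      have hgR := hin g' hg' hin'
      have hN : #(nN g) = k * cC g := by
        rw [hk] at heq
        have : #(nN g) * #{y : K | y ∈ Z} = (k * cC g) * #{y : K | y ∈ Z} := by
          rw [heq]; ring
        exact Nat.eq_of_mul_eq_mul_right (by exact_mod_cast hz) this
      have r1 := cls_ratio hZ hCT (hRZ g hg) d k (by linarith) (by linarith)
        (by exact_mod_cast hd) (by exact_mod_cast hN)
      obtain ⟨hn2, r2⟩ := s1 g' hgR hs'
      have r2 := r2 k (by linarith) (by exact_mod_cast hk)
      have hnot : g' ∉ cls Z g := by
        intro hc'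
        have e1 := cC_cls hZ hCT (hRZ g hg) hc'
        have e2 := nN_cls hZ hCT (hRZ g hg) hc'
        have hkd : k = d := by
          have : k * #{y : K | y ∈ Z} = d * #{y : K | y ∈ Z} := by rw [← hk, ← hd, e1]
          exact Nat.eq_of_mul_eq_mul_right (by exact_mod_cast hz) this
        have hpos : 0 < cC g := by
          rw [hd]; exact Nat.mul_pos (by omega) (by exact_mod_cast hz)
        have : k * cC g = 2 * cC g := by rw [← hN, ← e1, ← hn2, e2]
        have := Nat.eq_of_mul_eq_mul_right hpos this
        omega
      have h2 := b2 g hg g' hgR hnot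
      rw [r1, r2, ← mul_add] at h2
      have h3 := lt_of_mul_lt_mul_left h2 hκ.le
      have : (1 - 1 / (d : ℚ)) / k ≥ (2 / 3) / k := by
        apply div_le_div_of_nonneg_right _ (by linarith)
        linarith
      have e : (2 / 3 : ℚ) / k = (2 / 3) * (1 / k) := by ring
      have : (0 : ℚ) < 1 / k := by positivity
      linarith
  rcases R.eq_empty_or_nonempty with h | ⟨g, hg⟩
  · exact Or.inl h
  right
  refine ⟨g, hg, s2 g hg, (s1 g hg (s2 g hg)).1, ?_⟩
  refine Finset.Subset.antisymm ?_ (hR g hg)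
  intro y hy
  by_contra hyg
  have low : ∀ g ∈ R, (#(cls Z g) : ℚ) ≥ Fintype.card K * (1 / 4) := by
    intro g hg
    obtain ⟨d, hd, hd2⟩ := cC_dvd hZ (hRZ g hg)
    have hd2' : (2 : ℚ) ≤ d := by exact_mod_cast hd2
    rw [(s1 g hg (s2 g hg)).2 d (by linarith) (by exact_mod_cast hd)]
    have : 1 / (d : ℚ) ≤ 1 / 2 := one_div_le_one_div_of_le (by norm_num) hd2'
    apply mul_le_mul_of_nonneg_left _ hκ.le
    linarith
  have := b2 g hg y hy hyg
  linarith [low g hg, low y hy]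


lemma cC_outer {Z K0 : Subgroup K} (hZ : ∀ z ∈ Z, ∀ g, Commute z g) (hZ0 : Z ≤ K0)
    (h2 : K0.index = 2) {g : K} (hu : ∃ u, Commute g u ∧ u ∉ K0) :
    2 * #{y : K | Commute g y ∧ y ∉ K0} = cC g ∧ ∃ m : ℕ, cC g = (2 * m) * #{y : K | y ∈ Z} := by
  have hmem : ∀ y, y ∈ Subgroup.centralizer {g} ↔ Commute g y := by
    intro y; rw [Subgroup.mem_centralizer_singleton_iff, commute_iff_eq, eq_comm]
  have h := two_outer h2 (Subgroup.centralizer {g}) (by simpa [hmem] using hu)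
  simp only [hmem] at h
  refine ⟨h, ?_⟩
  have hle : Z ≤ Subgroup.centralizer {g} ⊓ K0 :=
    le_inf (fun z hz => (hmem z).2 (hZ z hz g).symm) hZ0
  obtain ⟨m, hm⟩ := Subgroup.card_dvd_of_le hle
  have e2 : #{y : K | y ∈ Z} = Nat.card Z := by
    rw [Nat.card_eq_fintype_card, Fintype.card_subtype]
  have e3 : #{y : K | Commute g y ∧ y ∈ K0} = Nat.card (Subgroup.centralizer {g} ⊓ K0 : Subgroup K) := by
    rw [Nat.card_eq_fintype_card, Fintype.card_subtype]
    congr 1; ext y; simp only [mem_filter, mem_univ, true_and, Subgroup.mem_inf, hmem]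
  have h5 := Finset.card_filter_add_card_filter_not (s := {y : K | Commute g y}) (fun y => y ∉ K0)
  simp only [filter_filter, not_not] at h5
  refine ⟨m, ?_⟩
  have : cC g = 2 * #{y : K | Commute g y ∧ y ∈ K0} := by
    change _ = cC g at h
    change _ = cC g at h5
    omega
  rw [this, e3, e2, hm]; ring

theorem abstract_main {Z K0 : Subgroup K} (hZ : ∀ z ∈ Z, ∀ g, Commute z g) (hZ0 : Z ≤ K0)
    (h2 : K0.index = 2)
    (hCT : ∀ a b c : K, b ∉ Z → Commute a b → Commute b c → Commute a c)
    (S : K → Prop) (hS : ∀ g ∉ Z, S g → #(nN g) = cC g ∨ #(nN g) = 2 * cC g)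
    (hU : ∀ g ∉ Z, ¬ S g → (∀ y, Commute g y → y ∈ K0) ∧ 3 * #{y : K | y ∈ Z} ≤ cC g ∧
      (#(nN g) = cC g ∨ ∃ g' ∉ Z, (∀ y, Commute g' y → y ∈ K0) ∧ S g' ∧
        #(nN g) * #{y : K | y ∈ Z} = cC g * cC g'))
    (h4 : ∀ g ∉ Z, (∃ y, Commute g y ∧ y ∉ K0) → cC g ≠ 4 * #{y : K | y ∈ Z}) :
    ∃ g ∉ Z, S g ∧ #(nN g) = Fintype.card K := by
  have hnorm : K0.Normal := Subgroup.normal_of_index_eq_two h2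
  have hznat : 0 < #{y : K | y ∈ Z} := Finset.card_pos.2 ⟨1, by simp [Z.one_mem]⟩
  have hz : (0 : ℚ) < (#{y : K | y ∈ Z} : ℕ) := by exact_mod_cast hznat
  have hκ : (0 : ℚ) < Fintype.card K := by exact_mod_cast Fintype.card_pos
  -- facts about outer elements
  have hout : ∀ x, x ∉ K0 → x ∉ Z ∧ S x ∧ ∃ d : ℕ, cC x = d * #{y : K | y ∈ Z} ∧
      (d = 2 ∨ 6 ≤ d) ∧
      2 * #{y ∈ cls Z x | y ∉ K0} * #(nN x) = Fintype.card K * cC x := by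
    intro x hx
    have hxZ : x ∉ Z := fun h => hx (hZ0 h)
    have hxs : S x := by
      by_contra h
      exact hx ((hU x hxZ h).1 x (Commute.refl x))
    obtain ⟨d, hd, hd2⟩ := cC_dvd hZ hxZ
    obtain ⟨ho, m, hm⟩ := cC_outer hZ hZ0 h2 ⟨x, Commute.refl x, hx⟩
    have hdm : d = 2 * m := Nat.eq_of_mul_eq_mul_right hznat (by rw [← hd, hm])
    have hd4 : d ≠ 4 := by
      rintro rfl
      exact h4 x hxZ ⟨x, Commute.refl x, hx⟩ hd
    refine ⟨hxZ, hxs, d, hd, by omega, ?_⟩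
    have := cls_outer hZ hZ0 hCT hxZ
    rw [mul_assoc, this, ← ho]; ring
  have hinr : ∀ x, x ∉ K0 → ∀ y ∉ Z, (∀ w, Commute y w → w ∈ K0) → y ∉ cls Z x := by
    intro x hx y _ hy hc
    simp only [cls, mem_filter, mem_univ, true_and] at hc
    obtain ⟨_, h, hh⟩ := hc
    have := hnorm.conj_mem _ (hy _ hh.symm) h⁻¹
    apply hx
    simpa [mul_assoc] using this
  have hZc : ∀ x, Disjoint (cls Z x) ({y : K | y ∈ Z} : Finset K) := by
    intro x
    rw [Finset.disjoint_left]
    intro y hy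
    simp only [cls, mem_filter, mem_univ, true_and] at hy ⊢
    exact hy.1
  have hcompl : #({y : K | y ∉ Z} : Finset K) + #{y : K | y ∈ Z} = Fintype.card K := by
    have := Finset.card_filter_add_card_filter_not (s := (univ : Finset K)) (fun y => y ∉ Z)
    simpa only [not_not, card_univ] using this
  have hcl : ∀ x, cls Z x ⊆ ({y : K | y ∉ Z} : Finset K) := by
    intro x y hy
    simp only [cls, mem_filter, mem_univ, true_and] at hy ⊢
    exact hy.1
  obtain ⟨x0, hx0⟩ : ∃ x, x ∉ K0 := by
    by_contra! h
    have : K0 = ⊤ := by ext y; simp [h y]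
    rw [this] at h2
    simp at h2
  obtain ⟨hx0Z, hx0S, d1, hd1, hd1', ho1⟩ := hout x0 hx0
  have hd1p : (2 : ℚ) ≤ d1 := by
    have : 2 ≤ d1 := by omega
    exact_mod_cast this
  have hcCpos : ∀ g : K, 0 < cC g := fun g => Finset.card_pos.2 ⟨1, by simp⟩
  have hi : ∀ d : ℚ, 2 ≤ d → 1 / d ≤ 1 / 2 := fun d hd =>
    one_div_le_one_div_of_le (by norm_num) hd
  have hi6 : ∀ d : ℚ, 6 ≤ d → 1 / d ≤ 1 / 6 := fun d hd =>
    one_div_le_one_div_of_le (by norm_num) hd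
  have hip : ∀ d : ℚ, 2 ≤ d → 0 < 1 / d := fun d hd => by positivity
  rcases hS x0 hx0Z hx0S with hN1 | hN1
  · -- case A
    have r1 := cls_ratio hZ hCT hx0Z d1 1 (by norm_num) (by linarith) (by exact_mod_cast hd1)
        (by rw [hN1]; simp)
    rw [div_one] at r1
    set R : Finset K := ({y : K | y ∉ Z} : Finset K) \ cls Z x0 with hRdef
    have hRc : #R + #(cls Z x0) = #({y : K | y ∉ Z} : Finset K) :=
      Finset.card_sdiff_add_card_eq_card (hcl x0)
    have hRq : (#R : ℚ) + #(cls Z x0) + (#{y : K | y ∈ Z} : ℕ) = Fintype.card K := by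
      exact_mod_cast (by rw [hRc, hcompl] : #R + #(cls Z x0) + #{y : K | y ∈ Z} = Fintype.card K)
    have hcR : (#R : ℚ) + (#{y : K | y ∈ Z} : ℕ) = Fintype.card K * (1 / d1) := by
      rw [r1] at hRq; linarith
    have hRm : ∀ y, y ∈ R ↔ y ∉ Z ∧ y ∉ cls Z x0 := by
      intro y; simp [hRdef]
    rcases core hZ hCT S hS hU R (fun y hy => ((hRm y).1 hy).1) (by
        intro y hy w hw
        obtain ⟨h1, h2⟩ := (hRm y).1 hy
        refine (hRm w).2 ⟨by simpa using hcl y hw, fun h => h2 (cls_trans hZ hCT h (cls_symm h1 hw))⟩)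
      (fun y hy hy' => (hRm y).2 ⟨hy, hinr x0 hx0 y hy hy'⟩) (1 / d1) (hi _ hd1p) hcR with
      h | ⟨g, hg, hgS, hgN, hRg⟩
    · refine ⟨x0, hx0Z, hx0S, ?_⟩
      rw [h] at hcR
      have : (#(nN x0) : ℚ) = Fintype.card K := by
        rw [hN1, hd1]
        push_cast
        simp only [card_empty, Nat.cast_zero, zero_add] at hcR
        rw [hcR]
        field_simp
      exact_mod_cast this
    · have hgZ := ((hRm g).1 hg).1
      obtain ⟨d3, hd3, hd32⟩ := cC_dvd hZ hgZ
      have hd32' : (2 : ℚ) ≤ d3 := by exact_mod_cast hd32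
      have r3 := cls_ratio hZ hCT hgZ d3 2 (by norm_num) (by linarith) (by exact_mod_cast hd3)
        (by rw [hgN]; simp)
      rw [hRg, r3] at hcR
      rcases hd1' with rfl | h6
      · refine ⟨g, hgZ, hgS, ?_⟩
        have : (#(nN g) : ℚ) = Fintype.card K := by
          rw [hgN, hd3]
          push_cast
          have : ((#{y : K | y ∈ Z} : ℕ) : ℚ) = Fintype.card K * (1 / d3) / 2 := by
            push_cast at hcR; linarith
          rw [this]
          field_simp
        exact_mod_cast this
      · exfalso
        have h6' : (6 : ℚ) ≤ d1 := by exact_mod_cast h6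
        have e1 := hi6 _ h6'
        have e3 := hi _ hd32'
        have : Fintype.card K * ((1 - 1 / (d3 : ℚ)) / 2) ≥ Fintype.card K * (1 / 4 : ℚ) :=
          mul_le_mul_of_nonneg_left (by linarith) hκ.le
        have : Fintype.card K * (1 / (d1 : ℚ)) ≤ Fintype.card K * (1 / 6 : ℚ) :=
          mul_le_mul_of_nonneg_left (by linarith) hκ.le
        linarith
  · -- case B
    have hall := two_outer h2 ⊤ ⟨x0, trivial, hx0⟩
    simp only [Subgroup.mem_top, true_and, filter_true, card_univ] at hall
    have o1 : 4 * #{y ∈ cls Z x0 | y ∉ K0} = Fintype.card K := by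
      rw [hN1] at ho1
      exact Nat.eq_of_mul_eq_mul_right (hcCpos x0) (by rw [← ho1]; ring)
    have hκn : 0 < Fintype.card K := Fintype.card_pos
    obtain ⟨x1, hx1, hx1c⟩ : ∃ x1, x1 ∉ K0 ∧ x1 ∉ cls Z x0 := by
      by_contra! h
      have : #{y : K | y ∉ K0} ≤ #{y ∈ cls Z x0 | y ∉ K0} := by
        apply Finset.card_le_card
        intro y hy
        simp only [mem_filter, mem_univ, true_and] at hy ⊢
        exact ⟨h y hy, hy⟩
      omega
    obtain ⟨hx1Z, hx1S, d2, hd2, hd2', ho2⟩ := hout x1 hx1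
    have hd2p : (2 : ℚ) ≤ d2 := by
      have : 2 ≤ d2 := by omega
      exact_mod_cast this
    have hdis := cls_disj hZ hCT hx1Z hx1c
    have hN2 : #(nN x1) = 2 * cC x1 := by
      rcases hS x1 hx1Z hx1S with h | h
      · exfalso
        rw [h] at ho2
        have o2 : 2 * #{y ∈ cls Z x1 | y ∉ K0} = Fintype.card K :=
          Nat.eq_of_mul_eq_mul_right (hcCpos x1) ho2
        have : #{y ∈ cls Z x0 | y ∉ K0} + #{y ∈ cls Z x1 | y ∉ K0} ≤ #{y : K | y ∉ K0} := by
          rw [← Finset.card_union_of_disjoint (Finset.disjoint_filter_filter hdis)]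
          apply Finset.card_le_card
          intro y hy
          simp only [mem_union, mem_filter, mem_univ, true_and] at hy ⊢
          tauto
        omega
      · exact h
    have r1 := cls_ratio hZ hCT hx0Z d1 2 (by norm_num) (by linarith) (by exact_mod_cast hd1)
        (by rw [hN1]; simp)
    have r2 := cls_ratio hZ hCT hx1Z d2 2 (by norm_num) (by linarith) (by exact_mod_cast hd2)
        (by rw [hN2]; simp)
    set R : Finset K := ({y : K | y ∉ Z} : Finset K) \ (cls Z x0 ∪ cls Z x1) with hRdef
    have hRc : #R + (#(cls Z x0) + #(cls Z x1)) = #({y : K | y ∉ Z} : Finset K) := by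
      rw [← Finset.card_union_of_disjoint hdis]
      exact Finset.card_sdiff_add_card_eq_card (Finset.union_subset (hcl x0) (hcl x1))
    have hRq : (#R : ℚ) + (#(cls Z x0) + #(cls Z x1)) + (#{y : K | y ∈ Z} : ℕ)
        = Fintype.card K := by
      exact_mod_cast (by rw [hRc, hcompl] :
        #R + (#(cls Z x0) + #(cls Z x1)) + #{y : K | y ∈ Z} = Fintype.card K)
    have hcR : (#R : ℚ) + (#{y : K | y ∈ Z} : ℕ)
        = Fintype.card K * ((1 / d1) / 2 + (1 / d2) / 2) := by
      rw [r1, r2] at hRq; linarith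
    have hRm : ∀ y, y ∈ R ↔ y ∉ Z ∧ y ∉ cls Z x0 ∧ y ∉ cls Z x1 := by
      intro y; simp [hRdef]
    have i1 := hi _ hd1p
    have i2 := hi _ hd2p
    rcases core hZ hCT S hS hU R (fun y hy => ((hRm y).1 hy).1) (by
        intro y hy w hw
        obtain ⟨h1, h2, h3⟩ := (hRm y).1 hy
        exact (hRm w).2 ⟨by simpa using hcl y hw,
          fun h => h2 (cls_trans hZ hCT h (cls_symm h1 hw)),
          fun h => h3 (cls_trans hZ hCT h (cls_symm h1 hw))⟩)
      (fun y hy hy' => (hRm y).2 ⟨hy, hinr x0 hx0 y hy hy', hinr x1 hx1 y hy hy'⟩)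
      ((1 / d1) / 2 + (1 / d2) / 2) (by linarith) hcR with
      h | ⟨g, hg, hgS, hgN, hRg⟩
    · exfalso
      rw [h] at hcR
      simp only [card_empty, Nat.cast_zero, zero_add] at hcR
      have hle : #(nN x0) ≤ Fintype.card K := Finset.card_le_univ _
      rw [hN1, hd1] at hle
      have hle' : (2 : ℚ) * (d1 * (#{y : K | y ∈ Z} : ℕ)) ≤ Fintype.card K := by
        exact_mod_cast hle
      rw [hcR] at hle'
      have e : (2 : ℚ) * (d1 * (Fintype.card K * ((1 / d1) / 2 + (1 / d2) / 2)))
        = Fintype.card K + Fintype.card K * (d1 / d2) := by field_simp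
      rw [e] at hle'
      have : (0 : ℚ) < Fintype.card K * (d1 / d2) := by positivity
      linarith
    · have hgZ := ((hRm g).1 hg).1
      obtain ⟨d3, hd3, hd32⟩ := cC_dvd hZ hgZ
      have hd32' : (2 : ℚ) ≤ d3 := by exact_mod_cast hd32
      have r3 := cls_ratio hZ hCT hgZ d3 2 (by norm_num) (by linarith) (by exact_mod_cast hd3)
        (by rw [hgN]; simp)
      rw [hRg, r3] at hcR
      have fin : ∀ g : K, g ∉ Z → S g → #(nN g) = 2 * cC g → ∀ d : ℕ, (2 : ℚ) ≤ d →
          cC g = d * #{y : K | y ∈ Z} →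
          ((#{y : K | y ∈ Z} : ℕ) : ℚ) = Fintype.card K * ((1 / d) / 2) →
          ∃ g ∉ Z, S g ∧ #(nN g) = Fintype.card K := by
        intro g hg hs hn d hd hd' he
        refine ⟨g, hg, hs, ?_⟩
        have : (#(nN g) : ℚ) = Fintype.card K := by
          rw [hn, hd']
          push_cast
          rw [he]
          field_simp
        exact_mod_cast this
      have hzeq : ((#{y : K | y ∈ Z} : ℕ) : ℚ) = Fintype.card K *
          ((1 / d1) / 2 + (1 / d2) / 2 + (1 / d3) / 2 - 1 / 2) := by linarith
      have hpos : (0 : ℚ) < (1 / d1) / 2 + (1 / d2) / 2 + (1 / d3) / 2 - 1 / 2 := by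
        rw [hzeq] at hz
        exact (mul_pos_iff_of_pos_left hκ).1 hz
      have h3c : d3 = 2 ∨ 3 ≤ d3 := by omega
      have i3 := hi _ hd32'
      rcases hd1' with rfl | h6
      · rcases hd2' with rfl | h6
        · apply fin g hgZ hgS hgN d3 hd32' hd3
          rw [hzeq]; push_cast; ring
        · have h6' : (6 : ℚ) ≤ d2 := by exact_mod_cast h6
          have e1 := hi6 _ h6'
          rcases h3c with rfl | h3
          · apply fin x1 hx1Z hx1S hN2 d2 hd2p hd2
            rw [hzeq]; push_cast; ring
          · exfalso
            have h3' : (3 : ℚ) ≤ d3 := by exact_mod_cast h3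
            have : 1 / (d3 : ℚ) ≤ 1 / 3 := one_div_le_one_div_of_le (by norm_num) h3'
            push_cast at hpos
            linarith
      · have h6' : (6 : ℚ) ≤ d1 := by exact_mod_cast h6
        have e1 := hi6 _ h6'
        rcases hd2' with rfl | h6
        · rcases h3c with rfl | h3
          · apply fin x0 hx0Z hx0S hN1 d1 hd1p hd1
            rw [hzeq]; push_cast; ring
          · exfalso
            have h3' : (3 : ℚ) ≤ d3 := by exact_mod_cast h3
            have : 1 / (d3 : ℚ) ≤ 1 / 3 := one_div_le_one_div_of_le (by norm_num) h3'
            push_cast at hpos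
            linarith
        · exfalso
          have h6' : (6 : ℚ) ≤ d2 := by exact_mod_cast h6
          have e2 := hi6 _ h6'
          linarith

end Abstract


section Mat
variable {F : Type} [Field F]

lemma mat2_commute_iff (A B : Matrix (Fin 2) (Fin 2) F) : A * B = B * A ↔
    A 0 1 * B 1 0 = B 0 1 * A 1 0 ∧ (A 0 0 - A 1 1) * B 0 1 = (B 0 0 - B 1 1) * A 0 1 ∧
      (A 0 0 - A 1 1) * B 1 0 = (B 0 0 - B 1 1) * A 1 0 := by
  rw [← Matrix.ext_iff]
  simp only [Fin.forall_fin_two, Matrix.mul_apply, Fin.sum_univ_two]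
  constructor
  · rintro ⟨⟨h1, h2⟩, h3, h4⟩
    refine ⟨by linear_combination h1, by linear_combination h2, by linear_combination -h3⟩
  · rintro ⟨h1, h2, h3⟩
    refine ⟨⟨by linear_combination h1, by linear_combination h2⟩, by linear_combination -h3,
      by linear_combination -h1⟩

def IsSc (A : Matrix (Fin 2) (Fin 2) F) : Prop := A 0 1 = 0 ∧ A 1 0 = 0 ∧ A 0 0 = A 1 1

lemma mat2_span {A B : Matrix (Fin 2) (Fin 2) F} (hA : ¬ IsSc A) (h : A * B = B * A) :
    ∃ α β : F, B = α • (1 : Matrix (Fin 2) (Fin 2) F) + β • A := by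
  rw [mat2_commute_iff] at h
  obtain ⟨h1, h2, h3⟩ := h
  have key : ∀ β : F, B 0 1 = β * A 0 1 → B 1 0 = β * A 1 0 →
      B 0 0 - B 1 1 = β * (A 0 0 - A 1 1) →
      ∃ α β : F, B = α • (1 : Matrix (Fin 2) (Fin 2) F) + β • A := by
    intro β e1 e2 e3
    refine ⟨B 0 0 - β * A 0 0, β, ?_⟩
    rw [← Matrix.ext_iff]
    simp only [Fin.forall_fin_two, Matrix.add_apply, Matrix.smul_apply, smul_eq_mul]
    refine ⟨⟨by simp, by simp [e1]⟩, by simp [e2], ?_⟩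
    simp
    linear_combination -e3
  by_cases a : A 0 1 = 0
  · by_cases b : A 1 0 = 0
    · have c : A 0 0 - A 1 1 ≠ 0 := fun c => hA ⟨a, b, sub_eq_zero.1 c⟩
      refine key ((B 0 0 - B 1 1) / (A 0 0 - A 1 1)) ?_ ?_ ?_ <;> field_simp
      · linear_combination h2
      · linear_combination h3
    · refine key (B 1 0 / A 1 0) ?_ ?_ ?_ <;> field_simp
      · linear_combination -h1
      · linear_combination -h3
  · refine key (B 0 1 / A 0 1) ?_ ?_ ?_ <;> field_simp
    · linear_combination h1
    · linear_combination -h2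

lemma mat2_CT {A B C : Matrix (Fin 2) (Fin 2) F} (hB : ¬ IsSc B) (h1 : A * B = B * A)
    (h2 : B * C = C * B) : A * C = C * A := by
  obtain ⟨a, b, rfl⟩ := mat2_span hB h1.symm
  rw [add_mul, mul_add, smul_mul_assoc, smul_mul_assoc, mul_smul_comm, mul_smul_comm, h2]
  simp

/-- discriminant of the characteristic polynomial -/
def dsc (A : Matrix (Fin 2) (Fin 2) F) : F := (A 0 0 - A 1 1) ^ 2 + 4 * (A 0 1 * A 1 0)

lemma dsc_eq (A : Matrix (Fin 2) (Fin 2) F) : dsc A = A.trace ^ 2 - 4 * A.det := by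
  rw [dsc, Matrix.det_fin_two, Matrix.trace_fin_two]; ring

lemma dsc_span (A : Matrix (Fin 2) (Fin 2) F) (α β : F) :
    dsc (α • (1 : Matrix (Fin 2) (Fin 2) F) + β • A) = β ^ 2 * dsc A := by
  simp [dsc]; ring

lemma mat2_flip {A B : Matrix (Fin 2) (Fin 2) F} (h2 : (2 : F) ≠ 0) (hA : dsc A ≠ 0)
    (h : A * B = B * A) (ht : B.trace = A.trace) (hd : B.det = A.det) :
    B = A ∨ B = A.trace • (1 : Matrix (Fin 2) (Fin 2) F) - A := by
  have hs : ¬ IsSc A := by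
    rintro ⟨a, b, c⟩
    apply hA; simp [dsc, a, b, c]
  obtain ⟨α, β, rfl⟩ := mat2_span hs h
  have e := dsc_span A α β
  rw [dsc_eq, ht, hd, ← dsc_eq] at e
  have : β ^ 2 = 1 := by
    have : (β ^ 2 - 1) * dsc A = 0 := by linear_combination -e
    rcases mul_eq_zero.1 this with h | h
    · linear_combination h
    · exact absurd h hA
  have tr : 2 * α + β * A.trace = A.trace := by
    have := ht
    simp [Matrix.trace_fin_two] at this ⊢
    linear_combination this
  rcases mul_self_eq_one_iff.1 ((pow_two β).symm.trans this) with rfl | rfl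
  · left
    have : α = 0 := by
      have : 2 * α = 0 := by linear_combination tr
      simpa [h2] using this
    simp [this]
  · right
    have : α = A.trace := by
      have : 2 * (α - A.trace) = 0 := by linear_combination tr
      have := (mul_eq_zero.1 this).resolve_left h2
      linear_combination this
    rw [this, neg_smul, one_smul]; abel

lemma mat2_CH (A : Matrix (Fin 2) (Fin 2) F) :
    A * A = A.trace • A - A.det • (1 : Matrix (Fin 2) (Fin 2) F) := by
  rw [← Matrix.ext_iff]
  simp only [Fin.forall_fin_two, Matrix.mul_apply, Fin.sum_univ_two, Matrix.sub_apply,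
    Matrix.smul_apply, Matrix.trace_fin_two, Matrix.det_fin_two, smul_eq_mul]
  refine ⟨⟨?_, ?_⟩, ?_, ?_⟩ <;> simp <;> ring

/-- square scalar of a nonscalar matrix forces trace zero -/
lemma mat2_sq {A : Matrix (Fin 2) (Fin 2) F} (hA : ¬ IsSc A) (h : IsSc (A * A)) :
    A.trace = 0 := by
  rw [mat2_CH] at h
  by_contra ht
  apply hA
  obtain ⟨h1, h2, h3⟩ := h
  simp only [Matrix.sub_apply, Matrix.smul_apply, smul_eq_mul] at h1 h2 h3
  simp [ht] at h1 h2 h3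
  exact ⟨h1, h2, h3⟩

lemma mat2_four {A : Matrix (Fin 2) (Fin 2) F} (hA : ¬ IsSc A) (h : IsSc (A ^ 4))
    (ht : A.trace ≠ 0) : A.trace ^ 2 = 2 * A.det := by
  have h1 : ¬ IsSc (A * A) := fun h' => ht (mat2_sq hA h')
  have h2 := mat2_sq h1 (by rw [← pow_two, ← pow_two, ← pow_mul]; exact h)
  rw [mat2_CH] at h2
  simp [Matrix.trace_sub, Matrix.trace_smul] at h2
  linear_combination h2

/-- a matrix semi-commuting with a nilpotent: eigenvalue facts -/
lemma nil_facts {h v : Matrix (Fin 2) (Fin 2) F} {l : F} (hv0 : v ≠ 0) (hvt : v.trace = 0)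
    (H : h * v = l • v) : v * h = (h.trace - l) • v ∧ h.det = l * (h.trace - l) := by
  constructor
  · have e1 : v 1 1 = - v 0 0 := by rw [Matrix.trace_fin_two] at hvt; linear_combination hvt
    rw [← Matrix.ext_iff] at H ⊢
    simp only [Fin.forall_fin_two, Matrix.mul_apply, Fin.sum_univ_two, Matrix.smul_apply,
      Matrix.trace_fin_two, smul_eq_mul, e1] at H ⊢
    obtain ⟨⟨h1, h2⟩, h3, h4⟩ := H
    refine ⟨⟨?_, ?_⟩, ?_, ?_⟩
    · linear_combination h4
    · linear_combination -h2
    · linear_combination -h3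
    · linear_combination h1
  · have e2 : h * h * v = (l * l) • v := by
      rw [mul_assoc, H, mul_smul_comm, H, smul_smul]
    rw [mat2_CH, sub_mul, smul_mul_assoc, H, smul_mul_assoc, one_mul, smul_smul, ← sub_smul] at e2
    have := smul_left_injective F hv0 e2
    linear_combination -this

lemma nil_conj {h v : Matrix (Fin 2) (Fin 2) F} (h2 : (2 : F) ≠ 0)
    (hvt : v.trace = 0) (hvd : v.det = 0)
    {c : F} (H : h * v = c • (v * h)) : ∃ l : F, h * v = l • v := by
  have e1 : v 1 1 = - v 0 0 := by rw [Matrix.trace_fin_two] at hvt; linear_combination hvt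
  by_cases hv0 : v = 0
  · exact ⟨0, by simp [hv0]⟩
  have hvv : v * v = 0 := by rw [mat2_CH, hvt, hvd]; simp
  have h3 : (h * v) * v = 0 := by rw [mul_assoc, hvv, mul_zero]
  have h4 : v * (h * v) = 0 := by
    rw [H, mul_smul_comm, ← mul_assoc, hvv]; simp
  have hs : ¬ IsSc v := by
    rintro ⟨a, b, d⟩
    apply hv0
    rw [e1] at d
    have d0 : v 0 0 = 0 := by
      have : 2 * v 0 0 = 0 := by linear_combination d
      simpa [h2] using this
    rw [← Matrix.ext_iff]
    simp [Fin.forall_fin_two, a, b, d0, e1]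
  obtain ⟨α, β, hab⟩ := mat2_span hs (h4.trans h3.symm)
  have : α • v = 0 := by
    have := h3
    rw [hab, add_mul, smul_mul_assoc, one_mul, smul_mul_assoc, hvv] at this
    simpa using this
  have : α = 0 := by simpa [hv0] using this
  exact ⟨β, by rw [hab, this]; simp⟩


/-- a matrix semi-commuting with a nilpotent and with a repeated eigenvalue commutes with it -/
lemma nil_dsc {h v : Matrix (Fin 2) (Fin 2) F} {l : F} (hv0 : v ≠ 0)
    (hvt : v.trace = 0) (H : h * v = l • v) (hd : dsc h = 0) : h * v = v * h := by
  obtain ⟨h1, h3⟩ := nil_facts hv0 hvt H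
  rw [H, h1]
  congr 1
  rw [dsc_eq] at hd
  have : (2 * l - h.trace) ^ 2 = 0 := by linear_combination hd + 4 * h3
  have : 2 * l - h.trace = 0 := by simpa using this
  linear_combination this

lemma gl_center_iff (g : GL (Fin 2) F) : g ∈ Subgroup.center (GL (Fin 2) F) ↔ IsSc g.1 := by
  rw [Matrix.GeneralLinearGroup.mem_center_iff_val_mem_range_scalar]
  constructor
  · rintro ⟨a, ha⟩
    have : g.1 = Matrix.scalar (Fin 2) a := ha.symm
    rw [IsSc, this]
    simp
  · rintro ⟨h1, h2, h3⟩
    refine ⟨g.1 0 0, ?_⟩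
    rw [← Matrix.ext_iff]
    simp [Fin.forall_fin_two, h1, h2, h3]

lemma gl_commute_iff (g h : GL (Fin 2) F) : Commute g h ↔ g.1 * h.1 = h.1 * g.1 := by
  rw [commute_iff_eq, ← Units.val_inj]; rfl

lemma gl_CT (a b c : GL (Fin 2) F) (hb : b ∉ Subgroup.center (GL (Fin 2) F)) (h1 : Commute a b)
    (h2 : Commute b c) : Commute a c := by
  rw [gl_commute_iff] at *
  rw [gl_center_iff] at hb
  exact mat2_CT hb h1 h2

lemma gl_conj_trace (h g : GL (Fin 2) F) : (h * g * h⁻¹).1.trace = g.1.trace := by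
  rw [Units.val_mul, Matrix.trace_mul_comm, ← Units.val_mul]; simp

lemma gl_conj_det (h g : GL (Fin 2) F) : (h * g * h⁻¹).1.det = g.1.det := by
  rw [Units.val_mul, Matrix.det_mul_comm, ← Units.val_mul]; simp

lemma gl_flip (h2 : (2 : F) ≠ 0) {g h : GL (Fin 2) F} (hg : dsc g.1 ≠ 0)
    (hc : Commute (h * g * h⁻¹) g) (hn : ¬ Commute g h) :
    (h * g * h⁻¹).1 = g.1.trace • (1 : Matrix (Fin 2) (Fin 2) F) - g.1 := by
  rcases mat2_flip h2 hg ((gl_commute_iff _ _).1 hc.symm) (gl_conj_trace h g) (gl_conj_det h g)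
    with e | e
  · exfalso
    apply hn
    have : h * g * h⁻¹ = g := Units.ext e
    rw [commute_iff_eq]
    rw [mul_inv_eq_iff_eq_mul] at this
    exact this.symm
  · exact e

end Mat

section Abs2
open Finset
open scoped Classical

lemma nN_card_of {K : Type} [Group K] [Fintype K] (g : K)
    (h : ∀ u w : K, Commute (u * g * u⁻¹) g → Commute (w * g * w⁻¹) g → ¬ Commute g u →
      ¬ Commute g w → u * g * u⁻¹ = w * g * w⁻¹) : #(nN g) = cC g ∨ #(nN g) = 2 * cC g := by
  have hcn : ∀ y, Commute g y → Commute (y * g * y⁻¹) g := by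
    intro y hy
    have : y * g * y⁻¹ = g := by rw [← hy.eq]; simp
    rw [this]
  by_cases ht : ∃ t, Commute (t * g * t⁻¹) g ∧ ¬ Commute g t
  · right
    obtain ⟨t, ht1, ht2⟩ := ht
    rw [← Finset.card_filter_add_card_filter_not (s := nN g) (fun y => Commute g y), two_mul]
    congr 1
    · rw [cC, nN, filter_filter]
      congr 1; ext y
      simp only [mem_filter, mem_univ, true_and]
      exact ⟨fun h => h.2, fun h => ⟨hcn y h, h⟩⟩
    · symm
      rw [cC]
      refine Finset.card_bij' (fun a _ => t * a) (fun a _ => t⁻¹ * a) ?_ ?_ ?_ ?_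
      · intro a ha
        simp only [nN, mem_filter, mem_univ, true_and] at ha ⊢
        constructor
        · have e : t * a * g * (t * a)⁻¹ = t * g * t⁻¹ := by
            rw [_root_.mul_inv_rev]
            have : a * g * a⁻¹ = g := by rw [← ha.eq]; simp
            calc t * a * g * (a⁻¹ * t⁻¹) = t * (a * g * a⁻¹) * t⁻¹ := by group
              _ = _ := by rw [this]
          rw [e]; exact ht1
        · intro hc
          apply ht2
          have := hc.mul_right (ha.inv_right)
          simpa using this
      · intro a ha
        simp only [nN, mem_filter, mem_univ, true_and] at ha ⊢
        have e := h a t ha.1 ht1 ha.2 ht2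
        rw [commute_iff_eq]
        have : t⁻¹ * (a * g * a⁻¹) * a = t⁻¹ * (t * g * t⁻¹) * a := by rw [e]
        simp only [mul_assoc, inv_mul_cancel_left, inv_mul_cancel, mul_one] at this
        rw [mul_assoc]; exact this.symm
      · intro a _; simp
      · intro a _; simp
  · left
    push Not at ht
    rw [cC, nN]
    congr 1; ext y
    simp only [mem_filter, mem_univ, true_and]
    exact ⟨ht y, hcn y⟩

lemma pow_mem_of_cC {K : Type} [Group K] [Fintype K] {Z : Subgroup K}
    (hZ : ∀ z ∈ Z, ∀ g, Commute z g) {g : K} {d : ℕ} (hd : cC g = d * #{y : K | y ∈ Z})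
    {y : K} (hy : Commute g y) : y ^ d ∈ Z := by
  have hmem : ∀ y, y ∈ Subgroup.centralizer {g} ↔ Commute g y := by
    intro y; rw [Subgroup.mem_centralizer_singleton_iff, commute_iff_eq, eq_comm]
  have hle : Z ≤ Subgroup.centralizer {g} := fun z hz => (hmem z).2 (hZ z hz g).symm
  have e1 : cC g = Nat.card (Subgroup.centralizer {g}) := by
    rw [Nat.card_eq_fintype_card, Fintype.card_subtype, cC]
    congr 1; ext y; simp [hmem]
  have e2 : #{y : K | y ∈ Z} = Nat.card Z := by
    rw [Nat.card_eq_fintype_card, Fintype.card_subtype]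
  have hn : (Z.subgroupOf (Subgroup.centralizer {g})).Normal := by
    constructor
    intro n hn k
    rw [Subgroup.mem_subgroupOf] at hn ⊢
    have := (hZ _ hn (k : K)).eq
    have e : ((k * n * k⁻¹ : Subgroup.centralizer {g}) : K) = n := by
      push_cast
      rw [← this]; simp
    rw [e]; exact hn
  have hi : (Z.subgroupOf (Subgroup.centralizer {g})).index = d := by
    have h1 := Subgroup.card_mul_index (Z.subgroupOf (Subgroup.centralizer {g}))
    rw [Nat.card_congr (Subgroup.subgroupOfEquivOfLe hle).toEquiv, ← e1, hd, e2, mul_comm] at h1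
    exact Nat.eq_of_mul_eq_mul_right Nat.card_pos h1
  have := Subgroup.pow_index_mem (Z.subgroupOf (Subgroup.centralizer {g})) ⟨y, (hmem y).2 hy⟩
  rw [hi, Subgroup.mem_subgroupOf] at this
  simpa using this

end Abs2


section Fld
variable {F : Type} [Field F]

lemma subfield_full [Fintype F] {p n : ℕ} (hp : Nat.Prime p) (hodd : Odd p)
    (hF : Fintype.card F = p ^ 2 ^ n)
    {ζ : F} (hζ : ¬ IsSquare ζ) (I : AddSubgroup F) (hI : ∀ b ∈ I, ζ * b ∈ I)
    {b0 : F} (hb0 : b0 ∈ I) (hb : b0 ≠ 0) (b : F) : b ∈ I := by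
  classical
  let E0 : Subring F :=
    { carrier := {c | ∀ b ∈ I, c * b ∈ I}
      mul_mem' := by
        intro x y hx hy b hb
        rw [mul_assoc]; exact hx _ (hy _ hb)
      one_mem' := by intro b hb; simpa using hb
      add_mem' := by
        intro x y hx hy b hb
        rw [add_mul]; exact I.add_mem (hx _ hb) (hy _ hb)
      zero_mem' := by intro b _; simp [I.zero_mem]
      neg_mem' := by
        intro x hx b hb
        rw [neg_mul]; exact I.neg_mem (hx _ hb) }
  have hE0 : ∀ c, c ∈ E0 ↔ ∀ b ∈ I, c * b ∈ I := fun c => Iff.rfl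
  let E : Subfield F :=
    { E0 with
      inv_mem' := by
        intro x hx
        change x⁻¹ ∈ E0
        have hx' : x ∈ E0 := hx
        by_cases h0 : x = 0
        · rw [h0, _root_.inv_zero]; exact E0.zero_mem
        have : x⁻¹ = x ^ (Fintype.card F - 2) := by
          have h1 := FiniteField.pow_card_sub_one_eq_one x h0
          have h2 : 1 < Fintype.card F := Fintype.one_lt_card
          rw [inv_eq_iff_eq_inv, ← mul_eq_one_iff_eq_inv₀ (pow_ne_zero _ h0), ← pow_succ']
          convert h1 using 2
          omega
        rw [this]
        exact E0.pow_mem hx' _ }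
  have hE : ∀ c, c ∈ E ↔ ∀ b ∈ I, c * b ∈ I := fun c => Iff.rfl
  have hζE : ζ ∈ E := (hE ζ).2 hI
  suffices hEt : E = ⊤ by
    have := (hE (b * b0⁻¹)).1 (by rw [hEt]; trivial) b0 hb0
    simpa [mul_assoc, hb] using this
  have hcard : Nat.card F = Nat.card E ^ Module.finrank E F := Module.natCard_eq_pow_finrank
  rw [Nat.card_eq_fintype_card, hF] at hcard
  set m := Module.finrank E F with hm
  have hm0 : 0 < m := Module.finrank_pos
  have hE2 : 2 ≤ Nat.card E := by
    have := Finite.one_lt_card (α := E); omega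
  have hdvd : Nat.card E ∣ p ^ 2 ^ n := by
    rw [hcard]; exact dvd_pow_self _ hm0.ne'
  obtain ⟨j, _, hj⟩ := (Nat.dvd_prime_pow hp).1 hdvd
  rw [hj, ← pow_mul] at hcard
  have hjm := Nat.pow_right_injective hp.two_le hcard
  obtain ⟨i, _, hi⟩ := (Nat.dvd_prime_pow Nat.prime_two).1 (Dvd.intro_left _ hjm.symm)
  rcases Nat.eq_zero_or_pos i with h0 | hpos
  · rw [h0, pow_zero] at hi
    rw [hi, mul_one] at hjm
    have hc : Nat.card E = Nat.card F := by
      rw [hj, ← hjm, Nat.card_eq_fintype_card, hF]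
    have hu : (E : Set F) = Set.univ := by
      apply Set.eq_of_subset_of_ncard_le (Set.subset_univ _) _ (Set.toFinite _)
      rw [Set.ncard_univ, ← hc, ← Nat.card_coe_set_eq]
      rfl
    ext y
    have : y ∈ (E : Set F) := by rw [hu]; trivial
    simpa using this
  · exfalso
    apply hζ
    have hζ0 : ζ ≠ 0 := by rintro rfl; exact hζ (IsSquare.zero)
    have hqodd : Odd (p ^ 2 ^ n) := hodd.pow
    have hch : ringChar F ≠ 2 := by
      intro h
      have := FiniteField.even_card_of_char_two h
      rw [hF] at this
      obtain ⟨k, hk⟩ := hqodd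
      omega
    rw [FiniteField.isSquare_iff hch hζ0, hF]
    obtain ⟨k, hk⟩ : 2 ∣ m := by rw [hi]; exact dvd_pow_self 2 hpos.ne'
    set e := Nat.card E with he
    have hζe : ζ ^ (e - 1) = 1 := by
      haveI : Fintype E := Fintype.ofFinite _
      have := FiniteField.pow_card_sub_one_eq_one (⟨ζ, hζE⟩ : E) (by
        intro h; exact hζ0 (congrArg Subtype.val h))
      rw [← Nat.card_eq_fintype_card] at this
      exact congrArg Subtype.val this
    have hq : p ^ 2 ^ n = (e ^ 2) ^ k := by
      rw [hj, hcard, hk, ← pow_mul, ← pow_mul]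
    have heodd : Odd e := by
      rw [hj]; exact hodd.pow
    obtain ⟨a, ha⟩ := heodd
    have hd1 : e ^ 2 - 1 ∣ p ^ 2 ^ n - 1 := by
      rw [hq]; simpa using Nat.sub_dvd_pow_sub_pow (e ^ 2) 1 k
    have hd2 : e ^ 2 - 1 = (e - 1) * (2 * (a + 1)) := by
      rw [ha]
      have : (2 * a + 1) ^ 2 = (2 * a) * (2 * (a + 1)) + 1 := by ring
      rw [this]; simp
    obtain ⟨w, hw⟩ := hd1
    have : p ^ 2 ^ n / 2 = (e - 1) * ((a + 1) * w) := by
      obtain ⟨k', hk'⟩ := hqodd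
      rw [hd2] at hw
      have : p ^ 2 ^ n - 1 = 2 * ((e - 1) * ((a + 1) * w)) := by rw [hw]; ring
      omega
    rw [this, pow_mul, hζe, one_pow]

lemma card_mod8 {p n : ℕ} (hodd : Odd p) (hn : 1 ≤ n) : p ^ 2 ^ n % 8 = 1 := by
  obtain ⟨m, rfl⟩ : ∃ m, n = m + 1 := ⟨n - 1, by omega⟩
  rw [pow_succ, pow_mul]
  have : Odd (p ^ 2 ^ m) := hodd.pow
  generalize p ^ 2 ^ m = r at this
  have h : r % 8 = 1 ∨ r % 8 = 3 ∨ r % 8 = 5 ∨ r % 8 = 7 := by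
    obtain ⟨k, hk⟩ := this; omega
  rw [Nat.pow_mod]
  rcases h with h | h | h | h <;> rw [h]

lemma exists_chi {N : Type} [Group N] (ρ : N →* GL (Fin 2) F) {E : Type} [Field E] (i : F →+* E)
    {v : Matrix (Fin 2) (Fin 2) E} (hv : v ≠ 0)
    (h : ∀ y, ∃ l : E, (ρ y).1.map i * v = l • v) :
    ∃ χ : N →* Eˣ, ∀ y l, (ρ y).1.map i * v = l • v → (χ y : E) * i (ρ y).1.det = l ^ 2 := by
  choose L hL using h
  have uniq : ∀ y l, (ρ y).1.map i * v = l • v → l = L y := by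
    intro y l hl
    rw [hL] at hl
    exact (smul_left_injective E hv hl).symm
  have h1 : L 1 = 1 := by
    symm; apply uniq; simp
  have hm : ∀ x y, L (x * y) = L x * L y := by
    intro x y; symm; apply uniq
    rw [map_mul, Units.val_mul, Matrix.map_mul, mul_assoc, hL y, mul_smul_comm, hL x, smul_smul,
      mul_comm]
  let f : N →* E :=
    { toFun := fun y => L y ^ 2 * (i (ρ y).1.det)⁻¹
      map_one' := by simp [h1]
      map_mul' := by
        intro x y
        simp only [hm, map_mul, Units.val_mul, Matrix.det_mul, _root_.mul_inv_rev]
        ring }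
  refine ⟨f.toHomUnits, ?_⟩
  intro y l hl
  have hd : i (ρ y).1.det ≠ 0 := by
    rw [map_ne_zero]
    exact (Matrix.isUnit_iff_isUnit_det _).1 (ρ y).isUnit |>.ne_zero
  rw [uniq y l hl]
  change L y ^ 2 * (i (ρ y).1.det)⁻¹ * i (ρ y).1.det = _
  field_simp

/-- root group plus an element moving the point generates -/
lemma gen_upper (L : Subgroup (GL (Fin 2) F))
    (hU : ∀ (b : F) (u : GL (Fin 2) F), u.1 = !![1, b; 0, 1] → u ∈ L)
    {g : GL (Fin 2) F} (hg : g ∈ L) (hc : g.1 1 0 ≠ 0) (y : GL (Fin 2) F) (hy : y.1.det = 1) :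
    y ∈ L := by
  have mk : ∀ A : Matrix (Fin 2) (Fin 2) F, A.det ≠ 0 → ∃ u : GL (Fin 2) F, u.1 = A :=
    fun A hA => ⟨Matrix.GeneralLinearGroup.mkOfDetNeZero A hA, rfl⟩
  have up : ∀ b : F, ∃ u ∈ L, u.1 = !![1, b; 0, 1] := by
    intro b
    obtain ⟨u, hu⟩ := mk !![1, b; 0, 1] (by simp [Matrix.det_fin_two])
    exact ⟨u, hU b u hu, hu⟩
  have hdg : g.1.det ≠ 0 := (Matrix.isUnit_iff_isUnit_det _).1 g.isUnit |>.ne_zero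
  -- lower
  have low : ∀ b : F, ∃ u ∈ L, u.1 = !![1, 0; b, 1] := by
    intro b
    obtain ⟨u1, hu1, e1⟩ := up (- g.1 0 0 / g.1 1 0)
    obtain ⟨u2, hu2, e2⟩ := up (- g.1 1 1 / g.1 1 0)
    have hw : u1 * g * u2 ∈ L := L.mul_mem (L.mul_mem hu1 hg) hu2
    have ew : (u1 * g * u2).1 = !![0, - g.1.det / g.1 1 0; g.1 1 0, 0] := by
      rw [Units.val_mul, Units.val_mul, e1, e2, ← Matrix.ext_iff]
      simp only [Fin.forall_fin_two, Matrix.mul_apply, Fin.sum_univ_two, Matrix.det_fin_two]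
      refine ⟨⟨?_, ?_⟩, ?_, ?_⟩ <;> simp <;> field_simp <;> ring
    generalize u1 * g * u2 = w at hw ew
    obtain ⟨u3, hu3, e3⟩ := up (- b * g.1.det / (g.1 1 0) ^ 2)
    refine ⟨w * u3 * w⁻¹, L.mul_mem (L.mul_mem hw hu3) (L.inv_mem hw), ?_⟩
    obtain ⟨u4, e4⟩ := mk !![1, 0; b, 1] (by simp [Matrix.det_fin_two])
    rw [← e4, Units.val_inj, mul_inv_eq_iff_eq_mul, ← Units.val_inj, Units.val_mul, Units.val_mul,
      ew, e3, e4, ← Matrix.ext_iff]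
    simp only [Fin.forall_fin_two, Matrix.mul_apply, Fin.sum_univ_two]
    refine ⟨⟨?_, ?_⟩, ?_, ?_⟩ <;> simp <;> field_simp
  have main : ∀ y : GL (Fin 2) F, y.1.det = 1 → y.1 1 0 ≠ 0 → y ∈ L := by
    intro y hy hc
    obtain ⟨u1, hu1, e1⟩ := up ((y.1 0 0 - 1) / y.1 1 0)
    obtain ⟨u2, hu2, e2⟩ := low (y.1 1 0)
    obtain ⟨u3, hu3, e3⟩ := up ((y.1 1 1 - 1) / y.1 1 0)
    have : y = u1 * u2 * u3 := by
      rw [← Units.val_inj, Units.val_mul, Units.val_mul, e1, e2, e3, ← Matrix.ext_iff]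
      simp only [Fin.forall_fin_two, Matrix.mul_apply, Fin.sum_univ_two]
      rw [Matrix.det_fin_two] at hy
      refine ⟨⟨?_, ?_⟩, ?_, ?_⟩ <;> simp <;> field_simp
      · ring
      · linear_combination -hy
      · ring
    rw [this]
    exact L.mul_mem (L.mul_mem hu1 hu2) hu3
  by_cases h : y.1 1 0 = 0
  · obtain ⟨u, hu, e⟩ := low 1
    have : u * y ∈ L := by
      apply main
      · rw [Units.val_mul, Matrix.det_mul, hy, e]; simp [Matrix.det_fin_two]
      · rw [Units.val_mul, e, Matrix.mul_apply, Fin.sum_univ_two, h]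
        simp
        intro h0
        rw [Matrix.det_fin_two, h, h0] at hy
        simp at hy
    have h2 := L.mul_mem (L.inv_mem hu) this
    simpa using h2
  · exact main y hy h

end Fld


section FullSec
variable {F : Type} [Field F]

lemma nsq_mul [Fintype F] (hch : ringChar F ≠ 2) {a b : F} (ha : ¬ IsSquare a) (hb : ¬ IsSquare b) :
    IsSquare (a * b) := by
  have ha0 : a ≠ 0 := by rintro rfl; exact ha IsSquare.zero
  have hb0 : b ≠ 0 := by rintro rfl; exact hb IsSquare.zero
  have h1 := (FiniteField.pow_dichotomy hch ha0).resolve_left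
    (fun h => ha ((FiniteField.isSquare_iff hch ha0).2 h))
  have h2 := (FiniteField.pow_dichotomy hch hb0).resolve_left
    (fun h => hb ((FiniteField.isSquare_iff hch hb0).2 h))
  rw [FiniteField.isSquare_iff hch (mul_ne_zero ha0 hb0), mul_pow, h1, h2]
  ring

lemma gl_det_ne (g : GL (Fin 2) F) : g.1.det ≠ 0 :=
  (Matrix.isUnit_iff_isUnit_det _).1 g.isUnit |>.ne_zero

lemma gl_exists (A : Matrix (Fin 2) (Fin 2) F) (hA : A.det ≠ 0) : ∃ u : GL (Fin 2) F, u.1 = A :=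
  ⟨Matrix.GeneralLinearGroup.mkOfDetNeZero A hA, rfl⟩

lemma gl_scalar {a : F} (ha : a ≠ 0) : ∃ z ∈ Subgroup.center (GL (Fin 2) F),
    z.1 = a • (1 : Matrix (Fin 2) (Fin 2) F) := by
  obtain ⟨z, hz⟩ := gl_exists (a • (1 : Matrix (Fin 2) (Fin 2) F)) (by simp [ha])
  refine ⟨z, ?_, hz⟩
  rw [gl_center_iff, hz]
  simp [IsSc]

lemma gl_norm_det (y : GL (Fin 2) F) (h : IsSquare y.1.det) :
    ∃ z ∈ Subgroup.center (GL (Fin 2) F), (z * y).1.det = 1 := by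
  obtain ⟨a, ha⟩ := h
  have ha0 : a ≠ 0 := by
    rintro rfl
    exact gl_det_ne y (by simpa using ha)
  obtain ⟨z, hz, e⟩ := gl_scalar (inv_ne_zero ha0)
  refine ⟨z, hz, ?_⟩
  rw [Units.val_mul, Matrix.det_mul, e, ha]
  simp
  field_simp

lemma nil_frame {v : Matrix (Fin 2) (Fin 2) F} (hv0 : v ≠ 0) (hvt : v.trace = 0)
    (hvd : v.det = 0) : ∃ P : GL (Fin 2) F, v * P.1 = P.1 * !![0, 1; 0, 0] := by
  have e1 : v 1 1 = - v 0 0 := by rw [Matrix.trace_fin_two] at hvt; linear_combination hvt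
  rw [Matrix.det_fin_two, e1] at hvd
  by_cases hb : v 0 1 = 0
  · have ha : v 0 0 = 0 := by simpa [hb] using hvd
    have hc : v 1 0 ≠ 0 := by
      intro hc; apply hv0
      ext i j
      fin_cases i <;> fin_cases j <;> simp [ha, hb, hc, e1]
    obtain ⟨P, hP⟩ := gl_exists !![0, 1; v 1 0, 0] (by simp [Matrix.det_fin_two, hc])
    refine ⟨P, ?_⟩
    rw [hP, ← Matrix.ext_iff]
    simp [Fin.forall_fin_two, Matrix.mul_apply, Fin.sum_univ_two, ha, hb, e1]
  · obtain ⟨P, hP⟩ := gl_exists !![v 0 1, 0; -v 0 0, 1] (by simp [Matrix.det_fin_two, hb])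
    refine ⟨P, ?_⟩
    rw [hP, ← Matrix.ext_iff]
    simp [Fin.forall_fin_two, Matrix.mul_apply, Fin.sum_univ_two, e1]
    constructor
    · ring
    · linear_combination -hvd

lemma gl_full [Fintype F] (hch : ringChar F ≠ 2) (hm1 : IsSquare (-1 : F))
    (H : Subgroup (GL (Fin 2) F))
    (hZ : Subgroup.center (GL (Fin 2) F) ≤ H) {v : Matrix (Fin 2) (Fin 2) F} (hv0 : v ≠ 0)
    (hvt : v.trace = 0) (hvd : v.det = 0)
    (hU : ∀ (b : F) (u : GL (Fin 2) F), u.1 = 1 + b • v → u ∈ H) {X : GL (Fin 2) F} (hX : X ∈ H)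
    (hXt : X.1.trace = 0) (hXd : ¬ IsSquare X.1.det) : H = ⊤ := by
  obtain ⟨P, hP⟩ := nil_frame hv0 hvt hvd
  have hS : ∀ y : GL (Fin 2) F, y.1.det = 1 → y ∈ H := by
    intro y hy
    have := gen_upper (H.comap (MulAut.conj P).toMonoidHom) (g := P⁻¹ * X * P)
      (y := P⁻¹ * y * P) ?_ ?_ ?_ ?_
    · simpa [mul_assoc] using this
    · intro b u hu
      rw [Subgroup.mem_comap]
      apply hU b
      have : P * u = P * u * P⁻¹ * P := by simp
      have h2 := congrArg Units.val this
      rw [Units.val_mul, Units.val_mul] at h2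
      have h3 : P.1 * u.1 = (1 + b • v) * P.1 := by
        have : u.1 = 1 + b • !![0, 1; 0, 0] := by
          rw [hu, ← Matrix.ext_iff]; simp [Fin.forall_fin_two]
        rw [this, mul_add, add_mul, mul_smul_comm, smul_mul_assoc, hP]; simp
      rw [h3] at h2
      exact (P.isUnit.mul_right_cancel h2).symm
    · simpa [mul_assoc] using hX
    · intro h0
      apply hXd
      set g := P⁻¹ * X * P with hg
      have hXP : X.1 * P.1 = P.1 * g.1 := by
        rw [← Units.val_mul, ← Units.val_mul, hg]; congr 1; simp [mul_assoc]
      have h3 : g.1 * !![0, 1; 0, 0] = (g.1 0 0) • !![0, 1; 0, 0] := by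
        rw [← Matrix.ext_iff]
        simp [Fin.forall_fin_two, Matrix.mul_apply, Fin.sum_univ_two, h0]
      have h4 : X.1 * v = g.1 0 0 • v := by
        apply P.isUnit.mul_right_cancel
        rw [mul_assoc, hP, ← mul_assoc, hXP, mul_assoc, h3, mul_smul_comm, smul_mul_assoc, hP]
      obtain ⟨_, h5⟩ := nil_facts hv0 hvt h4
      rw [h5, hXt]
      obtain ⟨i, hi⟩ := hm1
      refine ⟨i * g.1 0 0, ?_⟩
      linear_combination (g.1 0 0) ^ 2 * hi
    · rw [← hy]
      have := gl_conj_det P⁻¹ y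
      simpa using this
  have hSq : ∀ y : GL (Fin 2) F, IsSquare y.1.det → y ∈ H := by
    intro y hy
    obtain ⟨z, hz, e⟩ := gl_norm_det y hy
    have := H.mul_mem (H.inv_mem (hZ hz)) (hS _ e)
    simpa using this
  rw [eq_top_iff]
  intro y _
  by_cases hy : IsSquare y.1.det
  · exact hSq y hy
  · have := H.mul_mem (hSq (y * X) (by
      rw [Units.val_mul, Matrix.det_mul]; exact nsq_mul hch hy hXd)) (H.inv_mem hX)
    simpa using this

end FullSec

/-- a group with an inverted cyclic subgroup of index two is dihedral -/
lemma dihedral_of {G : Type} [Group G] (Cy : Subgroup G) [IsCyclic Cy] {m : ℕ}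
    (hm : Nat.card Cy = m) {t : G} (ht : t ∉ Cy) (ht2 : t * t = 1)
    (hinv : ∀ c ∈ Cy, t * c * t⁻¹ = c⁻¹) (hout : ∀ y, y ∉ Cy → t⁻¹ * y ∈ Cy) :
    Nonempty (G ≃* DihedralGroup m) := by
  subst hm
  let φ : Multiplicative (ZMod (Nat.card Cy)) ≃* Cy := zmodCyclicMulEquiv inferInstance
  let ψ : ZMod (Nat.card Cy) → G := fun i => (φ (Multiplicative.ofAdd i) : G)
  have ψadd : ∀ i j, ψ (i + j) = ψ i * ψ j := by
    intro i j; simp [ψ, ofAdd_add]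
  have ψneg : ∀ i, ψ (-i) = (ψ i)⁻¹ := by
    intro i; simp [ψ, ofAdd_neg]
  have ψsub : ∀ i j, ψ (i - j) = ψ i * (ψ j)⁻¹ := by
    intro i j; rw [sub_eq_add_neg, ψadd, ψneg]
  have ψmem : ∀ i, ψ i ∈ Cy := fun i => (φ (Multiplicative.ofAdd i)).2
  have ψinj : ∀ i j, ψ i = ψ j → i = j := by
    intro i j h
    have := φ.injective (Subtype.ext h)
    exact this
  have ψsurj : ∀ c ∈ Cy, ∃ i, ψ i = c := by
    intro c hc
    obtain ⟨i, hi⟩ := φ.surjective ⟨c, hc⟩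
    exact ⟨i.toAdd, congrArg Subtype.val hi⟩
  have ψcomm : ∀ i j, ψ i * ψ j = ψ j * ψ i := by
    intro i j; rw [← ψadd, ← ψadd, add_comm]
  have tinv : t⁻¹ = t := inv_eq_of_mul_eq_one_left ht2
  have tψ : ∀ i, ψ i * t = t * (ψ i)⁻¹ := by
    intro i
    have := hinv _ (ψmem i)
    rw [← this, tinv, ← mul_assoc, ← mul_assoc, ht2, one_mul]
  let f : DihedralGroup (Nat.card Cy) → G := fun d => match d with
    | DihedralGroup.r i => ψ i
    | DihedralGroup.sr i => t * ψ i
  have fr : ∀ i, f (DihedralGroup.r i) = ψ i := fun _ => rfl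
  have fsr : ∀ i, f (DihedralGroup.sr i) = t * ψ i := fun _ => rfl
  have fm : ∀ a b, f (a * b) = f a * f b := by
    rintro (i | i) (j | j)
    · rw [DihedralGroup.r_mul_r, fr, fr, fr, ψadd]
    · rw [DihedralGroup.r_mul_sr, fr, fsr, fsr, ψsub, ← mul_assoc (ψ i), tψ, mul_assoc, ← ψneg, ψcomm]
    · rw [DihedralGroup.sr_mul_r, fr, fsr, fsr, ψadd, mul_assoc]
    · rw [DihedralGroup.sr_mul_sr, fr, fsr, fsr, ψsub, mul_assoc, ← mul_assoc (ψ i), tψ,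
        ← mul_assoc, ← mul_assoc, ht2, one_mul, ← ψneg, ψcomm]
  have fb : Function.Bijective f := by
    constructor
    · rintro (i | i) (j | j) h
      · rw [fr, fr] at h; rw [ψinj _ _ h]
      · exfalso; rw [fr, fsr] at h
        apply ht
        have : t = ψ i * (ψ j)⁻¹ := by rw [h]; simp
        rw [this]; exact Cy.mul_mem (ψmem _) (Cy.inv_mem (ψmem _))
      · exfalso; rw [fr, fsr] at h
        apply ht
        have : t = ψ j * (ψ i)⁻¹ := by rw [← h]; simp
        rw [this]; exact Cy.mul_mem (ψmem _) (Cy.inv_mem (ψmem _))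
      · rw [fsr, fsr] at h; rw [ψinj _ _ (mul_left_cancel h)]
    · intro y
      by_cases hy : y ∈ Cy
      · obtain ⟨i, hi⟩ := ψsurj y hy
        exact ⟨DihedralGroup.r i, hi⟩
      · obtain ⟨i, hi⟩ := ψsurj _ (hout y hy)
        exact ⟨DihedralGroup.sr i, by rw [fsr, hi]; simp⟩
  exact ⟨(MulEquiv.ofBijective (⟨⟨f, by
    have := fm 1 1; simpa using this⟩, fm⟩ : DihedralGroup (Nat.card Cy) →* G) fb).symm⟩


section Cnt
open Finset
open scoped Classical

lemma card_filter_subgroup {K : Type} [Group K] [Fintype K] (Z : Subgroup K) :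
    #{y : K | y ∈ Z} = Nat.card Z := by
  rw [Nat.card_eq_fintype_card, Fintype.card_subtype]

lemma mem_centr {K : Type} [Group K] (g y : K) :
    y ∈ Subgroup.centralizer {g} ↔ Commute g y := by
  rw [Subgroup.mem_centralizer_singleton_iff, commute_iff_eq, eq_comm]

lemma cC_eq_card {K : Type} [Group K] [Fintype K] (g : K) :
    cC g = Nat.card (Subgroup.centralizer {g}) := by
  rw [← card_filter_subgroup, cC]
  congr 1; ext y; simp [mem_centr]

lemma card_ker_range {N A : Type} [Group N] [Finite N] [Group A] (f : N →* A) :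
    Nat.card N = Nat.card f.ker * Nat.card f.range := by
  rw [← Subgroup.card_mul_index f.ker, Subgroup.index_ker]

lemma exists_gen_range {N E : Type} [Group N] [Finite N] [Field E] (χ : N →* Eˣ) :
    ∃ s : N, ∀ y, ∃ k : ℤ, χ y = χ s ^ k := by
  have : Finite χ.range := Finite.of_surjective χ.rangeRestrict χ.rangeRestrict_surjective
  obtain ⟨⟨_, s, rfl⟩, hs⟩ := IsCyclic.exists_generator (α := χ.range)
  refine ⟨s, fun y => ?_⟩
  obtain ⟨k, hk⟩ := hs ⟨χ y, y, rfl⟩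
  exact ⟨k, (congrArg Subtype.val hk).symm⟩

lemma count_chi {K : Type} [Group K] [Fintype K] {Z : Subgroup K}
    (hZ : ∀ z ∈ Z, ∀ g, Commute z g) (g : K) (N : Subgroup K) {E : Type} [Field E]
    (χ : N →* Eˣ) (hker : ∀ y : N, χ y = 1 ↔ Commute g y.1) (hgN : ∀ y, Commute g y → y ∈ N)
    (hN : ∀ y, y ∈ N ↔ y ∈ nN g)
    (hs1 : ∀ s ∈ N, ¬ Commute g s → ∀ y, Commute s y → y ∈ N)
    (hs2 : ∀ s ∈ N, ¬ Commute g s → ∀ y, Commute s y → Commute g y → y ∈ Z) :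
    #(nN g) = cC g ∨ ∃ s ∈ N, ¬ Commute g s ∧
      #(nN g) * #{y : K | y ∈ Z} = cC g * cC s := by
  have cN : #(nN g) = Nat.card N := by
    rw [← card_filter_subgroup]; congr 1; ext y; simp [hN]
  have e1 : Nat.card χ.ker = cC g := by
    rw [cC_eq_card, ← Subgroup.card_map_of_injective (f := N.subtype) N.subtype_injective]
    congr 2
    ext y
    rw [mem_centr]
    constructor
    · rintro ⟨w, hw, rfl⟩
      exact (hker w).1 hw
    · intro h
      exact ⟨⟨y, hgN y h⟩, (hker _).2 h, rfl⟩
  have e2 := card_ker_range χ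
  obtain ⟨s, hs⟩ := exists_gen_range χ
  by_cases h1 : χ s = 1
  · left
    have : Nat.card χ.range = 1 := by
      rw [Subgroup.card_eq_one, MonoidHom.range_eq_bot_iff]
      ext y
      obtain ⟨k, hk⟩ := hs y
      rw [hk, h1]; simp
    rw [cN, e2, e1, this, mul_one]
  · right
    have hgs : ¬ Commute g s.1 := fun h => h1 ((hker s).2 h)
    refine ⟨s, s.2, hgs, ?_⟩
    have hle : Subgroup.centralizer {s.1} ≤ N := fun y hy => hs1 s s.2 hgs y ((mem_centr _ _).1 hy)
    let f := χ.comp (Subgroup.inclusion hle)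
    have e3 := card_ker_range f
    have e4 : f.range = χ.range := by
      apply le_antisymm
      · rintro _ ⟨y, rfl⟩; exact ⟨_, rfl⟩
      · rintro _ ⟨y, rfl⟩
        obtain ⟨k, hk⟩ := hs y
        have hsm : s.1 ∈ Subgroup.centralizer {s.1} := (mem_centr _ _).2 (Commute.refl _)
        refine ⟨⟨s.1, hsm⟩ ^ k, ?_⟩
        rw [map_zpow, hk]; rfl
    have e5 : Nat.card f.ker = Nat.card Z := by
      rw [← Subgroup.card_map_of_injective (f := (Subgroup.centralizer {s.1}).subtype)
        (Subgroup.subtype_injective _)]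
      congr 2
      ext y
      constructor
      · rintro ⟨w, hw, rfl⟩
        have : Commute g w.1 := (hker (Subgroup.inclusion hle w)).1 hw
        exact hs2 s s.2 hgs _ ((mem_centr _ _).1 w.2) this
      · intro h
        refine ⟨⟨y, (mem_centr _ _).2 (hZ y h _).symm⟩, ?_, rfl⟩
        exact (hker _).2 (hZ y h _).symm
    rw [cN, e2, card_filter_subgroup, cC_eq_card s.1, e3, e4, e5, e1]
    ring

end Cnt

section HU
open Finset
open scoped Classical
variable {F : Type} [Field F]

/-- elements of square determinant -/
def Ksq (F : Type) [Field F] : Subgroup (GL (Fin 2) F) where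
  carrier := {g | IsSquare g.1.det}
  mul_mem' := by
    intro a b ha hb
    change IsSquare (a * b).1.det
    rw [Units.val_mul, Matrix.det_mul]; exact IsSquare.mul ha hb
  one_mem' := by
    change IsSquare (1 : GL (Fin 2) F).1.det
    simp
  inv_mem' := by
    intro a ha
    change IsSquare (a⁻¹).1.det
    have h : (a⁻¹).1.det = (a.1.det)⁻¹ := by
      apply eq_inv_of_mul_eq_one_left
      rw [← Matrix.det_mul, ← Units.val_mul]; simp
    rw [h]
    exact IsSquare.inv ha

lemma mem_Ksq (g : GL (Fin 2) F) : g ∈ Ksq F ↔ IsSquare g.1.det := Iff.rfl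

lemma mat2_nonzero_of {v : Matrix (Fin 2) (Fin 2) F} {l m : F} (hv : v ≠ 0) (h : l • v = m • v) :
    l = m := smul_left_injective F hv h

lemma hU_lemma [Fintype F] {p n : ℕ} (hp : Nat.Prime p) (hodd : Odd p)
    (hF : Fintype.card F = p ^ 2 ^ n) (hch : ringChar F ≠ 2) (h2 : (2 : F) ≠ 0)
    (hm1 : IsSquare (-1 : F)) (H : Subgroup (GL (Fin 2) F)) [Fintype H]
    (hZH : Subgroup.center (GL (Fin 2) F) ≤ H) (hH : H ≠ ⊤) {X : GL (Fin 2) F} (hX : X ∈ H)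
    (hXt : X.1.trace = 0) (hXd : ¬ IsSquare X.1.det) (g : H)
    (hg : g ∉ (Subgroup.center (GL (Fin 2) F)).subgroupOf H) (hd : dsc g.1.1 = 0) :
    (∀ y : H, Commute g y → y ∈ (Ksq F).subgroupOf H) ∧
      3 * #{y : H | y ∈ (Subgroup.center (GL (Fin 2) F)).subgroupOf H} ≤ cC g ∧
     (#(nN g) = cC g ∨ ∃ g' ∉ (Subgroup.center (GL (Fin 2) F)).subgroupOf H,
      (∀ y, Commute g' y → y ∈ (Ksq F).subgroupOf H) ∧ dsc g'.1.1 ≠ 0 ∧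
      #(nN g) * #{y : H | y ∈ (Subgroup.center (GL (Fin 2) F)).subgroupOf H} =
        cC g * cC g') := by
  set Z := (Subgroup.center (GL (Fin 2) F)).subgroupOf H with hZdef
  have memZ : ∀ y : H, y ∈ Z ↔ IsSc y.1.1 := by
    intro y; rw [hZdef, Subgroup.mem_subgroupOf, gl_center_iff]
  have hZ : ∀ z ∈ Z, ∀ g, Commute z g := by
    intro z hz g
    have := (Subgroup.mem_center_iff.1 (Subgroup.mem_subgroupOf.1 hz)) g.1
    exact Subtype.ext this.symm
  have cm : ∀ a b : H, Commute a b ↔ a.1.1 * b.1.1 = b.1.1 * a.1.1 := by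
    intro a b
    rw [← gl_commute_iff, commute_iff_eq, commute_iff_eq, ← Subtype.coe_inj]; rfl
  have hCT : ∀ a b c : H, b ∉ Z → Commute a b → Commute b c → Commute a c := by
    intro a b c hb h1 h2
    rw [cm] at *
    exact mat2_CT (fun h => hb ((memZ b).2 h)) h1 h2
  have hgs : ¬ IsSc g.1.1 := fun h => hg ((memZ g).2 h)
  have h4 : (4 : F) ≠ 0 := by
    have : (4 : F) = 2 * 2 := by norm_num
    rw [this]; exact mul_ne_zero h2 h2
  set A := g.1.1 with hA
  set τ := A.trace / 2 with hτ
  have htr : A.trace = 2 * τ := by rw [hτ]; field_simp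
  have hdet : A.det = τ ^ 2 := by
    rw [dsc_eq, htr] at hd
    apply mul_left_cancel₀ h4
    linear_combination -hd
  have hτ0 : τ ≠ 0 := by
    intro h0
    apply gl_det_ne g.1
    rw [← hA, hdet, h0]; ring
  obtain ⟨v, hv⟩ : ∃ v : Matrix (Fin 2) (Fin 2) F, A = τ • 1 + v := ⟨A - τ • 1, by simp⟩
  have hv0 : v ≠ 0 := by
    rintro rfl
    apply hgs
    rw [hv]; simp [IsSc]
  have hvt : v.trace = 0 := by
    have := htr
    rw [hv] at this
    simp at this
    linear_combination this
  have hvd : v.det = 0 := by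
    have h := dsc_span A (-τ) 1
    have e : (-τ) • (1 : Matrix (Fin 2) (Fin 2) F) + (1 : F) • A = v := by rw [hv]; simp
    rw [e, hd, dsc_eq, hvt] at h
    have : 4 * v.det = 0 := by linear_combination -h
    simpa [h4] using this
  have hvv : v * v = 0 := by rw [mat2_CH, hvt, hvd]; simp
  have cmv : ∀ y : H, Commute g y ↔ y.1.1 * v = v * y.1.1 := by
    intro y
    rw [cm, ← hA, hv, add_mul, mul_add]
    simp only [smul_mul_assoc, mul_smul_comm, one_mul, mul_one]
    rw [add_right_inj, eq_comm]
  have fact1 : ∀ y : H, Commute g y → y ∈ (Ksq F).subgroupOf H := by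
    intro y hy
    rw [Subgroup.mem_subgroupOf, mem_Ksq]
    obtain ⟨α, β, e⟩ := mat2_span hgs ((cm _ _).1 hy)
    have h := dsc_span A α β
    rw [← e, hd, dsc_eq] at h
    refine ⟨y.1.1.trace / 2, ?_⟩
    field_simp
    linear_combination -h
  refine ⟨fact1, ?_, ?_⟩
  · obtain ⟨d, hd1, hd2⟩ := cC_dvd hZ hg
    rcases Nat.lt_or_ge d 3 with h3 | h3
    · exfalso
      have : d = 2 := by omega
      subst this
      have h := pow_mem_of_cC hZ hd1 (Commute.refl g)
      rw [memZ] at h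
      have h5 := mat2_sq hgs (by simpa [pow_two] using h)
      rw [htr] at h5
      rcases mul_eq_zero.1 h5 with h6 | h6
      · exact h2 h6
      · exact hτ0 h6
    · rw [hd1]; exact Nat.mul_le_mul_right _ h3
  -- the normaliser
  have nf : ∀ (h : H) (l : F), h.1.1 * v = l • v →
      v * h.1.1 = (h.1.1.trace - l) • v ∧ h.1.1.det = l * (h.1.1.trace - l) ∧ l ≠ 0 ∧
        h.1.1.trace - l ≠ 0 := by
    intro h l e
    obtain ⟨e1, e2⟩ := nil_facts hv0 hvt e
    have := gl_det_ne h.1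
    rw [e2] at this
    exact ⟨e1, e2, left_ne_zero_of_mul this, right_ne_zero_of_mul this⟩
  let N : Subgroup H :=
    { carrier := {h | ∃ l : F, h.1.1 * v = l • v}
      mul_mem' := by
        rintro a b ⟨l, hl⟩ ⟨m, hm⟩
        refine ⟨l * m, ?_⟩
        change (a.1.1 * b.1.1) * v = _
        rw [mul_assoc, hm, mul_smul_comm, hl, smul_smul, mul_comm]
      one_mem' := ⟨1, by simp⟩
      inv_mem' := by
        rintro a ⟨l, hl⟩
        obtain ⟨_, _, hl0, _⟩ := nf a l hl
        refine ⟨l⁻¹, ?_⟩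
        apply a.1.isUnit.mul_left_cancel
        have : a.1.1 * (a⁻¹).1.1 = 1 := by
          rw [← Units.val_mul]; simp
        change a.1.1 * ((a⁻¹).1.1 * v) = _
        rw [← mul_assoc, this, mul_smul_comm]
        change _ = l⁻¹ • (a.1.1 * v)
        rw [hl, smul_smul, inv_mul_cancel₀ hl0]; simp }
  have memN : ∀ h : H, h ∈ N ↔ ∃ l : F, h.1.1 * v = l • v := fun h => Iff.rfl
  have hN : ∀ h : H, h ∈ N ↔ h ∈ nN g := by
    intro h
    have hW : ∀ W : H, W = h * g * h⁻¹ → W.1.1 * h.1.1 = h.1.1 * A := by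
      rintro W rfl
      rw [hA, ← Units.val_mul, ← Units.val_mul]
      simp
    rw [nN, Finset.mem_filter, memN]
    constructor
    · rintro ⟨l, hl⟩
      refine ⟨Finset.mem_univ _, ?_⟩
      obtain ⟨e1, e2, e3, e4⟩ := nf h l hl
      generalize hw : h * g * h⁻¹ = W
      have e5 := hW W hw.symm
      have e6 : W.1.1 = τ • 1 + (l / (h.1.1.trace - l)) • v := by
        apply h.1.isUnit.mul_right_cancel
        change W.1.1 * h.1.1 = _ * h.1.1
        rw [e5, hv, mul_add, hl, add_mul, smul_mul_assoc, smul_mul_assoc, e1, smul_smul]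
        field_simp
        simp
      rw [Commute.symm_iff, cmv, e6]
      simp [add_mul, mul_add]
    · rintro ⟨_, hc⟩
      have t1 := gl_conj_trace h.1 g.1
      generalize hw : h * g * h⁻¹ = W at hc
      have hw' : h.1 * g.1 * h.1⁻¹ = W.1 := congrArg Subtype.val hw
      rw [hw', ← hA] at t1
      obtain ⟨α, β, e⟩ := mat2_span hgs ((cm _ _).1 hc.symm)
      have e5 := hW W hw.symm
      apply nil_conj h2 hvt hvd (c := β)
      have t2 : α + β * τ = τ := by
        rw [e, htr] at t1
        simp [Matrix.trace_add, Matrix.trace_smul, htr] at t1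
        apply mul_left_cancel₀ h2
        linear_combination t1
      have e7 : W.1.1 = τ • 1 + β • v := by
        rw [e, hv, smul_add, smul_smul, ← add_assoc, ← add_smul, t2]
      rw [e7, hv, add_mul, mul_add, smul_mul_assoc, mul_smul_comm, one_mul, mul_one] at e5
      rw [← add_left_cancel e5, smul_mul_assoc]
  obtain ⟨χ, hχ⟩ := exists_chi (N := N) (H.subtype.comp N.subtype) (RingHom.id F) hv0 (by
    intro y
    obtain ⟨l, hl⟩ := (memN _).1 y.2
    exact ⟨l, by simpa using hl⟩)
  have hχ' : ∀ (y : N) (l : F), y.1.1.1 * v = l • v → (χ y : F) * y.1.1.1.det = l ^ 2 := by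
    intro y l hl
    have := hχ y l (by simpa using hl)
    simpa using this
  have hker : ∀ y : N, χ y = 1 ↔ Commute g y.1 := by
    intro y
    obtain ⟨l, hl⟩ := (memN _).1 y.2
    obtain ⟨e1, e2, e3, e4⟩ := nf y l hl
    have e5 := hχ' y l hl
    rw [cmv, hl, e1]
    constructor
    · intro h1
      rw [h1, Units.val_one, one_mul, e2, pow_two] at e5
      rw [mul_left_cancel₀ e3 e5]
    · intro h1
      have h3 := mat2_nonzero_of hv0 h1
      rw [e2, ← h3, ← pow_two] at e5
      apply Units.ext
      apply mul_right_cancel₀ (pow_ne_zero 2 e3)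
      rw [e5]; simp
  have hgN : ∀ y, Commute g y → y ∈ N := by
    intro y hy
    rw [hN, nN, Finset.mem_filter]
    refine ⟨Finset.mem_univ _, ?_⟩
    have : y * g * y⁻¹ = g := by rw [← hy.eq]; simp
    rw [this]
    exact Commute.refl g
  have hnZ : ∀ s : H, ¬ Commute g s → s ∉ Z := fun s hs h => hs (hZ s h g).symm
  have hs1 : ∀ s ∈ N, ¬ Commute g s → ∀ y, Commute s y → y ∈ N := by
    intro s hs hns y hy
    obtain ⟨l, hl⟩ := (memN _).1 hs
    obtain ⟨α, β, e⟩ := mat2_span (fun h => hnZ s hns ((memZ s).2 h)) ((cm _ _).1 hy)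
    rw [memN]
    refine ⟨α + β * l, ?_⟩
    rw [e, add_mul, smul_mul_assoc, smul_mul_assoc, hl, one_mul, smul_smul, add_smul]
  have hs2 : ∀ s ∈ N, ¬ Commute g s → ∀ y, Commute s y → Commute g y → y ∈ Z := by
    intro s hs hns y h1 h3
    by_contra hy
    exact hns (hCT g y s hy h3 h1.symm)
  rcases count_chi hZ g N χ hker hgN hN hs1 hs2 with h | ⟨s, hsN, hns, hcount⟩
  · exact Or.inl h
  right
  refine ⟨s, hnZ s hns, ?_, ?_, hcount⟩
  · intro r hr
    by_contra hrd
    rw [Subgroup.mem_subgroupOf, mem_Ksq] at hrd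
    obtain ⟨l, hl⟩ := (memN _).1 (hs1 s hsN hns r hr)
    obtain ⟨e1, e2, e3, e4⟩ := nf r l hl
    set m := r.1.1.trace - l with hm
    apply hH
    have hζ : ¬ IsSquare (l / m) := by
      rintro ⟨c, hc⟩
      apply hrd
      refine ⟨c * m, ?_⟩
      rw [e2]
      field_simp at hc
      linear_combination m * hc
    have hex : ∀ b : F, ∃ u : GL (Fin 2) F, u.1 = 1 + b • v := by
      intro b
      apply gl_exists
      have : (1 + b • v).det = 1 + b * v.trace + b ^ 2 * v.det := by
        simp [Matrix.det_fin_two, Matrix.trace_fin_two]; ring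
      rw [this, hvt, hvd]; simp
    let I : AddSubgroup F :=
      { carrier := {b | ∀ u : GL (Fin 2) F, u.1 = 1 + b • v → u ∈ H}
        zero_mem' := by
          intro u hu
          have : u = 1 := by apply Units.ext; rw [hu]; simp
          rw [this]; exact H.one_mem
        add_mem' := by
          intro a b ha hb u hu
          obtain ⟨u1, h1⟩ := hex a
          obtain ⟨u2, h3⟩ := hex b
          have : u = u1 * u2 := by
            apply Units.ext
            rw [hu, Units.val_mul, h1, h3, add_mul, mul_add, mul_add, smul_mul_smul_comm, hvv,
              add_smul]
            simp; abel
          rw [this]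
          exact H.mul_mem (ha _ h1) (hb _ h3)
        neg_mem' := by
          intro a ha u hu
          obtain ⟨u1, h1⟩ := hex a
          have : u = u1⁻¹ := by
            apply eq_inv_of_mul_eq_one_left
            apply Units.ext
            rw [Units.val_mul, hu, h1, add_mul, mul_add, mul_add, smul_mul_smul_comm, hvv]
            simp
          rw [this]
          exact H.inv_mem (ha _ h1) }
    have memI : ∀ b, b ∈ I ↔ ∀ u : GL (Fin 2) F, u.1 = 1 + b • v → u ∈ H := fun b => Iff.rfl
    have hI1 : ∀ b ∈ I, l / m * b ∈ I := by
      intro b hb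
      rw [memI] at hb ⊢
      intro u hu
      obtain ⟨u1, h1⟩ := hex b
      have : u = r.1 * u1 * r.1⁻¹ := by
        rw [eq_mul_inv_iff_mul_eq]
        apply Units.ext
        rw [Units.val_mul, Units.val_mul, hu, h1, add_mul, mul_add, mul_smul_comm, hl,
          smul_mul_assoc, e1, smul_smul, smul_smul]
        field_simp
        simp
      rw [this]
      exact H.mul_mem (H.mul_mem r.2 (hb _ h1)) (H.inv_mem r.2)
    have hI2 : τ⁻¹ ∈ I := by
      rw [memI]
      intro u hu
      obtain ⟨z, hz, ez⟩ := gl_scalar hτ0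
      have : u = z⁻¹ * g.1 := by
        rw [eq_inv_mul_iff_mul_eq]
        apply Units.ext
        rw [Units.val_mul, hu, ez, ← hA, hv]
        simp [mul_add, smul_smul, hτ0]
      rw [this]
      exact H.mul_mem (H.inv_mem (hZH hz)) g.2
    have hIall := subfield_full hp hodd hF hζ I hI1 hI2 (inv_ne_zero hτ0)
    exact gl_full hch hm1 H hZH hv0 hvt hvd (fun b => (memI b).1 (hIall b)) hX hXt hXd
  · intro h0
    apply hns
    obtain ⟨l, hl⟩ := (memN _).1 hsN
    rw [cmv]
    exact nil_dsc hv0 hvt hl h0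

end HU


section H4
open Finset
open scoped Classical
variable {F : Type} [Field F]

lemma h4_lemma (h2 : (2 : F) ≠ 0) (hsq2 : IsSquare (2 : F)) (H : Subgroup (GL (Fin 2) F))
    [Fintype H]
    (hI : ((Ksq F).subgroupOf H).index = 2)
    (hZ0 : (Subgroup.center (GL (Fin 2) F)).subgroupOf H ≤ (Ksq F).subgroupOf H)
    (hZ : ∀ z ∈ (Subgroup.center (GL (Fin 2) F)).subgroupOf H, ∀ g, Commute z g)
    (g : H) (hg : g ∉ (Subgroup.center (GL (Fin 2) F)).subgroupOf H)
    (hu : ∃ y, Commute g y ∧ y ∉ (Ksq F).subgroupOf H) :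
    cC g ≠ 4 * #{y : H | y ∈ (Subgroup.center (GL (Fin 2) F)).subgroupOf H} := by
  intro hc
  set Z := (Subgroup.center (GL (Fin 2) F)).subgroupOf H with hZdef
  set K0 := (Ksq F).subgroupOf H with hK0
  have memZ : ∀ y : H, y ∈ Z ↔ IsSc y.1.1 := by
    intro y; rw [hZdef, Subgroup.mem_subgroupOf, gl_center_iff]
  have cm : ∀ a b : H, Commute a b ↔ a.1.1 * b.1.1 = b.1.1 * a.1.1 := by
    intro a b
    rw [← gl_commute_iff, commute_iff_eq, commute_iff_eq, ← Subtype.coe_inj]; rfl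
  have hgs : ¬ IsSc g.1.1 := fun h => hg ((memZ g).2 h)
  obtain ⟨w, hgw, hwo, hwt⟩ : ∃ w : H, Commute g w ∧ w ∉ K0 ∧ w.1.1.trace ≠ 0 := by
    by_contra! hcon
    have hcard := (cC_outer hZ hZ0 hI hu).1
    obtain ⟨u, hgu, huo⟩ := hu
    have hut := hcon u hgu huo
    have hus : ¬ IsSc u.1.1 := fun h => huo (hZ0 ((memZ u).2 h))
    have hle : #{y : H | Commute g y ∧ y ∉ K0} ≤ #{y : H | y ∈ Z} := by
      apply Finset.card_le_card_of_injOn (fun y => u⁻¹ * y)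
      · intro y hy
        simp only [Finset.coe_filter, Finset.mem_univ, true_and, Set.mem_setOf_eq] at hy ⊢
        have hyt := hcon y hy.1 hy.2
        have huy : u.1.1 * y.1.1 = y.1.1 * u.1.1 :=
          mat2_CT hgs ((cm _ _).1 hgu.symm) ((cm _ _).1 hy.1)
        obtain ⟨α, β, e⟩ := mat2_span hus huy
        rw [e] at hyt
        simp [Matrix.trace_add, Matrix.trace_smul, hut, h2] at hyt
        rw [hyt, zero_smul, zero_add] at e
        rw [memZ]
        have : (u⁻¹ * y).1.1 = β • 1 := by
          apply u.1.isUnit.mul_left_cancel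
          change u.1.1 * _ = u.1.1 * _
          rw [← Units.val_mul, ← Subgroup.coe_mul, mul_inv_cancel_left, e]
          simp
        rw [this]
        simp [IsSc]
      · intro a _ b _ h
        exact mul_left_cancel h
    have hpos : 0 < #{y : H | y ∈ Z} := Finset.card_pos.2 ⟨1, by simp [Z.one_mem]⟩
    omega
  have h4 := pow_mem_of_cC hZ hc hgw
  rw [memZ] at h4
  have hws : ¬ IsSc w.1.1 := fun h => hwo (hZ0 ((memZ w).2 h))
  have h5 := mat2_four hws (by simpa using h4) hwt
  apply hwo
  rw [hK0, Subgroup.mem_subgroupOf, mem_Ksq]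
  obtain ⟨c, hcc⟩ := hsq2
  have hc0 : c ≠ 0 := by rintro rfl; exact h2 (by simpa using hcc)
  refine ⟨w.1.1.trace / c, ?_⟩
  field_simp
  rw [h5, hcc]; ring

lemma key_lemma [Fintype F] {p n : ℕ} (hp : Nat.Prime p) (hodd : Odd p)
    (hF : Fintype.card F = p ^ 2 ^ n) (hch : ringChar F ≠ 2) (h2 : (2 : F) ≠ 0)
    (hm1 : IsSquare (-1 : F)) (hsq2 : IsSquare (2 : F)) (H : Subgroup (GL (Fin 2) F))
    (hZH : Subgroup.center (GL (Fin 2) F) ≤ H) (hH : H ≠ ⊤) {X : GL (Fin 2) F} (hX : X ∈ H)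
    (hXt : X.1.trace = 0) (hXd : ¬ IsSquare X.1.det) :
    ∃ g : GL (Fin 2) F, dsc g.1 ≠ 0 ∧ ∀ h ∈ H, Commute (h * g * h⁻¹) g := by
  have : Fintype H := Fintype.ofFinite _
  set Z := (Subgroup.center (GL (Fin 2) F)).subgroupOf H with hZdef
  set K0 := (Ksq F).subgroupOf H with hK0
  have memZ : ∀ y : H, y ∈ Z ↔ IsSc y.1.1 := by
    intro y; rw [hZdef, Subgroup.mem_subgroupOf, gl_center_iff]
  have hZ : ∀ z ∈ Z, ∀ g, Commute z g := by
    intro z hz g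
    have := (Subgroup.mem_center_iff.1 (Subgroup.mem_subgroupOf.1 hz)) g.1
    exact Subtype.ext this.symm
  have cm' : ∀ a b : H, Commute a b ↔ Commute a.1 b.1 := by
    intro a b
    rw [commute_iff_eq, commute_iff_eq, ← Subtype.coe_inj]; rfl
  have cm : ∀ a b : H, Commute a b ↔ a.1.1 * b.1.1 = b.1.1 * a.1.1 := by
    intro a b
    rw [← gl_commute_iff, cm']
  have hCT : ∀ a b c : H, b ∉ Z → Commute a b → Commute b c → Commute a c := by
    intro a b c hb h1 h2
    rw [cm] at *
    exact mat2_CT (fun h => hb ((memZ b).2 h)) h1 h2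
  have hZ0 : Z ≤ K0 := by
    intro z hz
    obtain ⟨a, b, c⟩ := (memZ z).1 hz
    rw [hK0, Subgroup.mem_subgroupOf, mem_Ksq, Matrix.det_fin_two, a, c]
    exact ⟨z.1.1 1 1, by ring⟩
  have hI : K0.index = 2 := by
    rw [Subgroup.index_eq_two_iff]
    refine ⟨⟨X, hX⟩, fun b => ?_⟩
    rw [hK0, Subgroup.mem_subgroupOf, Subgroup.mem_subgroupOf, mem_Ksq, mem_Ksq]
    by_cases hb : IsSquare b.1.1.det
    · right
      refine ⟨hb, fun h => hXd ?_⟩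
      have := IsSquare.div h hb
      have hne := gl_det_ne b.1
      change IsSquare ((b.1.1 * X.1).det / _) at this
      rw [Matrix.det_mul] at this
      field_simp at this
      exact this
    · left
      refine ⟨?_, hb⟩
      change IsSquare ((b.1.1 * X.1).det)
      rw [Matrix.det_mul]
      exact nsq_mul hch hb hXd
  obtain ⟨g, hg, hgS, hcard⟩ := abstract_main hZ hZ0 hI hCT (fun g => dsc g.1.1 ≠ 0) (by
      intro g hg hS
      apply nN_card_of
      intro u w hu hw hnu hnw
      rw [cm'] at hu hw hnu hnw
      apply Subtype.ext
      apply Units.ext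
      exact (gl_flip h2 hS hu hnu).trans (gl_flip h2 hS hw hnw).symm) (by
      intro g hg hS
      exact hU_lemma hp hodd hF hch h2 hm1 H hZH hH hX hXt hXd g hg (not_not.1 hS))
    (fun g hg hu => h4_lemma h2 hsq2 H hI hZ0 hZ g hg hu)
  refine ⟨g.1, hgS, fun h hh => ?_⟩
  have : nN g = Finset.univ := by
    rw [← Finset.card_eq_iff_eq_univ, hcard]
  have h3 : (⟨h, hh⟩ : H) ∈ nN g := by rw [this]; exact Finset.mem_univ _
  rw [nN, Finset.mem_filter] at h3
  exact (cm' _ _).1 h3.2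

end H4


section Fin
variable {F : Type} [Field F]

lemma det_span (A : Matrix (Fin 2) (Fin 2) F) (α β : F) :
    (α • (1 : Matrix (Fin 2) (Fin 2) F) + β • A).det =
      α ^ 2 + α * β * A.trace + β ^ 2 * A.det := by
  simp [Matrix.det_fin_two, Matrix.trace_fin_two]; ring

lemma not_sc_of_dsc {A : Matrix (Fin 2) (Fin 2) F} (hA : dsc A ≠ 0) : ¬ IsSc A := by
  rintro ⟨a, b, c⟩
  apply hA; simp [dsc, a, b, c]

lemma sc_one (a : F) : IsSc (a • (1 : Matrix (Fin 2) (Fin 2) F)) := by simp [IsSc]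

lemma span_inj {A : Matrix (Fin 2) (Fin 2) F} (hA : ¬ IsSc A) {α β α' β' : F}
    (h : α • (1 : Matrix (Fin 2) (Fin 2) F) + β • A = α' • (1 : Matrix (Fin 2) (Fin 2) F) + β' • A) :
    α = α' ∧ β = β' := by
  have hb : β = β' := by
    by_contra hne
    apply hA
    have hs : β - β' ≠ 0 := sub_ne_zero.2 hne
    rw [← Matrix.ext_iff] at h
    simp [Fin.forall_fin_two] at h
    obtain ⟨⟨h1, h2⟩, h3, h4⟩ := h
    refine ⟨?_, ?_, ?_⟩
    · exact h2.resolve_left hne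
    · exact h3.resolve_left hne
    · apply mul_left_cancel₀ hs
      linear_combination h1 - h4
  subst hb
  have := add_right_cancel h
  rw [← Matrix.ext_iff] at this
  simp [Fin.forall_fin_two] at this
  exact ⟨this, rfl⟩

lemma card_center [Fintype F] :
    Nat.card (Subgroup.center (GL (Fin 2) F)) = Fintype.card F - 1 := by
  rw [← Nat.card_eq_fintype_card, ← Nat.card_units]
  symm
  choose f hf1 hf2 using fun a : Fˣ => gl_scalar (F := F) (a := (a : F)) a.ne_zero
  apply Nat.card_eq_of_bijective (fun a => (⟨f a, hf1 a⟩ : Subgroup.center (GL (Fin 2) F)))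
  constructor
  · intro a b h
    have h1 : (f a).1 = (f b).1 := congrArg (fun z => z.1.1) h
    rw [hf2, hf2] at h1
    apply Units.ext
    have := congrFun (congrFun h1 0) 0
    simpa using this
  · rintro ⟨z, hz⟩
    obtain ⟨a, b, c⟩ := (gl_center_iff z).1 hz
    have hd := gl_det_ne z
    rw [Matrix.det_fin_two, a] at hd
    have h0 : z.1 0 0 ≠ 0 := by
      intro h; apply hd; rw [h]; ring
    refine ⟨Units.mk0 _ h0, ?_⟩
    apply Subtype.ext
    apply Units.ext
    change (f _).1 = z.1
    rw [hf2, ← Matrix.ext_iff]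
    simp [Fin.forall_fin_two, a, b, c]

lemma card_centr_aux [Fintype F] {g : GL (Fin 2) F} (hg : ¬ IsSc g.1) :
    Nat.card (Subgroup.centralizer {g}) =
      Nat.card {x : F × F // (x.1 • (1 : Matrix (Fin 2) (Fin 2) F) + x.2 • g.1).det ≠ 0} := by
  symm
  have h := fun x : {x : F × F // (x.1 • (1 : Matrix (Fin 2) (Fin 2) F) + x.2 • g.1).det ≠ 0} =>
    gl_exists _ x.2
  choose f hf using h
  have hm : ∀ x, f x ∈ Subgroup.centralizer {g} := by
    intro x
    rw [mem_centr, gl_commute_iff, hf]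
    simp [mul_add, add_mul]
  apply Nat.card_eq_of_bijective (fun x => (⟨f x, hm x⟩ : Subgroup.centralizer {g}))
  constructor
  · intro a b h
    have h1 : (f a).1 = (f b).1 := congrArg (fun z => z.1.1) h
    rw [hf, hf] at h1
    obtain ⟨e1, e2⟩ := span_inj hg h1
    exact Subtype.ext (Prod.ext e1 e2)
  · rintro ⟨y, hy⟩
    rw [mem_centr, gl_commute_iff] at hy
    obtain ⟨α, β, e⟩ := mat2_span hg hy
    refine ⟨⟨(α, β), ?_⟩, ?_⟩
    · simp only
      rw [← e]; exact gl_det_ne y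
    · apply Subtype.ext
      apply Units.ext
      change (f _).1 = y.1
      rw [hf]
      exact e.symm

lemma card_centr_nonsq [Fintype F] {g : GL (Fin 2) F} (hg : ¬ IsSquare (dsc g.1)) :
    Nat.card (Subgroup.centralizer {g}) = Fintype.card F ^ 2 - 1 := by
  classical
  have hg0 : dsc g.1 ≠ 0 := by intro h; rw [h] at hg; exact hg IsSquare.zero
  rw [card_centr_aux (not_sc_of_dsc hg0)]
  have : ∀ x : F × F, (x.1 • (1 : Matrix (Fin 2) (Fin 2) F) + x.2 • g.1).det ≠ 0 ↔ x ≠ 0 := by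
    rintro ⟨α, β⟩
    simp only
    rw [det_span, not_iff_not]
    constructor
    · intro h
      have hβ : β = 0 := by
        by_contra hβ
        apply hg
        refine ⟨(2 * α + β * g.1.trace) / β, ?_⟩
        rw [dsc_eq]
        field_simp
        linear_combination (-4) * h
      subst hβ
      have : α = 0 := by simpa using h
      rw [this]; rfl
    · intro h
      have h1 : α = 0 := congrArg Prod.fst h
      have h2 : β = 0 := congrArg Prod.snd h
      rw [h1, h2]; ring
  rw [Nat.card_congr (Equiv.subtypeEquivRight this), Nat.card_eq_fintype_card,
    Fintype.card_subtype_compl, Fintype.card_prod, pow_two]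
  simp

lemma card_centr_sq [Fintype F] (h2 : (2 : F) ≠ 0) {g : GL (Fin 2) F} (hg : IsSquare (dsc g.1))
    (hg0 : dsc g.1 ≠ 0) :
    Nat.card (Subgroup.centralizer {g}) = (Fintype.card F - 1) ^ 2 := by
  obtain ⟨r, hr⟩ := hg
  have hr0 : r ≠ 0 := by rintro rfl; exact hg0 (by simpa using hr)
  rw [card_centr_aux (not_sc_of_dsc hg0)]
  set l := (g.1.trace + r) / 2 with hl
  set m := (g.1.trace - r) / 2 with hm
  rw [dsc_eq] at hr
  have hlm : l - m = r := by rw [hl, hm]; field_simp; ring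
  have hdet : ∀ α β : F, (α • (1 : Matrix (Fin 2) (Fin 2) F) + β • g.1).det =
      (α + β * l) * (α + β * m) := by
    intro α β
    rw [det_span, hl, hm]
    field_simp
    linear_combination - β ^ 2 * hr
  have hcard : Nat.card (Fˣ × Fˣ) = (Fintype.card F - 1) ^ 2 := by
    rw [Nat.card_prod, Nat.card_units, Nat.card_eq_fintype_card, pow_two]
  rw [← hcard]
  have hne : ∀ x : {x : F × F // (x.1 • (1 : Matrix (Fin 2) (Fin 2) F) + x.2 • g.1).det ≠ 0},
      x.1.1 + x.1.2 * l ≠ 0 ∧ x.1.1 + x.1.2 * m ≠ 0 := by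
    rintro ⟨x, hx⟩
    rw [hdet] at hx
    exact ⟨left_ne_zero_of_mul hx, right_ne_zero_of_mul hx⟩
  apply Nat.card_eq_of_bijective (fun x => (Units.mk0 _ (hne x).1, Units.mk0 _ (hne x).2))
  constructor
  · rintro ⟨⟨α, β⟩, hx⟩ ⟨⟨α', β'⟩, hy⟩ h
    have e1 : α + β * l = α' + β' * l := congrArg (fun z => (z.1 : F)) h
    have e2 : α + β * m = α' + β' * m := congrArg (fun z => (z.2 : F)) h
    have e3 : β = β' := by
      apply mul_right_cancel₀ hr0
      rw [← hlm]
      linear_combination e1 - e2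
    subst e3
    have e4 : α = α' := add_right_cancel e1
    subst e4
    rfl
  · rintro ⟨a, b⟩
    have ea : (a - (a - b) / r * l : F) + (a - b) / r * l = a := by ring
    have eb : (a - (a - b) / r * l : F) + (a - b) / r * m = b := by
      have : m = l - r := by rw [← hlm]; ring
      rw [this]; field_simp; ring
    refine ⟨⟨(a - (a - b) / r * l, (a - b) / r), ?_⟩, ?_⟩
    · simp only
      rw [hdet, ea, eb]
      exact mul_ne_zero a.ne_zero b.ne_zero
    · ext
      · exact ea
      · exact eb

/-- the centraliser is cyclic modulo scalars -/
lemma centr_gen [Fintype F] (h2 : (2 : F) ≠ 0) {g : GL (Fin 2) F} (hg : dsc g.1 ≠ 0) :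
    ∃ s : Subgroup.centralizer {g}, ∀ y : Subgroup.centralizer {g}, ∃ k : ℤ,
      y.1 * (s.1 ^ k)⁻¹ ∈ Subgroup.center (GL (Fin 2) F) := by
  have hs := not_sc_of_dsc hg
  obtain ⟨E, _, i, hEsq⟩ : ∃ (E : Type) (_ : Field E) (i : F →+* E), ∀ x, ∃ r, i x = r * r :=
    ⟨AlgebraicClosure F, inferInstance, algebraMap F _,
      fun x => IsAlgClosed.exists_eq_mul_self _⟩
  obtain ⟨r, hr⟩ := hEsq (dsc g.1)
  have hr0 : r ≠ 0 := by
    rintro rfl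
    rw [mul_zero, map_eq_zero] at hr
    exact hg hr
  have h2E : (2 : E) ≠ 0 := by
    have : i 2 ≠ 0 := (map_ne_zero i).2 h2
    rwa [map_ofNat] at this
  set A := g.1.map i with hA
  have htr : A.trace = i g.1.trace := by
    rw [hA, Matrix.trace_fin_two, Matrix.trace_fin_two, map_add]; rfl
  have hdt : A.det = i g.1.det := by
    rw [hA, Matrix.det_fin_two, Matrix.det_fin_two, map_sub, map_mul, map_mul]; rfl
  set l := (A.trace + r) / 2 with hl
  set m := (A.trace - r) / 2 with hm
  rw [dsc_eq, map_sub, map_pow, map_mul, ← htr, ← hdt] at hr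
  have hr' : A.trace ^ 2 - 4 * A.det = r * r := by rwa [map_ofNat] at hr
  have hlm : l - m = r := by rw [hl, hm]; field_simp; ring
  have hlpm : l + m = A.trace := by rw [hl, hm]; field_simp; ring
  have hlmm : l * m = A.det := by
    rw [hl, hm]; field_simp; linear_combination hr'
  let v : Matrix (Fin 2) (Fin 2) E := A - m • 1
  have hv0 : v ≠ 0 := by
    intro h
    apply hs
    have h' : A = m • 1 := sub_eq_zero.1 h
    rw [← Matrix.ext_iff] at h'
    simp [Fin.forall_fin_two, hA] at h'
    obtain ⟨⟨h1, h3⟩, h4, h5⟩ := h'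
    exact ⟨h3, h4, i.injective (h1.trans h5.symm)⟩
  have hAv : A * v = l • v := by
    change A * (A - m • 1) = l • (A - m • 1)
    rw [mul_sub, mat2_CH, smul_sub, smul_smul, hlmm, ← hlpm, add_smul]
    simp; abel
  have hspan : ∀ y : Subgroup.centralizer {g}, ∃ α β : F,
      y.1.1 = α • (1 : Matrix (Fin 2) (Fin 2) F) + β • g.1 := by
    intro y
    exact mat2_span hs ((gl_commute_iff _ _).1 ((mem_centr _ _).1 y.2))
  have hyv : ∀ (y : Subgroup.centralizer {g}) (α β : F),
      y.1.1 = α • (1 : Matrix (Fin 2) (Fin 2) F) + β • g.1 →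
      y.1.1.map i * v = (i α + i β * l) • v := by
    intro y α β e
    have : y.1.1.map i = i α • (1 : Matrix (Fin 2) (Fin 2) E) + i β • A := by
      rw [e, hA, ← Matrix.ext_iff]
      simp [Fin.forall_fin_two]
    rw [this, add_mul, smul_mul_assoc, smul_mul_assoc, hAv, one_mul, smul_smul, add_smul]
  obtain ⟨χ, hχ⟩ := exists_chi (Subgroup.centralizer {g}).subtype i hv0 (by
    intro y
    obtain ⟨α, β, e⟩ := hspan y
    exact ⟨_, hyv y α β e⟩)
  have hker : ∀ y : Subgroup.centralizer {g}, χ y = 1 → y.1 ∈ Subgroup.center (GL (Fin 2) F) := by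
    intro y h1
    obtain ⟨α, β, e⟩ := hspan y
    have e1 := hχ y _ (hyv y α β e)
    rw [h1, Units.val_one, one_mul] at e1
    have e2 : i y.1.1.det = (i α + i β * l) * (i α + i β * m) := by
      rw [e, det_span]
      simp only [map_add, map_mul, map_pow]
      rw [← htr, ← hdt, ← hlmm, ← hlpm]; ring
    have e3 : i y.1.1.det ≠ 0 := (map_ne_zero i).2 (gl_det_ne y.1)
    have e4 : i α + i β * l ≠ 0 := by
      rw [e2] at e3; exact left_ne_zero_of_mul e3
    have e5 : (i α + i β * l) * (i α + i β * m) = (i α + i β * l) * (i α + i β * l) := by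
      rw [← e2, ← pow_two]; exact e1
    have e6 := mul_left_cancel₀ e4 e5
    have e7 : i β * r = 0 := by rw [← hlm]; linear_combination -e6
    have e8 : β = 0 := by simpa [hr0] using e7
    rw [gl_center_iff, e, e8, zero_smul, add_zero]
    exact sc_one α
  obtain ⟨s, hs⟩ := exists_gen_range χ
  refine ⟨s, fun y => ?_⟩
  obtain ⟨k, hk⟩ := hs y
  refine ⟨k, ?_⟩
  have := hker (y * (s ^ k)⁻¹) (by rw [map_mul, map_inv, map_zpow, hk, mul_inv_cancel])
  simpa using this

/-- an element inverting the torus -/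
lemma exists_flip (h2 : (2 : F) ≠ 0) {g : GL (Fin 2) F} (hg : dsc g.1 ≠ 0) :
    ∃ t : GL (Fin 2) F, t.1 * g.1 = (g.1.trace • (1 : Matrix (Fin 2) (Fin 2) F) - g.1) * t.1 ∧
      IsSc (t.1 * t.1) := by
  have key : ∀ T : Matrix (Fin 2) (Fin 2) F, T.det ≠ 0 → T.trace = 0 →
      T * g.1 = (g.1.trace • (1 : Matrix (Fin 2) (Fin 2) F) - g.1) * T →
      ∃ t : GL (Fin 2) F, t.1 * g.1 = (g.1.trace • (1 : Matrix (Fin 2) (Fin 2) F) - g.1) * t.1 ∧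
      IsSc (t.1 * t.1) := by
    intro T hT ht h
    obtain ⟨t, rfl⟩ := gl_exists T hT
    refine ⟨t, h, ?_⟩
    rw [mat2_CH, ht, zero_smul, zero_sub, ← neg_smul]
    exact sc_one _
  by_cases hb : g.1 0 1 = 0
  · by_cases hc : g.1 1 0 = 0
    · apply key !![0, 1; 1, 0]
      · simp [Matrix.det_fin_two]
      · simp [Matrix.trace_fin_two]
      · rw [← Matrix.ext_iff]
        simp [Fin.forall_fin_two, Matrix.mul_apply, Fin.sum_univ_two, Matrix.trace_fin_two, hb, hc]
    · apply key !![g.1 1 0, -(g.1 0 0 - g.1 1 1); 0, -(g.1 1 0)]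
      · simp [Matrix.det_fin_two, hc]
      · simp [Matrix.trace_fin_two]
      · rw [← Matrix.ext_iff]
        simp [Fin.forall_fin_two, Matrix.mul_apply, Fin.sum_univ_two, Matrix.trace_fin_two, hb]
        ring_nf
        simp
  · apply key !![g.1 0 1, 0; -(g.1 0 0 - g.1 1 1), -(g.1 0 1)]
    · simp [Matrix.det_fin_two, hb]
    · simp [Matrix.trace_fin_two]
    · rw [← Matrix.ext_iff]
      simp [Fin.forall_fin_two, Matrix.mul_apply, Fin.sum_univ_two, Matrix.trace_fin_two]
      ring_nf
      simp

lemma normalizer_iff {g : GL (Fin 2) F} (hg : dsc g.1 ≠ 0) (h : GL (Fin 2) F) :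
    h ∈ Subgroup.normalizer (Subgroup.centralizer {g} : Set (GL (Fin 2) F)) ↔
      Commute (h * g * h⁻¹) g := by
  have hs : g ∉ Subgroup.center (GL (Fin 2) F) := by
    rw [gl_center_iff]; exact not_sc_of_dsc hg
  have hs' : h * g * h⁻¹ ∉ Subgroup.center (GL (Fin 2) F) := by
    intro hc
    apply hs
    have := Subgroup.Normal.conj_mem inferInstance _ hc h⁻¹
    simpa [mul_assoc] using this
  rw [Subgroup.mem_normalizer_iff]
  constructor
  · intro H
    have := (H g).1 ((mem_centr _ _).2 (Commute.refl g))
    exact ((mem_centr _ _).1 this).symm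
  · intro hc c
    rw [mem_centr, mem_centr]
    constructor
    · intro h1
      have h3 : Commute (h * g * h⁻¹) (h * c * h⁻¹) := by
        rw [Commute.conj_iff]; exact h1
      exact gl_CT _ _ _ hs' hc.symm h3
    · intro h1
      have h3 : Commute (h * g * h⁻¹) (h * c * h⁻¹) := gl_CT _ _ _ hs hc h1
      rw [Commute.conj_iff] at h3
      exact h3

lemma normalizer_ne_top {g : GL (Fin 2) F} (h2 : (2 : F) ≠ 0) (hg : dsc g.1 ≠ 0) :
    Subgroup.normalizer (Subgroup.centralizer {g} : Set (GL (Fin 2) F)) ≠ ⊤ := by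
  intro htop
  obtain ⟨h, hh⟩ := gl_exists (F := F) !![1, 1; 0, 1] (by simp [Matrix.det_fin_two])
  have h1 : h ∈ Subgroup.normalizer (Subgroup.centralizer {g} : Set (GL (Fin 2) F)) := by
    rw [htop]; trivial
  rw [normalizer_iff hg, gl_commute_iff] at h1
  have hW : (h * g * h⁻¹).1 * h.1 = h.1 * g.1 := by
    rw [← Units.val_mul, ← Units.val_mul]; simp
  have e : (h * g * h⁻¹).1 = !![g.1 0 0 + g.1 1 0, g.1 0 1 + g.1 1 1 - g.1 0 0 - g.1 1 0;
      g.1 1 0, g.1 1 1 - g.1 1 0] := by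
    apply h.isUnit.mul_right_cancel
    refine hW.trans ?_
    rw [hh, ← Matrix.ext_iff]
    simp [Fin.forall_fin_two, Matrix.mul_apply, Fin.sum_univ_two]
  rw [e, mat2_commute_iff] at h1
  simp at h1
  obtain ⟨a1, a2, a3⟩ := h1
  have hc : g.1 1 0 = 0 := by
    rcases a3 with a3 | a3
    · have : 2 * g.1 1 0 = 0 := by linear_combination a3
      simpa [h2] using this
    · exact a3
  rw [hc] at a2
  apply hg
  rw [dsc, hc]
  linear_combination a2

end Fin

section Quot
variable {F : Type} [Field F]

lemma mem_map_mk {S : Subgroup (GL (Fin 2) F)} (hS : Subgroup.center (GL (Fin 2) F) ≤ S)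
    (y : GL (Fin 2) F) :
    QuotientGroup.mk' (Subgroup.center (GL (Fin 2) F)) y ∈
      S.map (QuotientGroup.mk' (Subgroup.center (GL (Fin 2) F))) ↔ y ∈ S := by
  rw [← Subgroup.mem_comap, Subgroup.comap_map_eq_self]
  rw [QuotientGroup.ker_mk']; exact hS

lemma dihedral_quot [Fintype F] (h2 : (2 : F) ≠ 0) {g : GL (Fin 2) F} (hg : dsc g.1 ≠ 0) :
    Nonempty ((Subgroup.normalizer (Subgroup.centralizer {g} : Set (GL (Fin 2) F))).map
        (QuotientGroup.mk' (Subgroup.center (GL (Fin 2) F))) ≃*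
          DihedralGroup (Fintype.card F - 1)) ∨
    Nonempty ((Subgroup.normalizer (Subgroup.centralizer {g} : Set (GL (Fin 2) F))).map
        (QuotientGroup.mk' (Subgroup.center (GL (Fin 2) F))) ≃*
          DihedralGroup (Fintype.card F + 1)) := by
  set π := QuotientGroup.mk' (Subgroup.center (GL (Fin 2) F)) with hπ
  set C := Subgroup.centralizer {g} with hC
  set D := Subgroup.normalizer (C : Set (GL (Fin 2) F)) with hD
  have hs := not_sc_of_dsc hg
  have hZC : Subgroup.center (GL (Fin 2) F) ≤ C := by
    intro z hz
    rw [hC, mem_centr, commute_iff_eq]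
    exact Subgroup.mem_center_iff.1 hz g
  have hCD : C ≤ D := Subgroup.le_normalizer
  have hker : ∀ z ∈ Subgroup.center (GL (Fin 2) F), π z = 1 := by
    intro z hz
    exact (QuotientGroup.eq_one_iff z).2 hz
  have hle : C.map π ≤ D.map π := Subgroup.map_mono hCD
  -- cardinality
  have hcard : Nat.card C = (Fintype.card F - 1) * Nat.card (C.map π) := by
    rw [card_ker_range (π.comp C.subtype)]
    congr 1
    · rw [← card_center, ← Subgroup.card_map_of_injective (f := C.subtype) C.subtype_injective]
      congr 2
      ext y
      constructor
      · rintro ⟨w, hw, rfl⟩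
        exact (QuotientGroup.eq_one_iff _).1 hw
      · intro h
        exact ⟨⟨y, hZC h⟩, hker y h, rfl⟩
    · rw [MonoidHom.range_comp, Subgroup.range_subtype]
  have hq : 2 ≤ Fintype.card F := Fintype.one_lt_card
  have hcm : Nat.card (C.map π) = Fintype.card F - 1 ∨
      Nat.card (C.map π) = Fintype.card F + 1 := by
    have hpos : 0 < Fintype.card F - 1 := by omega
    by_cases hsq : IsSquare (dsc g.1)
    · left
      rw [card_centr_sq h2 hsq hg, pow_two] at hcard
      exact (Nat.eq_of_mul_eq_mul_left hpos hcard).symm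
    · right
      rw [card_centr_nonsq hsq] at hcard
      apply (Nat.eq_of_mul_eq_mul_left hpos (Eq.trans _ hcard)).symm
      have := Nat.sq_sub_sq (Fintype.card F) 1
      rw [one_pow] at this
      rw [this, mul_comm]
  -- cyclic
  let Cy : Subgroup (D.map π) := (C.map π).subgroupOf (D.map π)
  have hCycard : Nat.card Cy = Nat.card (C.map π) :=
    Nat.card_congr (Subgroup.subgroupOfEquivOfLe hle).toEquiv
  have hcyc1 : IsCyclic (C.map π) := by
    obtain ⟨s, hs⟩ := centr_gen h2 hg
    refine ⟨⟨⟨π s.1, ⟨s.1, s.2, rfl⟩⟩, ?_⟩⟩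
    rintro ⟨_, y, hy, rfl⟩
    obtain ⟨k, hk⟩ := hs ⟨y, hy⟩
    refine ⟨k, ?_⟩
    apply Subtype.ext
    have := hker _ hk
    rw [map_mul, map_inv, mul_inv_eq_one, map_zpow] at this
    exact this.symm
  have hcyc : IsCyclic Cy :=
    (Subgroup.subgroupOfEquivOfLe hle).isCyclic.2 hcyc1
  obtain ⟨t, ht, htt⟩ := exists_flip h2 hg
  have htg : (t * g * t⁻¹).1 = g.1.trace • (1 : Matrix (Fin 2) (Fin 2) F) - g.1 := by
    apply t.isUnit.mul_right_cancel
    refine Eq.trans ?_ ht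
    rw [← Units.val_mul, ← Units.val_mul]; simp
  have htD : t ∈ D := by
    rw [hD, hC, normalizer_iff hg, gl_commute_iff, htg]
    simp [sub_mul, mul_sub]
  have htC : t ∉ C := by
    intro h
    rw [hC, mem_centr] at h
    have : t * g * t⁻¹ = g := by rw [← h.eq]; simp
    rw [this] at htg
    apply hs
    rw [← Matrix.ext_iff] at htg
    simp [Fin.forall_fin_two, Matrix.trace_fin_two] at htg
    obtain ⟨⟨e1, e2⟩, e3, e4⟩ := htg
    have z : ∀ a : F, a = -a → a = 0 := by
      intro a ha
      have : 2 * a = 0 := by linear_combination ha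
      simpa [h2] using this
    refine ⟨z _ e2, z _ e3, ?_⟩
    linear_combination e1
  have main : ∀ m, Nat.card Cy = m → Nonempty (D.map π ≃* DihedralGroup m) := by
    intro m hm
    have htD' : π t ∈ D.map π := ⟨t, htD, rfl⟩
    have memCy : ∀ (y : GL (Fin 2) F) (hy : π y ∈ D.map π), (⟨π y, hy⟩ : D.map π) ∈ Cy ↔ y ∈ C := by
      intro y hy
      rw [Subgroup.mem_subgroupOf]
      exact mem_map_mk hZC y
    apply dihedral_of Cy hm (t := ⟨π t, htD'⟩)
    · rw [memCy]; exact htC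
    · apply Subtype.ext
      change π t * π t = 1
      rw [← map_mul]
      apply hker
      rw [gl_center_iff]
      exact htt
    · rintro ⟨_, c, hcD, rfl⟩ hc
      replace hc : c ∈ C := (memCy c ⟨c, hcD, rfl⟩).1 hc
      apply Subtype.ext
      change π t * π c * (π t)⁻¹ = (π c)⁻¹
      rw [eq_inv_iff_mul_eq_one, ← map_mul, ← map_inv, ← map_mul, ← map_mul]
      apply hker
      rw [gl_center_iff]
      rw [hC, mem_centr, gl_commute_iff] at hc
      obtain ⟨α, β, e⟩ := mat2_span hs hc
      have e1 : (t * c * t⁻¹).1 = α • (1 : Matrix (Fin 2) (Fin 2) F) +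
          β • (g.1.trace • (1 : Matrix (Fin 2) (Fin 2) F) - g.1) := by
        apply t.isUnit.mul_right_cancel
        have : (t * c * t⁻¹).1 * t.1 = t.1 * c.1 := by
          rw [← Units.val_mul, ← Units.val_mul]; simp
        refine this.trans ?_
        rw [e, mul_add, add_mul, mul_smul_comm, mul_smul_comm, ht, smul_mul_assoc, smul_mul_assoc]
        simp
      have e2 : (t * c * t⁻¹ * c).1 = (α ^ 2 + α * β * g.1.trace + β ^ 2 * g.1.det) •
          (1 : Matrix (Fin 2) (Fin 2) F) := by
        rw [Units.val_mul, e1, e, ← Matrix.ext_iff]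
        simp [Fin.forall_fin_two, Matrix.mul_apply, Fin.sum_univ_two, Matrix.trace_fin_two,
          Matrix.det_fin_two]
        refine ⟨⟨?_, ?_⟩, ?_, ?_⟩ <;> ring
      rw [e2]
      exact sc_one _
    · rintro ⟨_, y, hyD, rfl⟩ hy
      replace hy : y ∉ C := fun h => hy ((memCy y ⟨y, hyD, rfl⟩).2 h)
      have hyg : (y * g * y⁻¹).1 = g.1.trace • (1 : Matrix (Fin 2) (Fin 2) F) - g.1 := by
        apply gl_flip h2 hg
        · exact (normalizer_iff hg y).1 hyD
        · rw [← mem_centr]; exact hy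
      have hyt : y * g * y⁻¹ = t * g * t⁻¹ := Units.ext (hyg.trans htg.symm)
      have hmem : t⁻¹ * y ∈ C := by
        rw [hC, mem_centr, commute_iff_eq]
        have : y * g = t * g * t⁻¹ * y := by rw [← hyt]; simp
        rw [mul_assoc, this]
        simp [mul_assoc]
      have := (memCy (t⁻¹ * y) (by
        rw [map_mul, map_inv]
        exact (D.map π).mul_mem ((D.map π).inv_mem htD') ⟨y, hyD, rfl⟩)).2 hmem
      convert this using 1
      apply Subtype.ext
      change (π t)⁻¹ * π y = π (t⁻¹ * y)
      rw [map_mul, map_inv]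
  rcases hcm with h | h
  · left; exact main _ (hCycard.trans h)
  · right; exact main _ (hCycard.trans h)

end Quot

/-- Every maximal subgroup of `PGL₂(q)` containing an outer involution is dihedral
of order `2(q-1)` or `2(q+1)`. -/
theorem maximal_subgroup_containing_outer_involution (p n : ℕ) (hp : Nat.Prime p) (hodd : Odd p) (hn : 1 ≤ n)
    (F : Type) [Field F] [Fintype F] (hF : Fintype.card F = p ^ 2 ^ n)
    (x : ProjectiveGL2 F) (hx : orderOf x = 2) (hxS : x ∉ socleSL2 F)
    (M : Subgroup (ProjectiveGL2 F)) (hM : IsCoatom M) (hxM : x ∈ M) :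
    Nonempty (M ≃* DihedralGroup (p ^ 2 ^ n - 1)) ∨
      Nonempty (M ≃* DihedralGroup (p ^ 2 ^ n + 1)) := by
  have h8 : Fintype.card F % 8 = 1 := by rw [hF]; exact card_mod8 hodd hn
  have hch : ringChar F ≠ 2 := by
    intro h
    have := FiniteField.even_card_of_char_two h
    omega
  have h2 : (2 : F) ≠ 0 := Ring.two_ne_zero hch
  have hm1 : IsSquare (-1 : F) := by
    rw [FiniteField.isSquare_neg_one_iff]; omega
  have hsq2 : IsSquare (2 : F) := by
    rw [FiniteField.isSquare_two_iff]; omega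
  set π := QuotientGroup.mk' (Subgroup.center (GL (Fin 2) F)) with hπ
  obtain ⟨X, rfl⟩ : ∃ X, π X = x := QuotientGroup.mk'_surjective _ x
  have hker : ∀ z : GL (Fin 2) F, π z = 1 ↔ z ∈ Subgroup.center (GL (Fin 2) F) :=
    fun z => QuotientGroup.eq_one_iff z
  have hXs : ¬ IsSc X.1 := by
    intro h
    rw [← gl_center_iff, ← hker] at h
    rw [h, orderOf_one] at hx
    omega
  have hXX : IsSc (X.1 * X.1) := by
    have h := pow_orderOf_eq_one (π X)
    rw [hx, pow_two, ← map_mul, hker, gl_center_iff] at h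
    exact h
  have hXt := mat2_sq hXs hXX
  have hXd : ¬ IsSquare X.1.det := by
    intro h
    obtain ⟨z, hz, e⟩ := gl_norm_det X h
    apply hxS
    refine ⟨⟨(z * X).1, e⟩, ?_⟩
    have e2 : (Matrix.SpecialLinearGroup.toGL ⟨(z * X).1, e⟩ : GL (Fin 2) F) = z * X := by
      apply Units.ext; rfl
    change π (Matrix.SpecialLinearGroup.toGL ⟨(z * X).1, e⟩) = π X
    rw [e2, map_mul, (hker z).2 hz, one_mul]
  have hZH : Subgroup.center (GL (Fin 2) F) ≤ M.comap π := by
    intro z hz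
    rw [Subgroup.mem_comap, (hker z).2 hz]; exact M.one_mem
  have hsurj : Function.Surjective π := QuotientGroup.mk'_surjective _
  have hH : M.comap π ≠ ⊤ := by
    intro h
    apply hM.1
    rw [eq_top_iff]
    intro y _
    obtain ⟨y, rfl⟩ := hsurj y
    rw [← Subgroup.mem_comap, h]; trivial
  obtain ⟨g, hg, hcomm⟩ := key_lemma hp hodd hF hch h2 hm1 hsq2 (M.comap π) hZH hH
    (X := X) hxM hXt hXd
  have hle : M ≤ (Subgroup.normalizer (Subgroup.centralizer {g} : Set (GL (Fin 2) F))).map π := by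
    intro y hy
    obtain ⟨y, rfl⟩ := hsurj y
    exact ⟨y, (normalizer_iff hg y).2 (hcomm y hy), rfl⟩
  have hZN : Subgroup.center (GL (Fin 2) F) ≤
      Subgroup.normalizer (Subgroup.centralizer {g} : Set (GL (Fin 2) F)) := by
    intro z hz
    rw [normalizer_iff hg]
    have : z * g * z⁻¹ = g := by
      rw [← Subgroup.mem_center_iff.1 hz g]; simp
    rw [this]
  have hne : (Subgroup.normalizer (Subgroup.centralizer {g} : Set (GL (Fin 2) F))).map π ≠ ⊤ := by
    intro h
    apply normalizer_ne_top h2 hg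
    rw [eq_top_iff]
    intro y _
    rw [← mem_map_mk hZN, ← hπ, h]
    trivial
  have hMeq : M = (Subgroup.normalizer (Subgroup.centralizer {g} : Set (GL (Fin 2) F))).map π := by
    by_contra hcon
    exact hne (hM.2 _ (lt_of_le_of_ne hle hcon))
  rw [hMeq, ← hF]
  exact dihedral_quot h2 hg
end

section
/- Let p be an odd prime, n ≥ 1, q = p^(2^n), and G = PGL₂(F_q). Fix an involution x ∈ G not lying in the image of SL₂(F_q) in G. Then the number of subgroups of G isomorphic to the dihedral group of order 2(q+1) that contain x is exactly 1 + (q+1)/2, and exactly one of them is the centralizer C_G(x). -/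
open Matrix

section helpers

variable {F : Type} [Field F]

/-- The quotient map. -/
abbrev piG (F : Type) [Field F] : GL (Fin 2) F →* ProjectiveGL2 F :=
  QuotientGroup.mk' (Subgroup.center (GL (Fin 2) F))

lemma piG_surj (x : ProjectiveGL2 F) : ∃ A : GL (Fin 2) F, piG F A = x :=
  QuotientGroup.mk'_surjective _ x

lemma piG_eq_iff (M N : GL (Fin 2) F) :
    piG F M = piG F N ↔ ∃ c : F, c ≠ 0 ∧ N.val = c • M.val := by
  rw [QuotientGroup.mk'_eq_mk']
  constructor
  · rintro ⟨z, hz, h⟩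
    rw [Matrix.GeneralLinearGroup.mem_center_iff_val_mem_range_scalar] at hz
    obtain ⟨c, hc⟩ := hz
    refine ⟨c, ?_, ?_⟩
    · rintro rfl
      have := z.ne_zero
      rw [← hc] at this
      simp at this
    · rw [← h, Units.val_mul, ← hc]
      ext i j
      simp [Matrix.scalar_apply, mul_comm]
  · rintro ⟨c, hc, h⟩
    refine ⟨M⁻¹ * N, ?_, by group⟩
    rw [Matrix.GeneralLinearGroup.mem_center_iff_val_mem_range_scalar]
    refine ⟨c, ?_⟩
    rw [Units.val_mul, h, Matrix.mul_smul, ← Units.val_mul, inv_mul_cancel]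
    ext i j
    simp [Matrix.scalar_apply, Matrix.smul_apply, Matrix.diagonal_apply, Matrix.one_apply]

lemma det_ne (M : GL (Fin 2) F) : M.val.det ≠ 0 :=
  (Matrix.isUnit_iff_isUnit_det _ |>.1 M.isUnit).ne_zero

lemma mem_socle_iff (M : GL (Fin 2) F) : piG F M ∈ socleSL2 F ↔ IsSquare M.val.det := by
  constructor
  · rintro ⟨N, hN⟩
    have hN' : piG F (Matrix.SpecialLinearGroup.toGL N) = piG F M := hN
    rw [piG_eq_iff] at hN'
    obtain ⟨c, hc, h⟩ := hN'
    refine ⟨c, ?_⟩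
    rw [h, Matrix.det_smul]
    simp [sq]
  · rintro ⟨c, hc⟩
    have hc0 : c ≠ 0 := by
      rintro rfl
      exact det_ne M (by simpa using hc)
    have hdet : (c⁻¹ • M.val).det = 1 := by
      rw [Matrix.det_smul, hc]
      simp
      field_simp
    refine ⟨⟨c⁻¹ • M.val, hdet⟩, ?_⟩
    change piG F (Matrix.SpecialLinearGroup.toGL ⟨c⁻¹ • M.val, hdet⟩) = piG F M
    rw [piG_eq_iff]
    refine ⟨c, hc0, ?_⟩
    change M.val = c • (c⁻¹ • M.val)
    rw [smul_smul, mul_inv_cancel₀ hc0, one_smul]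

lemma socle_mul [Fintype F] (a b : ProjectiveGL2 F) (ha : a ∉ socleSL2 F) (hb : b ∉ socleSL2 F) :
    a * b ∈ socleSL2 F := by
  classical
  obtain ⟨A, rfl⟩ := piG_surj a
  obtain ⟨B, rfl⟩ := piG_surj b
  rw [← map_mul, mem_socle_iff, Units.val_mul, Matrix.det_mul]
  rw [mem_socle_iff] at ha hb
  by_contra h
  rw [← quadraticChar_neg_one_iff_not_isSquare] at ha hb h
  rw [map_mul, ha, hb] at h
  norm_num at h

/-- trace zero -/
lemma invol_trace (A : GL (Fin 2) F) (h : orderOf (piG F A) = 2) :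
    A.val 1 1 = - A.val 0 0 := by
  have h1 : piG F 1 = piG F (A * A) := by
    have h' := pow_orderOf_eq_one (piG F A)
    rw [h] at h'
    rw [map_one, map_mul, ← sq, h']
  have h2 : piG F 1 ≠ piG F A := by
    intro h3
    rw [← h3, map_one, orderOf_one] at h
    omega
  rw [piG_eq_iff] at h1
  obtain ⟨c, hc, h1⟩ := h1
  by_contra ht
  have ht' : A.val 0 0 + A.val 1 1 ≠ 0 := fun h => ht (by linear_combination h)
  have e00 := congrFun₂ h1 0 0
  have e01 := congrFun₂ h1 0 1
  have e10 := congrFun₂ h1 1 0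
  have e11 := congrFun₂ h1 1 1
  simp [Matrix.mul_apply, Fin.sum_univ_two] at e00 e01 e10 e11
  have f01 : A.val 0 1 = 0 := by
    apply (mul_eq_zero.1 (show (A.val 0 0 + A.val 1 1) * A.val 0 1 = 0 by
      linear_combination e01)).resolve_left ht'
  have f10 : A.val 1 0 = 0 := by
    apply (mul_eq_zero.1 (show (A.val 0 0 + A.val 1 1) * A.val 1 0 = 0 by
      linear_combination e10)).resolve_left ht'
  have f11 : A.val 1 1 = A.val 0 0 := by
    have := (mul_eq_zero.1 (show (A.val 0 0 + A.val 1 1) * (A.val 1 1 - A.val 0 0) = 0 by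
      linear_combination e11 - e00)).resolve_left ht'
    linear_combination this
  apply h2
  rw [piG_eq_iff]
  refine ⟨A.val 0 0, ?_, ?_⟩
  · intro h0
    apply ht'
    rw [f11, h0, add_zero]
  · ext i j
    fin_cases i <;> fin_cases j <;> simp [f01, f10, f11]

lemma invol_sq (A : GL (Fin 2) F) (h : A.val 1 1 = - A.val 0 0) :
    A.val * A.val = (-A.val.det) • (1 : Matrix (Fin 2) (Fin 2) F) := by
  ext i j
  rw [Matrix.det_fin_two]
  fin_cases i <;> fin_cases j <;> simp [Matrix.mul_apply, Fin.sum_univ_two, h] <;> ring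

lemma invol_of_trace (h2 : (2 : F) ≠ 0) (A : GL (Fin 2) F) (h : A.val 1 1 = - A.val 0 0) :
    orderOf (piG F A) = 2 := by
  apply orderOf_eq_prime
  · rw [sq, ← map_mul, ← map_one (piG F)]
    symm
    rw [piG_eq_iff]
    refine ⟨_, ?_, by rw [Units.val_mul, invol_sq A h]; rfl⟩
    simpa using det_ne A
  · intro h3
    rw [← map_one (piG F)] at h3
    have h3 := h3.symm
    rw [piG_eq_iff] at h3
    obtain ⟨c, hc, h3⟩ := h3
    rw [h3] at h
    simp at h
    have : (2 : F) * c = 0 := by linear_combination h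
    rcases mul_eq_zero.1 this with h | h
    · exact h2 h
    · exact hc h

lemma comm_cases (A B : GL (Fin 2) F) (h : piG F A * piG F B = piG F B * piG F A) :
    A.val * B.val = B.val * A.val ∨ A.val * B.val = - (B.val * A.val) := by
  rw [← map_mul, ← map_mul] at h
  have h := h.symm
  rw [piG_eq_iff] at h
  obtain ⟨c, hc, h⟩ := h
  simp only [Units.val_mul] at h
  have hd := congrArg Matrix.det h
  rw [Matrix.det_smul, Matrix.det_mul, Matrix.det_mul] at hd
  simp at hd
  have : c ^ 2 = 1 := by
    have : (c ^ 2 - 1) * (A.val.det * B.val.det) = 0 := by linear_combination -hd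
    have := (mul_eq_zero.1 this).resolve_right (mul_ne_zero (det_ne A) (det_ne B))
    linear_combination this
  rcases sq_eq_one_iff.1 this with rfl | rfl
  · left; simpa using h
  · right; simpa using h

/-- centralizer of trace zero matrix -/
lemma comm_form (h2 : (2 : F) ≠ 0) (A : GL (Fin 2) F) (h : A.val 1 1 = - A.val 0 0)
    (B : Matrix (Fin 2) (Fin 2) F) (hc : A.val * B = B * A.val) :
    ∃ u v : F, B = u • (1 : Matrix (Fin 2) (Fin 2) F) + v • A.val := by
  have hd := det_ne A
  rw [Matrix.det_fin_two, h] at hd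
  have hd' : 2 * (A.val 0 0 * A.val 0 0 + A.val 0 1 * A.val 1 0) ≠ 0 :=
    mul_ne_zero h2 (fun h => hd (by linear_combination -h))
  refine ⟨(B 0 0 + B 1 1) / 2, (A.val 0 0 * B 0 0 + A.val 0 1 * B 1 0 + A.val 1 0 * B 0 1
    - A.val 0 0 * B 1 1) / (2 * (A.val 0 0 * A.val 0 0 + A.val 0 1 * A.val 1 0)), ?_⟩
  have e00 := congrFun₂ hc 0 0
  have e01 := congrFun₂ hc 0 1
  have e10 := congrFun₂ hc 1 0
  simp [Matrix.mul_apply, Fin.sum_univ_two, h] at e00 e01 e10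
  ext i j
  fin_cases i <;> fin_cases j <;> simp [h]
  all_goals
    generalize A.val 0 0 = a at *
    generalize A.val 0 1 = b at *
    generalize A.val 1 0 = c at *
    have hd'' : a * a + b * c ≠ 0 := right_ne_zero_of_mul hd'
    field_simp
    grind

lemma sq_mul_self {G : Type*} [Group G] (s : G) (h : orderOf s = 2) : s * s = 1 := by
  rw [← sq, ← h, pow_orderOf_eq_one]

end helpers

section torus

variable {F : Type} [Field F]

lemma torus [Fintype F] (h2 : (2 : F) ≠ 0) (A : GL (Fin 2) F) (h : A.val 1 1 = - A.val 0 0)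
    (hd : ¬ IsSquare (-A.val.det)) :
    ∃ t : ProjectiveGL2 F, orderOf t = Fintype.card F + 1 ∧
      ∀ B : GL (Fin 2) F, piG F B ∈ Subgroup.zpowers t ↔ A.val * B.val = B.val * A.val := by
  classical
  set d := -A.val.det with hdd
  have : Fact (∀ r : F, r ^ 2 ≠ d + 0 * r) := ⟨fun r hr => hd ⟨r, by
    rw [← sq, hr]; ring⟩⟩
  let f : QuadraticAlgebra F d 0 →ₐ[F] Matrix (Fin 2) (Fin 2) F :=
    QuadraticAlgebra.lift ⟨A.val, by rw [invol_sq A h]; simp [hdd]⟩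
  have hf : ∀ z, f z = z.re • 1 + z.im • A.val := fun z => rfl
  let φ : (QuadraticAlgebra F d 0)ˣ →* ProjectiveGL2 F :=
    (piG F).comp (Units.map (f : QuadraticAlgebra F d 0 →* Matrix (Fin 2) (Fin 2) F))
  have hφ : ∀ z, φ z = piG F (Units.map (f : QuadraticAlgebra F d 0 →* Matrix (Fin 2) (Fin 2) F) z) :=
    fun z => rfl
  have : Finite (QuadraticAlgebra F d 0) := Finite.of_equiv _ (QuadraticAlgebra.equivProd d 0).symm
  have : Fintype (QuadraticAlgebra F d 0) := Fintype.ofFinite _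
  have hcK : Nat.card (QuadraticAlgebra F d 0) = Fintype.card F * Fintype.card F := by
    rw [Nat.card_congr (QuadraticAlgebra.equivProd d 0)]
    simp
  have hcU : Nat.card (QuadraticAlgebra F d 0)ˣ = Fintype.card F * Fintype.card F - 1 := by
    rw [Nat.card_units, hcK]
  have hA10 : A.val 1 0 ≠ 0 := by
    intro h0
    apply hd
    refine ⟨A.val 0 0, ?_⟩
    rw [hdd, Matrix.det_fin_two, h, h0]
    ring
  have hker : φ.ker = (Units.map (algebraMap F (QuadraticAlgebra F d 0) : F →* _)).range := by
    ext z
    rw [MonoidHom.mem_ker, hφ, ← map_one (piG F), eq_comm, piG_eq_iff]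
    constructor
    · rintro ⟨c, hc, hz⟩
      refine ⟨Units.mk0 c hc, ?_⟩
      have hz' : f z.val = c • 1 := hz
      rw [hf] at hz'
      have e10 := congrFun₂ hz' 1 0
      have e00 := congrFun₂ hz' 0 0
      simp [hA10] at e10 e00
      simp [e10] at e00
      ext
      · simp [e00]
      · simp [e10]
    · rintro ⟨c, rfl⟩
      refine ⟨c, c.ne_zero, ?_⟩
      change f (algebraMap F _ c) = (c : F) • 1
      rw [AlgHom.commutes, Algebra.algebraMap_eq_smul_one]
  have hinj : Function.Injective
      (Units.map (algebraMap F (QuadraticAlgebra F d 0) : F →* QuadraticAlgebra F d 0)) := by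
    intro a b hab
    apply Units.ext
    exact QuadraticAlgebra.algebraMap_injective (congrArg Units.val hab)
  have hcker : Nat.card φ.ker = Fintype.card F - 1 := by
    rw [hker, ← Nat.card_congr (MonoidHom.ofInjective hinj).toEquiv, Nat.card_units]
    simp
  have hcr : Nat.card φ.range = Fintype.card F + 1 := by
    have h1 := Subgroup.card_mul_index φ.ker
    rw [Subgroup.index_ker, hcker, hcU] at h1
    have hq : 2 ≤ Fintype.card F := Fintype.one_lt_card
    have h3 : (Fintype.card F - 1) * (Fintype.card F + 1) = Fintype.card F * Fintype.card F - 1 := by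
      obtain ⟨k, hk⟩ := Nat.exists_eq_add_of_le hq
      rw [hk]
      simp only [show 2 + k - 1 = k + 1 by omega]
      apply Nat.eq_sub_of_add_eq
      ring
    apply Nat.eq_of_mul_eq_mul_left (show 0 < Fintype.card F - 1 by omega)
    rw [h1, h3]
  have : IsCyclic φ.range := isCyclic_of_surjective φ.rangeRestrict φ.rangeRestrict_surjective
  obtain ⟨t, ht⟩ := (Subgroup.isCyclic_iff_exists_zpowers_eq_top φ.range).1 inferInstance
  refine ⟨t, ?_, ?_⟩
  · rw [← Nat.card_zpowers, ht, hcr]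
  · intro B
    rw [ht]
    constructor
    · rintro ⟨z, hz⟩
      rw [hφ, piG_eq_iff] at hz
      obtain ⟨c, hc, hz⟩ := hz
      have hz' : B.val = c • f z.val := hz
      rw [hz', hf]
      simp [mul_add, add_mul]
    · intro hB
      obtain ⟨u, v, huv⟩ := comm_form h2 A h B.val hB
      have hz : (⟨u, v⟩ : QuadraticAlgebra F d 0) ≠ 0 := by
        intro h0
        have h1 := congrArg QuadraticAlgebra.re h0
        have h2 := congrArg QuadraticAlgebra.im h0
        simp at h1 h2
        apply B.ne_zero
        rw [huv, h1, h2]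
        simp
      refine ⟨Units.mk0 _ hz, ?_⟩
      rw [hφ]
      congr 1
      apply Units.ext
      rw [huv]
      rfl

lemma exists_anti (A : GL (Fin 2) F) (h : A.val 1 1 = - A.val 0 0)
    (hd : ¬ IsSquare (-A.val.det)) :
    ∃ S : GL (Fin 2) F, S.val 1 1 = - S.val 0 0 ∧ A.val * S.val = - (S.val * A.val) := by
  have hA10 : A.val 1 0 ≠ 0 := by
    intro h0
    apply hd
    refine ⟨A.val 0 0, ?_⟩
    rw [Matrix.det_fin_two, h, h0]
    ring
  have hA01 : A.val 0 1 ≠ 0 := by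
    intro h0
    apply hd
    refine ⟨A.val 0 0, ?_⟩
    rw [Matrix.det_fin_two, h, h0]
    ring
  refine ⟨Matrix.GeneralLinearGroup.mkOfDetNeZero !![0, A.val 0 1; - A.val 1 0, 0] ?_, ?_, ?_⟩
  · simp [Matrix.det_fin_two, hA10, hA01]
  · change !![0, A.val 0 1; - A.val 1 0, 0] 1 1 = - !![0, A.val 0 1; - A.val 1 0, 0] 0 0
    simp
  · change A.val * !![0, A.val 0 1; - A.val 1 0, 0] = - (!![0, A.val 0 1; - A.val 1 0, 0] * A.val)
    ext i j
    fin_cases i <;> fin_cases j <;> simp [Matrix.mul_apply, Fin.sum_univ_two, h, Matrix.vecMul, dotProduct] <;> ring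

lemma commute_of_comm {A B : GL (Fin 2) F} (h : A.val * B.val = B.val * A.val) :
    piG F A * piG F B = piG F B * piG F A := by
  rw [← map_mul, ← map_mul]
  congr 1
  exact Units.ext h

lemma commute_of_anti {A B : GL (Fin 2) F} (h : A.val * B.val = -(B.val * A.val)) :
    piG F A * piG F B = piG F B * piG F A := by
  rw [← map_mul, ← map_mul, eq_comm, piG_eq_iff]
  exact ⟨-1, by simp, by simpa using h⟩

lemma anti_trace (h2 : (2 : F) ≠ 0) (A B : GL (Fin 2) F) (h : A.val * B.val = -(B.val * A.val)) :
    B.val 1 1 = - B.val 0 0 := by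
  have e : B.val = - (A⁻¹.val * (B.val * A.val)) := by
    rw [← Matrix.mul_neg, ← h, ← mul_assoc, ← Units.val_mul, inv_mul_cancel, Units.val_one, one_mul]
  have e2 : B.val.trace = - B.val.trace := by
    conv_lhs => rw [e]
    rw [Matrix.trace_neg, Matrix.trace_mul_comm, mul_assoc, ← Units.val_mul, mul_inv_cancel,
      Units.val_one, mul_one]
  rw [Matrix.trace_fin_two] at e2
  have : 2 * (B.val 0 0 + B.val 1 1) = 0 := by linear_combination e2
  have := (mul_eq_zero.1 this).resolve_left h2
  linear_combination this

end torus

section grp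

/-- Dihedral structure of a subgroup. -/
structure DihData {G : Type*} [Group G] (C : Subgroup G) (m : ℕ) (t s : G) : Prop where
  ord : orderOf t = m
  ss : s * s = 1
  conj : s * t * s⁻¹ = t⁻¹
  notin : s ∉ Subgroup.zpowers t
  mem : ∀ c, c ∈ C ↔ c ∈ Subgroup.zpowers t ∨ s * c ∈ Subgroup.zpowers t

variable {G : Type*} [Group G] {C : Subgroup G} {m : ℕ} {t s : G}

lemma DihData.sinv (h : DihData C m t s) : s⁻¹ = s := inv_eq_of_mul_eq_one_left h.ss

lemma DihData.conj_zpow (h : DihData C m t s) (k : ℤ) : s * t ^ k = t ^ (-k) * s := by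
  have h1 : (s * t * s⁻¹) ^ k = s * t ^ k * s⁻¹ := _root_.conj_zpow
  rw [h.conj, _root_.inv_zpow'] at h1
  rw [h1]
  group

lemma DihData.sq_out (h : DihData C m t s) {w : G} (hw : w ∈ C) (hw' : w ∉ Subgroup.zpowers t) :
    orderOf w = 2 := by
  obtain ⟨k, hk⟩ := ((h.mem w).1 hw).resolve_left hw'
  have hw2 : w = s * t ^ k := by
    simp only at hk
    rw [hk, ← mul_assoc, h.ss, one_mul]
  apply orderOf_eq_prime
  · rw [sq]
    nth_rw 1 [hw2]
    rw [h.conj_zpow, hw2, mul_assoc, ← mul_assoc s, h.ss, one_mul, ← _root_.zpow_add]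
    simp
  · rintro rfl
    exact hw' (one_mem _)

/-- The homomorphism. -/
lemma DihData.iso (h : DihData C m t s) (hm : m ≠ 0) : Nonempty (C ≃* DihedralGroup m) := by
  have : NeZero m := ⟨hm⟩
  have htC : t ∈ C := (h.mem t).2 (Or.inl (Subgroup.mem_zpowers t))
  have hsC : s ∈ C := (h.mem s).2 (Or.inr (by rw [h.ss]; exact one_mem _))
  let P : ZMod m → G := fun i => t ^ i.val
  have hPk : ∀ k : ℤ, P (k : ZMod m) = t ^ k := by
    intro k
    change t ^ (k : ZMod m).val = t ^ k
    rw [← zpow_natCast, zpow_eq_zpow_iff_modEq, h.ord, ← ZMod.intCast_eq_intCast_iff]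
    simp
  have hsurj : ∀ i : ZMod m, ∃ k : ℤ, (k : ZMod m) = i := ZMod.intCast_surjective
  let f : DihedralGroup m → G := fun g => match g with
    | DihedralGroup.r i => P i
    | DihedralGroup.sr i => s * P i
  have hf1 : ∀ i, f (DihedralGroup.r i) = P i := fun _ => rfl
  have hf2 : ∀ i, f (DihedralGroup.sr i) = s * P i := fun _ => rfl
  have hmul : ∀ a b, f (a * b) = f a * f b := by
    rintro (i | i) (j | j) <;> obtain ⟨k, rfl⟩ := hsurj i <;> obtain ⟨l, rfl⟩ := hsurj j
    · rw [DihedralGroup.r_mul_r, hf1, hf1, hf1, ← Int.cast_add, hPk, hPk, hPk, _root_.zpow_add]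
    · rw [DihedralGroup.r_mul_sr, hf1, hf2, hf2, ← Int.cast_sub, hPk, hPk, hPk, h.conj_zpow,
        h.conj_zpow, ← mul_assoc, ← _root_.zpow_add]
      congr 2
      ring
    · rw [DihedralGroup.sr_mul_r, hf1, hf2, hf2, ← Int.cast_add, hPk, hPk, hPk, _root_.zpow_add, mul_assoc]
    · rw [DihedralGroup.sr_mul_sr, hf1, hf2, hf2, ← Int.cast_sub, hPk, hPk, hPk, h.conj_zpow,
        mul_assoc, ← mul_assoc s, h.ss, one_mul, ← _root_.zpow_add]
      congr 1
      ring
  let φ : DihedralGroup m →* G := MonoidHom.mk' f hmul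
  have hφ : ∀ g, φ g = f g := fun _ => rfl
  have hinj : Function.Injective φ := by
    rw [injective_iff_map_eq_one]
    rintro (i | i) hi <;> obtain ⟨k, rfl⟩ := hsurj i
    · rw [hφ, hf1, hPk, ← orderOf_dvd_iff_zpow_eq_one, h.ord] at hi
      rw [(ZMod.intCast_zmod_eq_zero_iff_dvd k m).2 hi]
      rfl
    · rw [hφ, hf2, hPk] at hi
      exfalso
      apply h.notin
      rw [eq_inv_of_mul_eq_one_left hi]
      exact inv_mem (zpow_mem (Subgroup.mem_zpowers t) k)
  have hrange : φ.range = C := by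
    ext c
    rw [h.mem]
    constructor
    · rintro ⟨(i | i), rfl⟩ <;> obtain ⟨k, rfl⟩ := hsurj i
      · left
        rw [hφ, hf1, hPk]
        exact zpow_mem (Subgroup.mem_zpowers t) k
      · right
        rw [hφ, hf2, hPk, ← mul_assoc, h.ss, one_mul]
        exact zpow_mem (Subgroup.mem_zpowers t) k
    · rintro (⟨k, hk⟩ | ⟨k, hk⟩)
      · refine ⟨DihedralGroup.r k, ?_⟩
        rw [hφ, hf1, hPk]
        exact hk
      · refine ⟨DihedralGroup.sr k, ?_⟩
        rw [hφ, hf2, hPk]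
        simp only at hk
        rw [hk, ← mul_assoc, h.ss, one_mul]
  exact ⟨((MonoidHom.ofInjective hinj).trans (MulEquiv.subgroupCongr hrange)).symm⟩

lemma DihData.ncard_out (h : DihData C m t s) :
    {w | w ∈ C ∧ w ∉ Subgroup.zpowers t}.ncard = m := by
  have : {w | w ∈ C ∧ w ∉ Subgroup.zpowers t} = (fun y => s * y) '' (Subgroup.zpowers t : Set G) := by
    ext w
    constructor
    · rintro ⟨h1, h2⟩
      refine ⟨s * w, ((h.mem w).1 h1).resolve_left h2, ?_⟩
      simp only
      rw [← mul_assoc, h.ss, one_mul]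
    · rintro ⟨y, hy, rfl⟩
      have hy : y ∈ Subgroup.zpowers t := hy
      refine ⟨(h.mem _).2 (Or.inr ?_), ?_⟩
      · rw [← mul_assoc, h.ss, one_mul]
        exact hy
      · intro h3
        exact h.notin ((Subgroup.mul_mem_cancel_right _ hy).1 h3)
  rw [this, Set.ncard_image_of_injective _ (mul_right_injective s), ← h.ord, ← Nat.card_zpowers]
  rfl

end grp

section outer

variable {F : Type} [Field F]

lemma outer_rep (hneg : IsSquare (-1 : F)) (z : ProjectiveGL2 F) (hz : orderOf z = 2)
    (hzS : z ∉ socleSL2 F) : ∃ A : GL (Fin 2) F, piG F A = z ∧ A.val 1 1 = - A.val 0 0 ∧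
      ¬ IsSquare (-A.val.det) := by
  obtain ⟨A, rfl⟩ := piG_surj z
  refine ⟨A, rfl, invol_trace A hz, ?_⟩
  rw [mem_socle_iff] at hzS
  intro h
  apply hzS
  have := hneg.mul h
  simpa using this

lemma outer_dih [Fintype F] (h2 : (2 : F) ≠ 0) (hneg : IsSquare (-1 : F)) (z : ProjectiveGL2 F)
    (hz : orderOf z = 2) (hzS : z ∉ socleSL2 F) :
    ∃ t s : ProjectiveGL2 F, DihData (Subgroup.centralizer {z}) (Fintype.card F + 1) t s ∧
      z ∈ Subgroup.zpowers t ∧ ∀ w ∈ Subgroup.zpowers t, orderOf w = 2 → w = z := by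
  obtain ⟨A, rfl, hA, hd⟩ := outer_rep hneg z hz hzS
  obtain ⟨t, ht, htB⟩ := torus h2 A hA hd
  obtain ⟨S, hS, hSA⟩ := exists_anti A hA hd
  have hSS : piG F S * piG F S = 1 := sq_mul_self _ (invol_of_trace h2 S hS)
  refine ⟨t, piG F S, ⟨ht, hSS, ?_, ?_, ?_⟩, ?_, ?_⟩
  · obtain ⟨T, rfl⟩ := piG_surj t
    have hT := (htB T).1 (Subgroup.mem_zpowers _)
    obtain ⟨u, v, huv⟩ := comm_form h2 A hA T.val hT
    rw [mul_inv_eq_iff_eq_mul, ← mul_right_inj (piG F T), mul_inv_cancel_left, ← map_mul, ← map_mul,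
      eq_comm, piG_eq_iff]
    have key : T.val * (S.val * T.val) = (u * u + v * v * A.val.det) • S.val := by
      have e1 : S.val * T.val = (u • (1 : Matrix (Fin 2) (Fin 2) F) - v • A.val) * S.val := by
        have : S.val * A.val = - (A.val * S.val) := by rw [hSA, neg_neg]
        rw [huv, mul_add, sub_mul]
        simp [this, sub_eq_add_neg]
      rw [e1, ← mul_assoc, huv]
      have e2 : (u • (1 : Matrix (Fin 2) (Fin 2) F) + v • A.val) * (u • 1 - v • A.val)
          = (u * u + v * v * A.val.det) • 1 := by
        have := invol_sq A hA
        rw [add_mul, mul_sub, mul_sub]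
        simp only [smul_mul_assoc, mul_smul_comm, one_mul, mul_one, this, smul_smul]
        module
      rw [e2, smul_mul_assoc, one_mul]
    refine ⟨u * u + v * v * A.val.det, ?_, by simpa using key⟩
    intro h0
    rw [h0, zero_smul] at key
    exact (T * (S * T)).ne_zero (by simpa using key)
  · rw [htB]
    intro h
    rw [hSA] at h
    have h3 : (2 : F) • (S.val * A.val) = 0 := by
      rw [two_smul]
      nth_rw 1 [← h]
      simp
    have h4 := (smul_eq_zero.1 h3).resolve_left h2
    exact (S * A).ne_zero (by simpa using h4)
  · intro c
    obtain ⟨B, rfl⟩ := piG_surj c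
    rw [Subgroup.mem_centralizer_singleton_iff, ← map_mul (piG F) S B, htB, htB]
    constructor
    · intro h
      rcases comm_cases A B h.symm with h | h
      · left; exact h
      · right
        rw [Units.val_mul, ← mul_assoc, hSA, neg_mul, mul_assoc, h, mul_neg, neg_neg, mul_assoc]
    · rintro (h | h)
      · exact (commute_of_comm h).symm
      · have h5 := commute_of_comm h
        have h6 := commute_of_anti hSA
        rw [map_mul] at h5
        have h7 : piG F S * (piG F A * piG F B) = piG F S * (piG F B * piG F A) := by
          rw [← mul_assoc, ← h6, mul_assoc, h5, mul_assoc]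
        exact (mul_left_cancel h7).symm
  · rw [htB]
  · intro w hw hw2
    obtain ⟨B, rfl⟩ := piG_surj w
    rw [htB] at hw
    obtain ⟨u, v, huv⟩ := comm_form h2 A hA B.val hw
    have htr := invol_trace B hw2
    have hu : u = 0 := by
      rw [huv] at htr
      simp [hA] at htr
      have : 2 * u = 0 := by linear_combination htr
      exact (mul_eq_zero.1 this).resolve_left h2
    rw [hu, zero_smul, zero_add] at huv
    rw [eq_comm, piG_eq_iff]
    refine ⟨v, ?_, huv⟩
    rintro rfl
    exact B.ne_zero (by simpa using huv)

/-- elements with a power equal to an inner involution -/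
lemma inner_pow [Fintype F] (p k : ℕ) [Fact p.Prime] [CharP F p] (hq : Fintype.card F = p ^ k)
    (hodd : Odd (Fintype.card F))
    (h2 : (2 : F) ≠ 0) (hneg : IsSquare (-1 : F)) (z r : ProjectiveGL2 F)
    (hz : orderOf z = 2) (hzS : z ∈ socleSL2 F) (m : ℕ) (hr : r ^ m = z) :
    r ^ (Fintype.card F - 1) = 1 := by
  obtain ⟨A, rfl⟩ := piG_surj z
  obtain ⟨B, rfl⟩ := piG_surj r
  have hA := invol_trace A hz
  rw [mem_socle_iff] at hzS
  obtain ⟨e, he⟩ := hneg.mul hzS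
  have he' : -A.val.det = e * e := by rw [← he]; ring
  have hsq := invol_sq A hA
  rw [he'] at hsq
  have he0 : e ≠ 0 := by
    rintro rfl
    exact det_ne A (by simpa using he')
  rw [← map_pow, piG_eq_iff] at hr
  obtain ⟨c, hc, hr⟩ := hr
  have hcomm : A.val * B.val = B.val * A.val := by
    rw [hr, Units.val_pow_eq_pow_val, smul_mul_assoc, mul_smul_comm, ← pow_succ, ← pow_succ']
  obtain ⟨u, v, huv⟩ := comm_form h2 A hA B.val hcomm
  obtain ⟨l, hl⟩ := hodd
  have hAq : A.val ^ Fintype.card F = A.val := by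
    rw [hl, pow_succ, pow_mul, sq, hsq, smul_pow, one_pow, smul_mul_assoc, one_mul, ← sq, ← pow_mul]
    have := FiniteField.pow_card_sub_one_eq_one e he0
    rw [hl, Nat.add_sub_cancel] at this
    rw [this, one_smul]
  have hBq : B.val ^ Fintype.card F = B.val := by
    have hcm : Commute (u • (1 : Matrix (Fin 2) (Fin 2) F)) (v • A.val) := by
      rw [Commute, SemiconjBy]
      simp [smul_smul, mul_comm]
    rw [huv, hq, add_pow_char_pow_of_commute _ _ hcm, ← hq, smul_pow, smul_pow, hAq, one_pow,
      FiniteField.pow_card, FiniteField.pow_card]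
  have hBq' : B ^ Fintype.card F = B := Units.ext (by simpa using hBq)
  have hpos : 0 < Fintype.card F := Fintype.card_pos
  have : B ^ (Fintype.card F - 1) = 1 := by
    have h3 : B ^ (Fintype.card F - 1) * B = 1 * B := by
      rw [← pow_succ, Nat.sub_add_cancel hpos, hBq', one_mul]
    exact mul_right_cancel h3
  rw [← map_pow, this, map_one]

end outer

section mainhelpers

variable {F : Type} [Field F]

lemma centralizer_inj [Fintype F] (h2 : (2 : F) ≠ 0) (hneg : IsSquare (-1 : F))
    (z w : ProjectiveGL2 F) (hz : orderOf z = 2) (hzS : z ∉ socleSL2 F) (hw : orderOf w = 2)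
    (h : Subgroup.centralizer {z} = Subgroup.centralizer {w}) : z = w := by
  obtain ⟨t, s, hD, -, hu⟩ := outer_dih h2 hneg z hz hzS
  have hwz : w ∈ Subgroup.centralizer {z} := by
    rw [h, Subgroup.mem_centralizer_singleton_iff]
  have htz : t ∈ Subgroup.centralizer {w} := by
    rw [← h, hD.mem]
    exact Or.inl (Subgroup.mem_zpowers t)
  rw [Subgroup.mem_centralizer_singleton_iff] at htz
  by_cases hwt : w ∈ Subgroup.zpowers t
  · exact (hu w hwt hw).symm
  · exfalso
    obtain ⟨k, hk⟩ := ((hD.mem w).1 hwz).resolve_left hwt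
    simp only at hk
    have hc : s * t = t * s := by
      have h5 : w = s * t ^ k := by rw [hk, ← mul_assoc, hD.ss, one_mul]
      rw [h5, mul_assoc, ← mul_assoc t, (Commute.refl t).zpow_left k |>.eq, ← mul_assoc] at htz
      exact (mul_right_cancel htz).symm
    have h6 := hD.conj
    rw [hc, mul_inv_cancel_right] at h6
    have h7 : t ^ 2 = 1 := by rw [sq]; nth_rw 1 [h6]; exact inv_mul_cancel t
    have h8 := orderOf_dvd_of_pow_eq_one h7
    rw [hD.ord] at h8
    have h9 := Nat.le_of_dvd (by norm_num) h8
    have : 1 < Fintype.card F := Fintype.one_lt_card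
    omega

lemma ncard_outer [Fintype F] (h2 : (2 : F) ≠ 0) (hneg : IsSquare (-1 : F))
    (x : ProjectiveGL2 F) (hx : orderOf x = 2) (hxS : x ∉ socleSL2 F) :
    {z : ProjectiveGL2 F | orderOf z = 2 ∧ z ∉ socleSL2 F ∧ z * x = x * z}.ncard =
      1 + (Fintype.card F + 1) / 2 := by
  classical
  have : Finite (ProjectiveGL2 F) := inferInstance
  obtain ⟨t, s, hD, hxt, hu⟩ := outer_dih h2 hneg x hx hxS
  set W := {w | w ∈ Subgroup.centralizer {x} ∧ w ∉ Subgroup.zpowers t} with hW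
  have hxx := sq_mul_self x hx
  have hxC : x ∈ Subgroup.centralizer {x} := by rw [Subgroup.mem_centralizer_singleton_iff]
  have hxW : ∀ w ∈ W, x * w ∈ W := by
    rintro w ⟨h3, h4⟩
    exact ⟨mul_mem hxC h3, fun h5 => h4 ((Subgroup.mul_mem_cancel_left _ hxt).1 h5)⟩
  have hcard : W.ncard = Fintype.card F + 1 := hD.ncard_out
  set W1 := {w | w ∈ W ∧ w ∉ socleSL2 F} with hW1
  set W2 := {w | w ∈ W ∧ w ∈ socleSL2 F} with hW2
  have hsplit : W1.ncard + W2.ncard = W.ncard := by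
    rw [← Set.ncard_union_eq _ (Set.toFinite _) (Set.toFinite _)]
    · congr 1
      ext w
      simp only [hW1, hW2, Set.mem_union, Set.mem_setOf_eq]
      tauto
    · rw [Set.disjoint_left]
      rintro w ⟨-, h3⟩ ⟨-, h4⟩
      exact h3 h4
  have h12 : (fun w => x * w) '' W1 = W2 := by
    ext w
    constructor
    · rintro ⟨y, ⟨h3, h4⟩, rfl⟩
      exact ⟨hxW _ h3, socle_mul _ _ hxS h4⟩
    · rintro ⟨h3, h4⟩
      refine ⟨x * w, ⟨hxW _ h3, fun h5 => hxS ((Subgroup.mul_mem_cancel_right _ h4).1 h5)⟩, ?_⟩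
      simp only
      rw [← mul_assoc, hxx, one_mul]
  have h12' : W2.ncard = W1.ncard := by
    rw [← h12, Set.ncard_image_of_injective _ (mul_right_injective x)]
  have hO : {z : ProjectiveGL2 F | orderOf z = 2 ∧ z ∉ socleSL2 F ∧ z * x = x * z} =
      insert x W1 := by
    ext z
    constructor
    · rintro ⟨h3, h4, h5⟩
      have h6 : z ∈ Subgroup.centralizer {x} := by
        rw [Subgroup.mem_centralizer_singleton_iff]; exact h5
      by_cases h7 : z ∈ Subgroup.zpowers t
      · left; exact hu z h7 h3
      · right; exact ⟨⟨h6, h7⟩, h4⟩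
    · rintro (rfl | ⟨⟨h3, h4⟩, h5⟩)
      · exact ⟨hx, hxS, rfl⟩
      · exact ⟨hD.sq_out h3 h4, h5, Subgroup.mem_centralizer_singleton_iff.1 h3⟩
  have hxn : x ∉ W1 := fun h3 => h3.1.2 hxt
  rw [hO, Set.ncard_insert_of_notMem hxn (Set.toFinite _)]
  omega

lemma dihedral_sub [Fintype F] (p k : ℕ) [Fact p.Prime] [CharP F p]
    (hq : Fintype.card F = p ^ k) (hodd : Odd (Fintype.card F))
    (h2 : (2 : F) ≠ 0) (hneg : IsSquare (-1 : F)) (H : Subgroup (ProjectiveGL2 F))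
    (e : H ≃* DihedralGroup (Fintype.card F + 1)) :
    ∃ z, orderOf z = 2 ∧ z ∉ socleSL2 F ∧ H = Subgroup.centralizer {z} := by
  classical
  have hone : 1 < Fintype.card F := Fintype.one_lt_card
  obtain ⟨l, hl⟩ := hodd
  have hodd : Odd (Fintype.card F) := ⟨l, hl⟩
  set q := Fintype.card F with hqq
  set r : H := e.symm (DihedralGroup.r 1) with hr
  have hro : orderOf r = q + 1 := by
    rw [hr, MulEquiv.orderOf_eq, DihedralGroup.orderOf_r_one]
  have hro' : orderOf (r : ProjectiveGL2 F) = q + 1 := by rw [Subgroup.orderOf_coe, hro]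
  set z : H := r ^ (l + 1) with hz
  have hzo : orderOf (z : ProjectiveGL2 F) = 2 := by
    rw [Subgroup.orderOf_coe]
    apply orderOf_eq_prime
    · rw [hz, ← pow_mul, ← orderOf_dvd_iff_pow_eq_one, hro, hl]
      exact ⟨1, by ring⟩
    · intro h3
      have := orderOf_dvd_of_pow_eq_one h3
      rw [hro] at this
      have := Nat.le_of_dvd (by omega) this
      omega
  have hzS : (z : ProjectiveGL2 F) ∉ socleSL2 F := by
    intro hS
    have h3 := inner_pow p k hq hodd h2 hneg z r hzo hS (l + 1) (by rw [hz]; simp)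
    have := orderOf_dvd_of_pow_eq_one h3
    rw [hro'] at this
    have := Nat.le_of_dvd (by omega) this
    omega
  have hez : e z = DihedralGroup.r ((l + 1 : ℕ) : ZMod (q + 1)) := by
    rw [hz, map_pow, hr, MulEquiv.apply_symm_apply, DihedralGroup.r_one_pow]
  have h2l : ((l + 1 : ℕ) : ZMod (q + 1)) + ((l + 1 : ℕ) : ZMod (q + 1)) = 0 := by
    rw [← Nat.cast_add, ZMod.natCast_eq_zero_iff]
    exact ⟨1, by omega⟩
  have hle : H ≤ Subgroup.centralizer {(z : ProjectiveGL2 F)} := by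
    intro g hg
    rw [Subgroup.mem_centralizer_singleton_iff]
    have h4 : (⟨g, hg⟩ : H) * z = z * ⟨g, hg⟩ := by
      apply e.injective
      rw [map_mul, map_mul, hez]
      rcases e ⟨g, hg⟩ with i | i
      · rw [DihedralGroup.r_mul_r, DihedralGroup.r_mul_r, add_comm i]
      · rw [DihedralGroup.r_mul_sr, DihedralGroup.sr_mul_r]
        congr 1
        linear_combination h2l
    exact congrArg Subtype.val h4
  refine ⟨z, hzo, hzS, ?_⟩
  obtain ⟨t, s, hD, -, -⟩ := outer_dih h2 hneg z hzo hzS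
  obtain ⟨e'⟩ := hD.iso (by omega)
  have : Finite (ProjectiveGL2 F) := inferInstance
  apply Subgroup.eq_of_le_of_card_ge hle
  rw [Nat.card_congr e'.toEquiv, Nat.card_congr e.toEquiv]

end mainhelpers

/-- An outer involution `x` of `PGL₂(q)` lies in exactly `1 + (q+1)/2` subgroups
isomorphic to the dihedral group of order `2(q+1)`, one of which is its centralizer. -/
theorem count_dihedral_2q_plus_2_containing_outer_involution (p n : ℕ) (hp : Nat.Prime p) (hodd : Odd p) (hn : 1 ≤ n)
    (F : Type) [Field F] [Fintype F] (hF : Fintype.card F = p ^ 2 ^ n)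
    (x : ProjectiveGL2 F) (hx : orderOf x = 2) (hxS : x ∉ socleSL2 F) :
    {H : Subgroup (ProjectiveGL2 F) |
        Nonempty (H ≃* DihedralGroup (p ^ 2 ^ n + 1)) ∧ x ∈ H}.ncard
      = 1 + (p ^ 2 ^ n + 1) / 2 ∧
    Subgroup.centralizer {x} ∈ {H : Subgroup (ProjectiveGL2 F) |
        Nonempty (H ≃* DihedralGroup (p ^ 2 ^ n + 1)) ∧ x ∈ H} := by
  classical
  have : Fact p.Prime := ⟨hp⟩
  have : CharP F p := charP_of_card_eq_prime_pow hF
  have hq : Odd (Fintype.card F) := by rw [hF]; exact hodd.pow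
  have h2 : (2 : F) ≠ 0 := by
    intro h
    have h3 : ((2 : ℕ) : F) = 0 := by exact_mod_cast h
    rw [CharP.cast_eq_zero_iff F p] at h3
    have := (Nat.prime_dvd_prime_iff_eq hp Nat.prime_two).1 h3
    subst this
    exact absurd hodd (by decide)
  have hneg : IsSquare (-1 : F) := by
    rw [FiniteField.isSquare_neg_one_iff, hF]
    obtain ⟨k, rfl⟩ := Nat.exists_eq_add_of_le hn
    obtain ⟨j, hj⟩ := (hodd.pow : Odd (p ^ 2 ^ k))
    rw [pow_add, pow_one, mul_comm, pow_mul, hj]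
    ring_nf
    omega
  rw [← hF]
  have hset : {H : Subgroup (ProjectiveGL2 F) |
        Nonempty (H ≃* DihedralGroup (Fintype.card F + 1)) ∧ x ∈ H} =
      (fun z => Subgroup.centralizer {z}) ''
        {z : ProjectiveGL2 F | orderOf z = 2 ∧ z ∉ socleSL2 F ∧ z * x = x * z} := by
    ext H
    constructor
    · rintro ⟨⟨e⟩, hxH⟩
      obtain ⟨z, hz, hzS, rfl⟩ := dihedral_sub p _ hF hq h2 hneg H e
      exact ⟨z, ⟨hz, hzS, (Subgroup.mem_centralizer_singleton_iff.1 hxH).symm⟩, rfl⟩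
    · rintro ⟨z, ⟨hz, hzS, hc⟩, rfl⟩
      obtain ⟨t, s, hD, -, -⟩ := outer_dih h2 hneg z hz hzS
      exact ⟨hD.iso (by omega), Subgroup.mem_centralizer_singleton_iff.2 hc.symm⟩
  rw [hset]
  constructor
  · rw [Set.ncard_image_of_injOn, ncard_outer h2 hneg x hx hxS]
    rintro z ⟨hz, hzS, -⟩ w ⟨hw, -, -⟩ h
    exact centralizer_inj h2 hneg z w hz hzS hw h
  · exact ⟨x, ⟨hx, hxS, rfl⟩, rfl⟩
end

section
/- Let p be an odd prime, n ≥ 1, q = p^(2^n), and G = PGL₂(F_q). Fix an involution x ∈ G not lying in the image of SL₂(F_q) in G. Then the number of subgroups of G isomorphic to the dihedral group of order 2(q−1) that contain x is exactly (q+1)/2. -/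
open Matrix

namespace PGLCount

open OnePoint

variable {F : Type} [Field F] [DecidableEq F]

/-- The class of a matrix in `PGL₂`. -/
abbrev cls (g : GL (Fin 2) F) : ProjectiveGL2 F := QuotientGroup.mk g

lemma mem_center (g : GL (Fin 2) F) :
    g ∈ Subgroup.center (GL (Fin 2) F) ↔ g 0 1 = 0 ∧ g 1 0 = 0 ∧ g 0 0 = g 1 1 := by
  rw [Matrix.GeneralLinearGroup.mem_center_iff_val_mem_range_scalar]
  constructor
  · rintro ⟨a, ha⟩
    simp [← ha]
  · rintro ⟨h1, h2, h3⟩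
    refine ⟨g 0 0, ?_⟩
    ext i j
    fin_cases i <;> fin_cases j <;> simp [h1, h2, h3]

lemma center_smul (g : GL (Fin 2) F) (hg : g ∈ Subgroup.center (GL (Fin 2) F)) (a : OnePoint F) :
    g • a = a := by
  rw [mem_center] at hg
  obtain ⟨h1, h2, h3⟩ := hg
  have hd := g.det_ne_zero
  rw [Matrix.det_fin_two] at hd
  have h0 : g 1 1 ≠ 0 := by
    intro h
    simp [h, h1] at hd
  cases a with
  | infty => simp [smul_infty_eq_ite, h2]
  | coe k =>
    rw [smul_some_eq_ite]
    simp [h1, h2, h3, h0]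

variable (F) in
/-- The action of `PGL₂` on the projective line. -/
def rho : ProjectiveGL2 F →* Equiv.Perm (OnePoint F) :=
  QuotientGroup.lift _ (MulAction.toPermHom (GL (Fin 2) F) (OnePoint F)) (by
    intro g hg
    ext a : 1
    exact center_smul g hg a)

@[simp] lemma rho_cls (g : GL (Fin 2) F) (a : OnePoint F) : rho F (cls g) a = g • a := rfl

/-- Two-transitivity. -/
lemma two_trans (a b : OnePoint F) (h : a ≠ b) :
    ∃ g : ProjectiveGL2 F, rho F g ∞ = a ∧ rho F g ((0 : F) : OnePoint F) = b := by
  cases a with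
  | infty =>
    cases b with
    | infty => exact absurd rfl h
    | coe b =>
      refine ⟨cls (Matrix.GeneralLinearGroup.mkOfDetNeZero !![1, b; 0, 1] (by simp)), ?_, ?_⟩
      · simp [smul_infty_eq_ite, Matrix.GeneralLinearGroup.mkOfDetNeZero]
      · simp [smul_some_eq_ite, Matrix.GeneralLinearGroup.mkOfDetNeZero]
  | coe a =>
    cases b with
    | infty =>
      refine ⟨cls (Matrix.GeneralLinearGroup.mkOfDetNeZero !![a, 1; 1, 0] (by simp)), ?_, ?_⟩
      · simp [smul_infty_eq_ite, Matrix.GeneralLinearGroup.mkOfDetNeZero]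
      · simp [smul_some_eq_ite, Matrix.GeneralLinearGroup.mkOfDetNeZero]
    | coe b =>
      have hab : a ≠ b := fun e => h (by rw [e])
      refine ⟨cls (Matrix.GeneralLinearGroup.mkOfDetNeZero !![a, b; 1, 1]
        (by simpa [sub_eq_zero] using hab)), ?_, ?_⟩
      · simp [smul_infty_eq_ite, Matrix.GeneralLinearGroup.mkOfDetNeZero]
      · simp [smul_some_eq_ite, Matrix.GeneralLinearGroup.mkOfDetNeZero]

lemma fix_std (g : GL (Fin 2) F) (h1 : g • (∞ : OnePoint F) = ∞)
    (h2 : g • ((0 : F) : OnePoint F) = (0 : F)) : g 1 0 = 0 ∧ g 0 1 = 0 := by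
  have h10 := smul_infty_eq_self_iff.1 h1
  have hd := g.det_ne_zero
  rw [Matrix.det_fin_two] at hd
  have h0 : g 1 1 ≠ 0 := by
    intro h
    simp [h, h10] at hd
  rw [smul_some_eq_ite] at h2
  simp only [mul_zero, zero_add, h0, if_false, coe_eq_coe, div_eq_zero_iff, or_false] at h2
  exact ⟨h10, h2⟩

lemma swap_std (g : GL (Fin 2) F) (h1 : g • (∞ : OnePoint F) = (0 : F))
    (h2 : g • ((0 : F) : OnePoint F) = ∞) : g 0 0 = 0 ∧ g 1 1 = 0 := by
  rw [smul_infty_eq_ite] at h1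
  rw [smul_some_eq_ite] at h2
  split_ifs at h1 with h
  · exact absurd h1 (infty_ne_coe _)
  split_ifs at h2 with h'
  · simp only [coe_eq_coe, div_eq_zero_iff, h, or_false] at h1
    exact ⟨h1, by simpa using h'⟩
  · exact absurd h2 (coe_ne_infty _)

lemma three_std (g : ProjectiveGL2 F) (k : F) (hk : k ≠ 0) (h1 : rho F g ∞ = ∞)
    (h2 : rho F g ((0 : F) : OnePoint F) = (0 : F)) (h3 : rho F g (k : OnePoint F) = k) :
    g = 1 := by
  obtain ⟨g, rfl⟩ := QuotientGroup.mk_surjective g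
  obtain ⟨h10, h01⟩ := fix_std g h1 h2
  rw [QuotientGroup.eq_one_iff, mem_center]
  refine ⟨h01, h10, ?_⟩
  rw [rho_cls, smul_some_eq_ite] at h3
  simp only [h10, h01, zero_mul, zero_add, add_zero] at h3
  split_ifs at h3 with h
  · exact absurd h3 (infty_ne_coe _)
  rw [coe_eq_coe, div_eq_iff h, mul_comm k] at h3
  exact mul_right_cancel₀ hk h3

lemma three_fix (g : ProjectiveGL2 F) (a b c : OnePoint F) (hab : a ≠ b) (hac : a ≠ c)
    (hbc : b ≠ c) (ha : rho F g a = a) (hb : rho F g b = b) (hc : rho F g c = c) : g = 1 := by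
  obtain ⟨t, rfl, rfl⟩ := two_trans a b hab
  obtain ⟨c, rfl⟩ := (rho F t).surjective c
  have key : t⁻¹ * g * t = 1 := by
    cases c with
    | infty => exact absurd rfl hac
    | coe k =>
      refine three_std _ k (fun h => hbc (by rw [h])) ?_ ?_ ?_ <;>
        simp [map_mul, ha, hb, hc]
  have : g = t * (t⁻¹ * g * t) * t⁻¹ := by group
  rw [this, key]; simp

lemma swap_sq (g : ProjectiveGL2 F) (a b : OnePoint F) (hab : a ≠ b)
    (ha : rho F g a = b) (hb : rho F g b = a) : g * g = 1 := by
  obtain ⟨t, rfl, rfl⟩ := two_trans a b hab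
  have key : (t⁻¹ * g * t) * (t⁻¹ * g * t) = 1 := by
    have h1 : rho F (t⁻¹ * g * t) ∞ = (0 : F) := by simp [map_mul, ha]
    have h2 : rho F (t⁻¹ * g * t) ((0 : F) : OnePoint F) = ∞ := by simp [map_mul, hb]
    generalize t⁻¹ * g * t = s at h1 h2
    obtain ⟨s, rfl⟩ := QuotientGroup.mk_surjective s
    obtain ⟨h00, h11⟩ := swap_std s h1 h2
    rw [← QuotientGroup.mk_mul, QuotientGroup.eq_one_iff, mem_center]
    simp [Matrix.mul_apply, Fin.sum_univ_two, h00, h11, mul_comm]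
  have : g * g = t * ((t⁻¹ * g * t) * (t⁻¹ * g * t)) * t⁻¹ := by group
  rw [this, key]; simp

/-- The setwise stabilizer of a pair of points. -/
def stab (a b : OnePoint F) : Subgroup (ProjectiveGL2 F) where
  carrier := {g | (rho F g a = a ∧ rho F g b = b) ∨ (rho F g a = b ∧ rho F g b = a)}
  one_mem' := by left; simp
  mul_mem' := by
    rintro g h (⟨h1, h2⟩ | ⟨h1, h2⟩) (⟨h3, h4⟩ | ⟨h3, h4⟩) <;>
      simp [map_mul, h1, h2, h3, h4]
  inv_mem' := by
    rintro g (⟨h1, h2⟩ | ⟨h1, h2⟩)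
    · left; simp only [map_inv, Equiv.Perm.inv_eq_iff_eq, h1, h2, and_self]
    · right; simp only [map_inv, Equiv.Perm.inv_eq_iff_eq, h1, h2, and_self]

lemma mem_stab (a b : OnePoint F) (g : ProjectiveGL2 F) : g ∈ stab a b ↔
    (rho F g a = a ∧ rho F g b = b) ∨ (rho F g a = b ∧ rho F g b = a) := Iff.rfl

/-- Diagonal classes. -/
def dg : Fˣ →* ProjectiveGL2 F where
  toFun t := cls (Matrix.GeneralLinearGroup.mkOfDetNeZero !![(t : F), 0; 0, 1] (by simp))
  map_one' := by
    rw [QuotientGroup.eq_one_iff, mem_center]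
    simp [Matrix.GeneralLinearGroup.mkOfDetNeZero]
  map_mul' s t := by
    rw [← QuotientGroup.mk_mul]
    congr 1
    ext i j
    fin_cases i <;> fin_cases j <;> simp [Matrix.GeneralLinearGroup.mkOfDetNeZero]

lemma dg_apply (t : Fˣ) : dg t =
  cls (Matrix.GeneralLinearGroup.mkOfDetNeZero !![(t : F), 0; 0, 1] (by simp)) := rfl

variable (F) in
/-- The swap. -/
def ww : ProjectiveGL2 F :=
  cls (Matrix.GeneralLinearGroup.mkOfDetNeZero !![0, 1; 1, 0] (by simp))

lemma ww_sq : ww F * ww F = 1 := by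
  rw [ww, ← QuotientGroup.mk_mul, QuotientGroup.eq_one_iff, mem_center]
  simp [Matrix.GeneralLinearGroup.mkOfDetNeZero]

lemma dg_ww (t : Fˣ) : dg t * ww F = ww F * (dg t)⁻¹ := by
  have h : (dg t * ww F) * (dg t * ww F) = 1 := by
    rw [ww, dg_apply, ← QuotientGroup.mk_mul, ← QuotientGroup.mk_mul,
      QuotientGroup.eq_one_iff, mem_center]
    simp [Matrix.GeneralLinearGroup.mkOfDetNeZero]
  have h2 := eq_inv_of_mul_eq_one_left h
  have h3 : (ww F)⁻¹ = ww F := inv_eq_of_mul_eq_one_left ww_sq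
  exact h2.trans ((_root_.mul_inv_rev _ _).trans (congrArg (fun z => z * (dg t)⁻¹) h3))

lemma dg_inf (t : Fˣ) : rho F (dg t) ∞ = ∞ := by
  simp [dg_apply, smul_infty_eq_ite, Matrix.GeneralLinearGroup.mkOfDetNeZero]

lemma dg_coe (t : Fˣ) (k : F) : rho F (dg t) k = ((t * k : F) : OnePoint F) := by
  simp [dg_apply, smul_some_eq_ite, Matrix.GeneralLinearGroup.mkOfDetNeZero]

lemma ww_inf : rho F (ww F) ∞ = (0 : F) := by
  simp [ww, smul_infty_eq_ite, Matrix.GeneralLinearGroup.mkOfDetNeZero]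

lemma ww_zero : rho F (ww F) ((0 : F) : OnePoint F) = ∞ := by
  simp [ww, smul_some_eq_ite, Matrix.GeneralLinearGroup.mkOfDetNeZero]

lemma dg_inj (t : Fˣ) (h : dg t = 1) : t = 1 := by
  have := dg_coe t 1
  rw [h] at this
  simp only [map_one, Equiv.Perm.coe_one, id_eq, mul_one, coe_eq_coe] at this
  exact Units.ext this.symm

lemma fix_eq_dg (g : ProjectiveGL2 F) (h1 : rho F g ∞ = ∞)
    (h2 : rho F g ((0 : F) : OnePoint F) = (0 : F)) : ∃ t : Fˣ, g = dg t := by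
  obtain ⟨k, hk⟩ : ∃ k : F, rho F g ((1 : F) : OnePoint F) = k := by
    cases h : rho F g ((1 : F) : OnePoint F) with
    | infty =>
      rw [← h1] at h
      exact absurd ((rho F g).injective h) (coe_ne_infty _)
    | coe k => exact ⟨k, rfl⟩
  have hk0 : k ≠ 0 := by
    rintro rfl
    rw [← h2] at hk
    have := (rho F g).injective hk
    simp at this
  refine ⟨Units.mk0 k hk0, ?_⟩
  rw [← inv_mul_eq_one]
  rw [← inv_eq_one, _root_.mul_inv_rev, inv_inv]
  apply three_std _ 1 one_ne_zero <;>
    simp only [map_mul, map_inv, Equiv.Perm.mul_apply, Equiv.Perm.inv_eq_iff_eq, h1, h2, hk,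
      dg_inf, dg_coe, mul_zero, mul_one, Units.val_mk0]

section dih
variable [Fintype F] {N : ℕ} (u : Multiplicative (ZMod N) ≃* Fˣ)

/-- The dihedral group inside `PGL₂`. -/
def dih : DihedralGroup N →* ProjectiveGL2 F :=
  MonoidHom.mk' (fun d => match d with
    | .r i => dg (u (.ofAdd i))
    | .sr i => ww F * dg (u (.ofAdd i))) (by
    rintro (i | i) (j | j)
    · simp [ofAdd_add]
    · simp only [DihedralGroup.r_mul_sr, sub_eq_neg_add, ofAdd_add, ofAdd_neg, map_mul, map_inv]
      rw [← mul_assoc, ← mul_assoc, dg_ww]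
    · simp [ofAdd_add, mul_assoc]
    · simp only [DihedralGroup.sr_mul_sr, sub_eq_neg_add, ofAdd_add, ofAdd_neg, map_mul, map_inv]
      rw [mul_assoc, ← mul_assoc (dg _) (ww F), dg_ww, mul_assoc, ← mul_assoc (ww F) (ww F),
        ww_sq, one_mul])

lemma dih_r (i : ZMod N) : dih u (.r i) = dg (u (.ofAdd i)) := rfl
lemma dih_sr (i : ZMod N) : dih u (.sr i) = ww F * dg (u (.ofAdd i)) := rfl

lemma dih_inj : Function.Injective (dih u) := by
  rw [injective_iff_map_eq_one]
  rintro (i | i) h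
  · rw [dih_r] at h
    have := dg_inj _ h
    rw [MulEquiv.map_eq_one_iff] at this
    have : i = 0 := this
    rw [this]; rfl
  · exfalso
    rw [dih_sr] at h
    have h2 : rho F (ww F * dg (u (.ofAdd i))) ∞ = ∞ := by rw [h]; simp
    simp [map_mul, dg_inf, ww_inf] at h2

lemma dih_range : (dih u).range = stab ∞ ((0 : F) : OnePoint F) := by
  ext g
  constructor
  · rintro ⟨i | i, rfl⟩
    · left; simp [dih_r, dg_inf, dg_coe]
    · right; simp [dih_sr, dg_inf, dg_coe, ww_inf, ww_zero]
  · rintro (⟨h1, h2⟩ | ⟨h1, h2⟩)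
    · obtain ⟨t, rfl⟩ := fix_eq_dg g h1 h2
      exact ⟨.r (u.symm t).toAdd, by simp [dih_r]⟩
    · obtain ⟨t, ht⟩ := fix_eq_dg (ww F * g) (by simp [h1, ww_zero]) (by simp [h2, ww_inf])
      refine ⟨.sr (u.symm t).toAdd, ?_⟩
      rw [dih_sr]
      simp only [ofAdd_toAdd, MulEquiv.apply_symm_apply, ← ht]
      rw [← mul_assoc, ww_sq, one_mul]

lemma stab_iso (u : Multiplicative (ZMod N) ≃* Fˣ) (a b : OnePoint F) (h : a ≠ b) :
    Nonempty (stab a b ≃* DihedralGroup N) := by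
  obtain ⟨t, rfl, rfl⟩ := two_trans a b h
  have e : (stab ∞ ((0 : F) : OnePoint F)).map (MulAut.conj t).toMonoidHom =
      stab (rho F t ∞) (rho F t ((0 : F) : OnePoint F)) := by
    ext g
    rw [Subgroup.mem_map_equiv]
    simp only [mem_stab, MulAut.conj_symm_apply, map_mul, map_inv, Equiv.Perm.mul_apply,
      Equiv.Perm.inv_eq_iff_eq]
  rw [← e, ← dih_range u]
  exact ⟨((Subgroup.equivMapOfInjective _ _ (MulAut.conj t).injective).symm.trans
    (MonoidHom.ofInjective (dih_inj u)).symm)⟩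

end dih

/-- Cycle lengths. -/
lemma support_dvd {P : Type} [Fintype P] [DecidableEq P] (σ : Equiv.Perm P) (N : ℕ)
    (h : ∀ k b, σ b ≠ b → (σ ^ k) b = b → N ∣ k) : N ∣ σ.support.card := by
  rw [← Equiv.Perm.sum_cycleType]
  apply Multiset.dvd_sum
  intro m hm
  obtain ⟨c, τ, rfl, hd, hc, rfl⟩ := Equiv.Perm.mem_cycleType_iff.1 hm
  obtain ⟨b, hb, -⟩ := id hc
  have hτ : τ b = b := (hd b).resolve_left hb
  apply h _ b
  · simpa [hτ] using hb
  · rw [hd.commute.mul_pow, ← hc.orderOf, pow_orderOf_eq_one, one_mul]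
    exact Equiv.Perm.pow_apply_eq_self_of_apply_eq_self hτ _

lemma two_fixed [Fintype F] (g : ProjectiveGL2 F) (N : ℕ) (hN : Fintype.card F = N + 1) (hN3 : 3 ≤ N)
    (hg : orderOf g = N) : ∃ a b, a ≠ b ∧ ∀ c, rho F g c = c ↔ c = a ∨ c = b := by
  classical
  haveI : Fintype (OnePoint F) := inferInstanceAs (Fintype (Option F))
  have hsq : g * g ≠ 1 := by
    intro h
    have := orderOf_dvd_of_pow_eq_one ((sq g).trans h)
    have := Nat.le_of_dvd (by norm_num) this
    omega
  have hdvd : N ∣ (rho F g).support.card := by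
    apply support_dvd
    intro k b hb hk
    rw [← hg]
    apply orderOf_dvd_of_pow_eq_one
    have hc : ∀ c, (rho F g ^ k) c = c → (rho F g ^ k) (rho F g c) = rho F g c := by
      intro c hc
      rw [← Equiv.Perm.mul_apply, ← pow_succ, pow_succ', Equiv.Perm.mul_apply, hc]
    refine three_fix (g ^ k) b (rho F g b) (rho F g (rho F g b)) (Ne.symm hb) ?_ ?_ ?_ ?_ ?_
    · intro h
      exact hsq (swap_sq g b _ (Ne.symm hb) rfl h.symm)
    · intro h
      exact hb ((rho F g).injective h).symm
    · rw [map_pow, hk]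
    · rw [map_pow, hc _ hk]
    · rw [map_pow, hc _ (hc _ hk)]
  have hcard : Fintype.card (OnePoint F) = N + 2 := by
    have : Fintype.card (OnePoint F) = Fintype.card (Option F) := Fintype.card_congr (Equiv.refl _)
    rw [this, Fintype.card_option, hN]
  have hsum : (rho F g).supportᶜ.card = N + 2 - (rho F g).support.card := by
    rw [Finset.card_compl, hcard]
  have hle : (rho F g).support.card ≤ N + 2 := hcard ▸ Finset.card_le_univ _
  have hfix : (rho F g).supportᶜ.card ≤ 2 := by
    by_contra hlt
    obtain ⟨a, b, c, ha, hb, hc, hab, hac, hbc⟩ := Finset.two_lt_card_iff.1 (not_le.1 hlt)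
    simp only [Finset.mem_compl, Equiv.Perm.mem_support, not_not] at ha hb hc
    have := three_fix g a b c hab hac hbc ha hb hc
    exact hsq (by simp [this])
  have h2 : (rho F g).supportᶜ.card = 2 := by
    obtain ⟨m, hm⟩ := hdvd
    have : m = 1 := by
      rcases m with _ | _ | m
      · omega
      · rfl
      · exfalso
        nlinarith
    subst this
    omega
  obtain ⟨a, b, hab, he⟩ := Finset.card_eq_two.1 h2
  refine ⟨a, b, hab, fun c => ?_⟩
  have : c ∈ (rho F g).supportᶜ ↔ c ∈ ({a, b} : Finset _) := by rw [he]
  simpa using this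

lemma dihedral_eq_stab [Fintype F] (N : ℕ) (hN : Fintype.card F = N + 1) (hN3 : 3 ≤ N)
    (u : Multiplicative (ZMod N) ≃* Fˣ)
    (H : Subgroup (ProjectiveGL2 F)) (e : H ≃* DihedralGroup N) :
    ∃ a b, a ≠ b ∧ H = stab a b ∧ ∃ g ∈ H, g * g ≠ 1 ∧ ∀ c, rho F g c = c ↔ c = a ∨ c = b := by
  have : Finite (ProjectiveGL2 F) := inferInstance
  have : NeZero N := ⟨by omega⟩
  set γ : H := e.symm (.r 1) with hγ
  have ho : orderOf (γ : ProjectiveGL2 F) = N := by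
    rw [Subgroup.orderOf_coe, hγ, MulEquiv.orderOf_eq, DihedralGroup.orderOf_r_one]
  obtain ⟨a, b, hab, hfix⟩ := two_fixed (γ : ProjectiveGL2 F) N hN hN3 ho
  have hle : H ≤ stab a b := by
    intro h hh
    have hconj : γ * ⟨h, hh⟩ = ⟨h, hh⟩ * γ ∨ γ * ⟨h, hh⟩ * γ = ⟨h, hh⟩ := by
      rcases hd : e ⟨h, hh⟩ with i | i
      · left
        apply e.injective
        simp [hγ, hd, add_comm]
      · right
        apply e.injective
        simp [hγ, hd]
    have hconj' : (γ : ProjectiveGL2 F) * h = h * γ ∨ (γ : ProjectiveGL2 F) * h * γ = h := by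
      rcases hconj with h1 | h1
      · left; simpa using congrArg Subtype.val h1
      · right; simpa using congrArg Subtype.val h1
    have key : ∀ c, rho F γ c = c → rho F γ (rho F h c) = rho F h c := by
      intro c hc
      rcases hconj' with h1 | h1
      · have := congrArg (fun z => rho F z c) h1
        simpa [map_mul, hc] using this
      · have := congrArg (fun z => rho F z c) h1
        simpa [map_mul, hc] using this
    have ha := (hfix _).1 (key a ((hfix a).2 (.inl rfl)))
    have hb := (hfix _).1 (key b ((hfix b).2 (.inr rfl)))
    have hne : rho F h a ≠ rho F h b := fun h' => hab ((rho F h).injective h')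
    rw [mem_stab]
    rcases ha with ha | ha <;> rcases hb with hb | hb
    · exact absurd (ha.trans hb.symm) hne
    · exact .inl ⟨ha, hb⟩
    · exact .inr ⟨ha, hb⟩
    · exact absurd (ha.trans hb.symm) hne
  refine ⟨a, b, hab, ?_, γ, γ.2, ?_, hfix⟩
  · obtain ⟨e'⟩ := stab_iso u a b hab
    apply Subgroup.eq_of_le_of_card_ge hle
    rw [Nat.card_congr e.toEquiv, Nat.card_congr e'.toEquiv]
  · intro h
    have := orderOf_dvd_of_pow_eq_one ((sq _).trans h)
    have := Nat.le_of_dvd (by norm_num) this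
    omega

lemma stab_inj [Fintype F] (N : ℕ) (hN : Fintype.card F = N + 1) (hN3 : 3 ≤ N)
    (u : Multiplicative (ZMod N) ≃* Fˣ) (a b c d : OnePoint F) (hab : a ≠ b) (hcd : c ≠ d)
    (h : stab a b = stab c d) : (c = a ∨ c = b) ∧ (a = c ∨ a = d) := by
  obtain ⟨e⟩ := stab_iso u a b hab
  obtain ⟨s, t, hst, -, g, hg, hgg, hfix⟩ := dihedral_eq_stab N hN hN3 u _ e
  have hg' := hg
  rw [h] at hg'
  have h1 := ((mem_stab _ _ _).1 hg).resolve_right (fun h' => hgg (swap_sq g a b hab h'.1 h'.2))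
  have h2 := ((mem_stab _ _ _).1 hg').resolve_right (fun h' => hgg (swap_sq g c d hcd h'.1 h'.2))
  rw [hfix, hfix] at h1 h2
  grind

lemma no_fix (hsq : IsSquare (-1 : F)) (x : ProjectiveGL2 F) (hx : x * x = 1)
    (hxS : x ∉ socleSL2 F) (a : OnePoint F) : rho F x a ≠ a := by
  intro hfix
  apply hxS
  obtain ⟨X, rfl⟩ := QuotientGroup.mk_surjective x
  rw [← QuotientGroup.mk_mul, QuotientGroup.eq_one_iff, mem_center] at hx
  simp only [Matrix.GeneralLinearGroup.coe_mul, Matrix.mul_apply, Fin.sum_univ_two] at hx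
  obtain ⟨e1, e2, e3⟩ := hx
  by_cases htr : X 0 0 + X 1 1 = 0
  · have hdet := X.det_ne_zero
    rw [Matrix.det_fin_two] at hdet
    obtain ⟨i, hi⟩ := hsq
    obtain ⟨s, hs⟩ : ∃ s, X 0 0 * X 1 1 - X 0 1 * X 1 0 = s * s := by
      rw [rho_cls] at hfix
      cases a with
      | infty =>
        rw [smul_infty_eq_self_iff] at hfix
        exact ⟨i * X 0 0, by grind⟩
      | coe k =>
        rw [smul_some_eq_ite] at hfix
        split_ifs at hfix with h
        · exact absurd hfix (infty_ne_coe _)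
        rw [coe_eq_coe, div_eq_iff h] at hfix
        exact ⟨i * (X 1 0 * k - X 0 0), by grind⟩
    have hs0 : s ≠ 0 := by
      rintro rfl
      exact hdet (by simpa using hs)
    have hM : (s⁻¹ • (X : Matrix (Fin 2) (Fin 2) F)).det = 1 := by
      rw [Matrix.det_smul, Matrix.det_fin_two, hs]
      simp
      field_simp
    let M : Matrix.SpecialLinearGroup (Fin 2) F := ⟨s⁻¹ • (X : Matrix (Fin 2) (Fin 2) F), hM⟩
    refine ⟨M, ?_⟩
    refine QuotientGroup.eq.2 ?_
    have hX : X = Matrix.GeneralLinearGroup.scalar (Fin 2) (Units.mk0 s hs0) *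
        Matrix.SpecialLinearGroup.toGL M := by
      ext i j
      have hval : (M : Matrix (Fin 2) (Fin 2) F) i j =
        s⁻¹ * X i j := rfl
      simp [hval, hs0]
    have hc : Matrix.GeneralLinearGroup.scalar (Fin 2) (Units.mk0 s hs0) ∈
        Subgroup.center (GL (Fin 2) F) := by
      rw [Matrix.GeneralLinearGroup.center_eq_range_scalar]
      exact ⟨_, rfl⟩
    have hX' : (Matrix.SpecialLinearGroup.toGL M)⁻¹ * X =
        Matrix.GeneralLinearGroup.scalar (Fin 2) (Units.mk0 s hs0) := by
      rw [inv_mul_eq_iff_eq_mul, Subgroup.mem_center_iff.1 hc]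
      exact hX
    rw [hX']
    exact hc
  · have : (QuotientGroup.mk X : ProjectiveGL2 F) = 1 := by
      rw [QuotientGroup.eq_one_iff, mem_center]
      refine ⟨?_, ?_, ?_⟩ <;> grind
    rw [this]
    exact one_mem _


/-- A two-to-one counting lemma. -/
lemma count_two {P Q : Type} [Fintype P] (f : P → Q) (s : P → P)
    (hs : ∀ a, s a ≠ a) (hf : ∀ a b, f a = f b ↔ b = a ∨ b = s a) :
    2 * (Set.range f).ncard = Fintype.card P := by
  classical
  have h := Finset.card_eq_sum_card_image f (Finset.univ : Finset P)
  rw [Finset.sum_const_nat (m := 2)] at h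
  · rw [Set.ncard_eq_toFinset_card', Set.toFinset_range, ← Finset.card_univ, h, mul_comm]
  · intro y hy
    obtain ⟨a, -, rfl⟩ := Finset.mem_image.1 hy
    rw [Finset.card_eq_two]
    refine ⟨a, s a, (hs a).symm, ?_⟩
    ext b
    simp [eq_comm (a := f b), hf a b]

end PGLCount

/-- An outer involution `x` of `PGL₂(q)` lies in exactly `(q+1)/2` subgroups
isomorphic to the dihedral group of order `2(q-1)`. -/
theorem count_dihedral_2q_minus_2_containing_outer_involution (p n : ℕ) (hp : Nat.Prime p) (hodd : Odd p) (hn : 1 ≤ n)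
    (F : Type) [Field F] [Fintype F] (hF : Fintype.card F = p ^ 2 ^ n)
    (x : ProjectiveGL2 F) (hx : orderOf x = 2) (hxS : x ∉ socleSL2 F) :
    {H : Subgroup (ProjectiveGL2 F) |
        Nonempty (H ≃* DihedralGroup (p ^ 2 ^ n - 1)) ∧ x ∈ H}.ncard
      = (p ^ 2 ^ n + 1) / 2 := by
  classical
  have hq : p ^ 2 ^ n % 4 = 1 := by
    obtain ⟨m, rfl⟩ : ∃ m, n = m + 1 := ⟨n - 1, by omega⟩
    rw [pow_succ, pow_mul, sq]
    have := hodd.pow (n := 2 ^ m)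
    generalize p ^ 2 ^ m = r at this
    obtain ⟨t, rfl⟩ := this
    have : (2 * t + 1) * (2 * t + 1) = 4 * (t * t + t) + 1 := by ring
    omega
  have hq1 : 1 < p ^ 2 ^ n := Nat.one_lt_pow (by positivity) hp.one_lt
  obtain ⟨N, hN⟩ : ∃ N, p ^ 2 ^ n = N + 1 := ⟨p ^ 2 ^ n - 1, by omega⟩
  have hN3 : 3 ≤ N := by omega
  rw [hN] at hF ⊢
  rw [Nat.add_sub_cancel]
  have hsq : IsSquare (-1 : F) := by
    rw [FiniteField.isSquare_neg_one_iff]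
    omega
  have hu : Nat.card Fˣ = N := by
    rw [Nat.card_eq_fintype_card, Fintype.card_units, hF, Nat.add_sub_cancel]
  have u : Multiplicative (ZMod N) ≃* Fˣ := hu ▸ zmodCyclicMulEquiv (inferInstance : IsCyclic Fˣ)
  have hxx : x * x = 1 := by
    have h := pow_orderOf_eq_one x
    rwa [hx, sq] at h
  have hnf := PGLCount.no_fix hsq x hxx hxS
  have hxa : ∀ a, PGLCount.rho F x (PGLCount.rho F x a) = a := by
    intro a
    rw [← Equiv.Perm.mul_apply, ← map_mul, hxx]; simp
  letI : Fintype (OnePoint F) := inferInstanceAs (Fintype (Option F))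
  have hcard : Fintype.card (OnePoint F) = N + 2 := by
    have : Fintype.card (OnePoint F) = Fintype.card (Option F) := Fintype.card_congr (Equiv.refl _)
    rw [this, Fintype.card_option, hF]
  have hcomm : ∀ a b : OnePoint F, PGLCount.stab a b = PGLCount.stab b a := by
    intro a b
    ext g
    simp only [PGLCount.mem_stab]
    tauto
  have hset : {H : Subgroup (ProjectiveGL2 F) | Nonempty (H ≃* DihedralGroup N) ∧ x ∈ H} =
      Set.range (fun a => PGLCount.stab a (PGLCount.rho F x a)) := by
    ext H
    constructor
    · rintro ⟨⟨e⟩, hxH⟩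
      obtain ⟨a, b, hab, rfl, -⟩ := PGLCount.dihedral_eq_stab N hF hN3 u H e
      rcases hxH with h | h
      · exact absurd h.1 (hnf a)
      · exact ⟨a, by simp only [h.1]⟩
    · rintro ⟨a, rfl⟩
      exact ⟨PGLCount.stab_iso u _ _ (hnf a).symm, .inr ⟨rfl, hxa a⟩⟩
  have h2 := PGLCount.count_two (fun a => PGLCount.stab a (PGLCount.rho F x a))
    (PGLCount.rho F x) hnf (by
      intro a b
      constructor
      · intro h
        exact (PGLCount.stab_inj N hF hN3 u _ _ _ _ (hnf a).symm (hnf b).symm h).1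
      · rintro (rfl | rfl)
        · rfl
        · simp only [hxa]
          exact hcomm _ _)
  rw [hset]
  rw [hcard] at h2
  omega
end
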